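/- arXiv:2404.00258 — 2 statements merged into one kernel-verified Lean document; each statement's English description precedes it below -/
import Mathlib

section
/- Assume f satisfies (f1), (f2) with constant B ∈ [1,∞), and assumption (1.1a) with respect to the model pair (g, v, G). Then there exist r₀ ∈ (0,1), C > 0, and a twice continuously differentiable function u : (0,r₀) → ℝ such that u''(t) + u'(t)/t + f(u(t)) = 0 for all t ∈ (0,r₀), u(t) → ∞ as t → 0⁺, and |u(t) − ũ(t)| ≤ C · f(ũ(t)) · F(ũ(t)) · sup_{0 < s ≤ t} ( R₁(s) + R₂(s) ) for all t ∈ (0,r₀). -/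
open MeasureTheory Filter

/-- `Fint f s = ∫_s^∞ dτ / f(τ)`. -/
noncomputable def Fint (f : ℝ → ℝ) (s : ℝ) : ℝ := ∫ τ in Set.Ioi s, 1 / f τ

/-- `1/B₁[f](s) = (−log F(s))·(1 − f'(s)·F(s))`, with `G` playing the role of `F`. -/
noncomputable def invB1 (f G : ℝ → ℝ) (s : ℝ) : ℝ :=
  (-Real.log (G s)) * (1 - deriv f s * G s)

/-- `1/B₂[f](s) = f'(s)·F(s)·(log F(s))²·(f(s)·f''(s)·F(s)/f'(s) − 1)`,
with `G` playing the role of `F`. -/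
noncomputable def invB2 (f G : ℝ → ℝ) (s : ℝ) : ℝ :=
  deriv f s * G s * (Real.log (G s)) ^ 2 *
    (f s * deriv (deriv f) s * G s / deriv f s - 1)

/-- The model singular solution `v`. -/
noncomputable def modelv (B t : ℝ) : ℝ :=
  if B = 1 then Real.log (-2 * Real.log t) else (-2 * Real.log t) ^ ((B - 1) / B)

/-- The model nonlinearity `g`. -/
noncomputable def modelg (B s : ℝ) : ℝ :=
  if B = 1 then 4 * Real.exp (Real.exp s - 2 * s)
  else (4 / (B * (B / (B - 1)))) * s ^ (1 - 2 * (B / (B - 1))) * Real.exp (s ^ (B / (B - 1)))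

/-- The model function `G(s) = ∫_s^∞ dτ/g(τ)` in closed form. -/
noncomputable def modelG (B s : ℝ) : ℝ :=
  if B = 1 then (1 / 4) * (Real.exp s + 1) * Real.exp (-Real.exp s)
  else (B / 4) * (s ^ (B / (B - 1)) + 1) * Real.exp (-(s ^ (B / (B - 1))))

/-- The Emden–Fowler model profile `ψ`. -/
noncomputable def modelpsi (B ρ : ℝ) : ℝ :=
  if B = 1 then Real.log (ρ - 1) else (ρ - 1) ^ ((B - 1) / B)

/-- `R₁(t) = |1/B₁[f](ũ(t)) − 1/B₁[g](v(t))|`. -/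
noncomputable def R1 (f ut : ℝ → ℝ) (B t : ℝ) : ℝ :=
  |invB1 f (Fint f) (ut t) - invB1 (modelg B) (modelG B) (modelv B t)|

/-- `R₂(t) = |1/B₂[f](ũ(t)) − 1/B₂[g](v(t))|`. -/
noncomputable def R2 (f ut : ℝ → ℝ) (B t : ℝ) : ℝ :=
  |invB2 f (Fint f) (ut t) - invB2 (modelg B) (modelG B) (modelv B t)|

lemma hasDerivAt_Ioi_integral {E : Type*} [NormedAddCommGroup E] [NormedSpace ℝ E] [CompleteSpace E]
    (φ : ℝ → E) (a x : ℝ) (hax : a < x) (hc : ContinuousOn φ (Set.Ioi a))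
    (hinteg : ∀ s, a < s → IntegrableOn φ (Set.Ioi s)) :
    HasDerivAt (fun s => ∫ y in Set.Ioi s, φ y) (-φ x) x := by
  obtain ⟨b, hab, hbx⟩ := exists_between hax
  have hb := hinteg b hab
  have h1 : HasDerivAt (fun s => (∫ y in Set.Ioi b, φ y) - ∫ y in b..s, φ y) (-φ x) x := by
    have : HasDerivAt (fun s => ∫ y in b..s, φ y) (φ x) x := by
      apply intervalIntegral.integral_hasDerivAt_right
      · rw [intervalIntegrable_iff_integrableOn_Ioc_of_le hbx.le]
        exact hb.mono_set Set.Ioc_subset_Ioi_self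
      · exact ContinuousOn.stronglyMeasurableAtFilter isOpen_Ioi hc x hax
      · exact hc.continuousAt (Ioi_mem_nhds hax)
    simpa using this.const_sub (∫ y in Set.Ioi b, φ y)
  refine h1.congr_of_eventuallyEq ?_
  filter_upwards [Ioi_mem_nhds hbx] with s hs
  have hs : b < s := hs
  have := intervalIntegral.integral_Ioi_sub_Ioi (f := φ) (μ := volume) (a := b) (b := s) hb hs.le
  rw [← this]; abel

/-- The oscillatory solution operator. -/
noncomputable def Jop (α : ℝ) (H : ℝ → ℂ) (x : ℝ) : ℂ :=
  -(((x ^ α : ℝ) : ℂ) * Complex.exp (-(x * Complex.I))) *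
    ∫ y in Set.Ioi x, ((y ^ (-α) : ℝ) : ℂ) * Complex.exp (y * Complex.I) * H y

lemma Jop_norm_int (α y : ℝ) (hy : 0 < y) (z : ℂ) :
    ‖((y ^ (-α) : ℝ) : ℂ) * Complex.exp (y * Complex.I) * z‖ = y ^ (-α) * ‖z‖ := by
  rw [norm_mul, norm_mul, Complex.norm_exp_ofReal_mul_I, mul_one, Complex.norm_real,
    Real.norm_of_nonneg (by positivity)]

lemma Jop_cont (α a : ℝ) (ha : 0 < a) (H : ℝ → ℂ) (hc : ContinuousOn H (Set.Ioi a)) :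
    ContinuousOn (fun y : ℝ => ((y ^ (-α) : ℝ) : ℂ) * Complex.exp (y * Complex.I) * H y)
      (Set.Ioi a) := by
  refine ContinuousOn.mul (ContinuousOn.mul ?_ ?_) hc
  · refine Complex.continuous_ofReal.comp_continuousOn ?_
    intro y hy
    have hy : a < y := hy
    exact (Real.continuousAt_rpow_const y _ (Or.inl (ha.trans hy).ne')).continuousWithinAt
  · fun_prop

lemma Jop_dom (α D x : ℝ) (hα : 0 < α) (hx : 0 < x) :
    IntegrableOn (fun y : ℝ => y ^ (-α - 1) * (α * D)) (Set.Ioi x) ∧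
    ∫ y in Set.Ioi x, y ^ (-α - 1) * (α * D) = x ^ (-α) * D := by
  constructor
  · exact (integrableOn_Ioi_rpow_of_lt (by linarith) hx).mul_const _
  · rw [integral_mul_const, integral_Ioi_rpow_of_lt (by linarith) hx]
    have : -α - 1 + 1 = -α := by ring
    rw [this]; field_simp

lemma Jop_le (α D y : ℝ) (hy : 0 < y) (z : ℂ) (hz : ‖z‖ ≤ α / y * D) :
    ‖((y ^ (-α) : ℝ) : ℂ) * Complex.exp (y * Complex.I) * z‖ ≤ y ^ (-α - 1) * (α * D) := by
  rw [Jop_norm_int α y hy]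
  calc y ^ (-α) * ‖z‖ ≤ y ^ (-α) * (α / y * D) := by gcongr
    _ = _ := by rw [Real.rpow_sub_one hy.ne']; field_simp

lemma Jop_integrable (α a D x : ℝ) (hα : 0 < α) (ha : 0 < a) (H : ℝ → ℂ)
    (hc : ContinuousOn H (Set.Ioi a)) (hx : a < x) (hH : ∀ y, x < y → ‖H y‖ ≤ α / y * D) :
    IntegrableOn (fun y : ℝ => ((y ^ (-α) : ℝ) : ℂ) * Complex.exp (y * Complex.I) * H y)
      (Set.Ioi x) := by
  refine Integrable.mono' (Jop_dom α D x hα (ha.trans hx)).1 ?_ ?_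
  · exact ((Jop_cont α a ha H hc).mono (Set.Ioi_subset_Ioi hx.le)).aestronglyMeasurable
      measurableSet_Ioi
  · filter_upwards [ae_restrict_mem measurableSet_Ioi] with y hy
    exact Jop_le α D y ((ha.trans hx).trans hy) _ (hH y hy)

lemma Jop_bound (α a D x : ℝ) (hα : 0 < α) (ha : 0 < a) (H : ℝ → ℂ)
    (hx : a < x) (hH : ∀ y, x < y → ‖H y‖ ≤ α / y * D) :
    ‖Jop α H x‖ ≤ D := by
  have hx0 := ha.trans hx
  unfold Jop
  have e : Complex.exp (-(x * Complex.I)) = Complex.exp (((-x : ℝ) : ℂ) * Complex.I) := by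
    congr 1; push_cast; ring
  rw [norm_mul, norm_neg, norm_mul, e, Complex.norm_exp_ofReal_mul_I, mul_one, Complex.norm_real,
    Real.norm_of_nonneg (by positivity)]
  have h := norm_integral_le_of_norm_le (Jop_dom α D x hα hx0).1
    (f := fun y : ℝ => ((y ^ (-α) : ℝ) : ℂ) * Complex.exp (y * Complex.I) * H y) (by
      filter_upwards [ae_restrict_mem measurableSet_Ioi] with y hy
      exact Jop_le α D y (hx0.trans hy) _ (hH y hy))
  rw [(Jop_dom α D x hα hx0).2] at h
  calc _ ≤ x ^ α * (x ^ (-α) * D) := by gcongr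
    _ = D := by rw [Real.rpow_neg hx0.le]; field_simp

lemma Jop_deriv (α a D x : ℝ) (hα : 0 < α) (ha : 0 < a) (H : ℝ → ℂ)
    (hc : ContinuousOn H (Set.Ioi a)) (hx : a < x) (hH : ∀ y, a < y → ‖H y‖ ≤ α / y * D) :
    HasDerivAt (Jop α H) (((α / x : ℝ) - Complex.I) * Jop α H x + H x) x := by
  have hx0 := ha.trans hx
  have h1 := hasDerivAt_Ioi_integral _ a x hx (Jop_cont α a ha H hc)
    (fun s hs => Jop_integrable α a D s hα ha H hc hs (fun y hy => hH y (hs.trans hy)))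
  have h2 : HasDerivAt (fun x : ℝ => ((x ^ α : ℝ) : ℂ)) ((α * x ^ (α - 1) : ℝ) : ℂ) x :=
    (Real.hasDerivAt_rpow_const (Or.inl hx0.ne')).ofReal_comp
  have h3 : HasDerivAt (fun x : ℝ => Complex.exp (-(x * Complex.I)))
      (Complex.exp (-(x * Complex.I)) * (-(1 * Complex.I))) x :=
    (((hasDerivAt_id x).ofReal_comp.mul_const Complex.I).neg).cexp
  have h4 := (h2.mul h3).neg.mul h1
  refine h4.congr_deriv ?_
  have hp : ((x ^ (α - 1) : ℝ) : ℂ) = ((x ^ α : ℝ) : ℂ) / x := by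
    rw [Real.rpow_sub_one hx0.ne']; push_cast; rfl
  have hn : ((x ^ (-α) : ℝ) : ℂ) * ((x ^ α : ℝ) : ℂ) = 1 := by
    rw [← Complex.ofReal_mul, ← Real.rpow_add hx0]; simp
  have he : Complex.exp (-(x * Complex.I)) * Complex.exp (x * Complex.I) = 1 := by
    rw [← Complex.exp_add]; simp
  unfold Jop
  simp only [Pi.mul_apply, Pi.neg_apply]
  set K := ∫ y in Set.Ioi x, ((y ^ (-α) : ℝ) : ℂ) * Complex.exp (y * Complex.I) * H y
  push_cast
  rw [hp]
  linear_combination (Complex.exp (-(x * Complex.I)) * Complex.exp (x * Complex.I)) * H x * hn + H x * he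

lemma fp (α a : ℝ) (hα : 0 < α) (ha : 0 < a) (G : ℝ → ℂ → ℂ) (M : ℝ → ℝ) (M0 : ℝ)
    (hM : ∀ y, a < y → 0 ≤ M y) (hM0 : ∀ y, a < y → M y ≤ M0)
    (hanti : ∀ x y, a < x → x ≤ y → M y ≤ M x)
    (hcont : ∀ Z : ℝ → ℂ, ContinuousOn Z (Set.Ioi a) → (∀ y, a < y → ‖Z y‖ ≤ M y) →
      ContinuousOn (fun y => G y (Z y)) (Set.Ioi a))
    (hG0 : ∀ y, a < y → ‖G y 0‖ ≤ α / (2 * y) * M y)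
    (hL : ∀ y, a < y → ∀ z z' : ℂ, ‖z‖ ≤ M y → ‖z'‖ ≤ M y →
      ‖G y z - G y z'‖ ≤ α / (2 * y) * ‖z - z'‖) :
    ∃ Z : ℝ → ℂ, ∀ x, a < x →
      HasDerivAt Z (((α / x : ℝ) - Complex.I) * Z x + G x (Z x)) x ∧ ‖Z x‖ ≤ M x := by
  classical
  let X := Set.Ioi a
  let ext : BoundedContinuousFunction X ℂ → ℝ → ℂ :=
    fun Z y => if h : a < y then Z ⟨y, h⟩ else 0
  have ext_eq : ∀ Z y (h : a < y), ext Z y = Z ⟨y, h⟩ := fun Z y h => by simp [ext, h]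
  have ext_cont : ∀ Z, ContinuousOn (ext Z) (Set.Ioi a) := by
    intro Z
    rw [continuousOn_iff_continuous_domRestrict]
    have : Set.domRestrict (Set.Ioi a) (ext Z) = Z := by
      funext y; exact ext_eq Z y.1 y.2
    rw [this]; exact Z.continuous
  let A : Set (BoundedContinuousFunction X ℂ) := {Z | ∀ y : X, ‖Z y‖ ≤ M y.1}
  have hA : IsClosed A := by
    have : A = ⋂ y : X, {Z | ‖Z y‖ ≤ M y.1} := by ext; simp [A]
    rw [this]
    refine isClosed_iInter fun y => isClosed_le ?_ continuous_const
    exact (BoundedContinuousFunction.lipschitz_eval_const y).continuous.norm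
  have bnd : ∀ Z ∈ A, ∀ y, a < y → ‖ext Z y‖ ≤ M y := by
    intro Z hZ y hy; rw [ext_eq Z y hy]; exact hZ ⟨y, hy⟩
  have Hc : ∀ Z ∈ A, ContinuousOn (fun y => G y (ext Z y)) (Set.Ioi a) :=
    fun Z hZ => hcont _ (ext_cont Z) (bnd Z hZ)
  have Hb : ∀ Z ∈ A, ∀ y, a < y → ‖G y (ext Z y)‖ ≤ α / y * M y := by
    intro Z hZ y hy
    have h1 := hL y hy (ext Z y) 0 (bnd Z hZ y hy) (by simpa using hM y hy)
    have h2 := hG0 y hy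
    have h3 := bnd Z hZ y hy
    have hy0 := ha.trans hy
    calc ‖G y (ext Z y)‖ = ‖(G y (ext Z y) - G y 0) + G y 0‖ := by simp
      _ ≤ ‖G y (ext Z y) - G y 0‖ + ‖G y 0‖ := norm_add_le _ _
      _ ≤ α / (2 * y) * M y + α / (2 * y) * M y := by
        refine add_le_add (h1.trans ?_) h2
        rw [sub_zero]; gcongr
      _ = _ := by field_simp; ring
  have Hb' : ∀ Z ∈ A, ∀ x, a < x → ∀ y, x ≤ y → ‖G y (ext Z y)‖ ≤ α / y * M x := by
    intro Z hZ x hx y hy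
    have hy0 := ha.trans (hx.trans_le hy)
    refine (Hb Z hZ y (hx.trans_le hy)).trans ?_
    have := hanti x y hx hy
    gcongr
  have Hb0 : ∀ Z ∈ A, ∀ y, a < y → ‖G y (ext Z y)‖ ≤ α / y * M0 := by
    intro Z hZ y hy
    have hy0 := ha.trans hy
    refine (Hb Z hZ y hy).trans ?_
    have := hM0 y hy
    gcongr
  have Jd : ∀ Z ∈ A, ∀ x, a < x → HasDerivAt (Jop α (fun y => G y (ext Z y)))
      (((α / x : ℝ) - Complex.I) * Jop α (fun y => G y (ext Z y)) x + G x (ext Z x)) x :=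
    fun Z hZ x hx => Jop_deriv α a M0 x hα ha _ (Hc Z hZ) hx (Hb0 Z hZ)
  have Jb : ∀ Z ∈ A, ∀ x, a < x → ‖Jop α (fun y => G y (ext Z y)) x‖ ≤ M x :=
    fun Z hZ x hx => Jop_bound α a (M x) x hα ha _ hx (fun y hy => Hb' Z hZ x hx y hy.le)
  let T : A → A := fun Z => ⟨BoundedContinuousFunction.ofNormedAddCommGroup
    (fun x : X => Jop α (fun y => G y (ext Z.1 y)) x.1)
    (by
      have : ContinuousOn (Jop α (fun y => G y (ext Z.1 y))) (Set.Ioi a) :=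
        fun x hx => (Jd Z.1 Z.2 x hx).continuousAt.continuousWithinAt
      exact continuousOn_iff_continuous_domRestrict.1 this) M0
    (fun x => (Jb Z.1 Z.2 x.1 x.2).trans (hM0 x.1 x.2)), fun x => Jb Z.1 Z.2 x.1 x.2⟩
  have hT : ContractingWith (1/2) T := by
    refine ⟨by
      rw [← NNReal.coe_lt_coe]; norm_num, LipschitzWith.of_dist_le_mul fun Z W => ?_⟩
    rw [Subtype.dist_eq, Subtype.dist_eq]
    rw [BoundedContinuousFunction.dist_le (by positivity)]
    intro x
    rw [dist_eq_norm]
    show ‖Jop α (fun y => G y (ext Z.1 y)) x.1 - Jop α (fun y => G y (ext W.1 y)) x.1‖ ≤ _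
    have hsub : Jop α (fun y => G y (ext Z.1 y)) x.1 - Jop α (fun y => G y (ext W.1 y)) x.1
        = Jop α (fun y => G y (ext Z.1 y) - G y (ext W.1 y)) x.1 := by
      unfold Jop
      rw [← mul_sub, ← integral_sub]
      · congr 2; funext y; ring
      · exact Jop_integrable α a M0 x.1 hα ha _ (Hc Z.1 Z.2) x.2
          (fun y hy => Hb0 Z.1 Z.2 y (lt_trans x.2 hy))
      · exact Jop_integrable α a M0 x.1 hα ha _ (Hc W.1 W.2) x.2
          (fun y hy => Hb0 W.1 W.2 y (lt_trans x.2 hy))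
    rw [hsub]
    refine Jop_bound α a _ x.1 hα ha _ x.2 fun y hy => ?_
    have hya : a < y := lt_trans x.2 hy
    have hy0 := ha.trans hya
    refine (hL y hya _ _ (bnd Z.1 Z.2 y hya) (bnd W.1 W.2 y hya)).trans ?_
    have : ‖ext Z.1 y - ext W.1 y‖ ≤ dist Z.1 W.1 := by
      rw [ext_eq _ y hya, ext_eq _ y hya, ← dist_eq_norm]
      exact BoundedContinuousFunction.dist_coe_le_dist _
    calc α / (2 * y) * ‖ext Z.1 y - ext W.1 y‖ ≤ α / (2 * y) * dist Z.1 W.1 := by gcongr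
      _ = _ := by push_cast; field_simp
  have : CompleteSpace A := hA.completeSpace_coe
  have : Nonempty A := ⟨⟨0, fun y => by simpa using hM y.1 y.2⟩⟩
  set Z := ContractingWith.fixedPoint T hT with hZ
  have hfix : T Z = Z := hT.fixedPoint_isFixedPt
  have hval : ∀ x, a < x → ext Z.1 x = Jop α (fun y => G y (ext Z.1 y)) x := by
    intro x hx
    rw [ext_eq _ x hx]
    conv_lhs => rw [← hfix]
    rfl
  refine ⟨ext Z.1, fun x hx => ⟨?_, bnd Z.1 Z.2 x hx⟩⟩
  have h := Jd Z.1 Z.2 x hx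
  rw [← hval x hx] at h
  refine h.congr_of_eventuallyEq ?_
  filter_upwards [Ioi_mem_nhds hx] with y hy using hval y hy

lemma exp_diff_bound (d θ θ₂ : ℝ) (hd : d ≤ 1) (h1 : |θ| ≤ d) (h2 : |θ₂| ≤ d) :
    |(Real.exp θ - 1 - θ) - (Real.exp θ₂ - 1 - θ₂)| ≤ 2 * d * |θ - θ₂| := by
  have hder : ∀ s ∈ Set.Icc (-d) d,
      HasDerivWithinAt (fun s => Real.exp s - 1 - s) (Real.exp s - 1) (Set.Icc (-d) d) s := by
    intro s _
    exact (((Real.hasDerivAt_exp s).sub_const 1).sub (hasDerivAt_id s)).hasDerivWithinAt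
  have := Convex.norm_image_sub_le_of_norm_hasDerivWithin_le (C := 2 * d) hder (by
    intro s hs
    have hs' : |s| ≤ d := abs_le.2 hs
    rw [Real.norm_eq_abs]
    exact (Real.abs_exp_sub_one_le (hs'.trans hd)).trans (by linarith)) (convex_Icc _ _)
    (abs_le.1 h2) (abs_le.1 h1)
  simpa [Real.norm_eq_abs] using this

/-- The nonlinear remainder. -/
noncomputable def Nrem (B α : ℝ) (p : ℝ → ℝ → ℝ) (m : ℝ → ℝ) (x θ ζ : ℝ) : ℝ :=
  -(4 / (B * x)) * ζ + ((2 * α - α ^ 2) / x ^ 2) * θ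
    + (p x θ * (m x + 2 / (B * x) * (ζ + α * θ / x)) ^ 2 - p x 0 * (m x) ^ 2)
    - (Real.exp θ - 1 - θ)

set_option maxHeartbeats 1000000 in
lemma Nrem_lip (B α : ℝ) (hB : 1 ≤ B) (hα : 0 < α) (p : ℝ → ℝ → ℝ) (m : ℝ → ℝ) (L X₁ : ℝ)
    (hp : ∀ x, X₁ < x → ∀ θ θ₂, |θ| ≤ 1 → |θ₂| ≤ 1 → |p x θ - p x θ₂| ≤ L / x ^ 2 * |θ - θ₂|)
    (hq : Tendsto (fun x => p x 0) atTop (nhds 1)) (hm : Tendsto m atTop (nhds 1))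
    (ε : ℝ) (hε : 0 < ε) :
    ∃ δ > 0, δ ≤ 1 ∧ ∃ X > 1, ∀ x, X < x → ∀ θ ζ θ₂ ζ₂ : ℝ, |θ| ≤ δ / x → |ζ| ≤ δ / x →
      |θ₂| ≤ δ / x → |ζ₂| ≤ δ / x →
      |Nrem B α p m x θ ζ - Nrem B α p m x θ₂ ζ₂| ≤ ε / x * (|θ - θ₂| + |ζ - ζ₂|) := by
  set δ : ℝ := min 1 (ε / 8) with hδ
  have hδ0 : 0 < δ := by positivity
  have hδ1 : δ ≤ 1 := min_le_left _ _
  have hδ2 : δ ≤ ε / 8 := min_le_right _ _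
  obtain ⟨Xq, hXq⟩ := eventually_atTop.1 (Metric.tendsto_nhds.1 hq (δ / 2) (by positivity))
  obtain ⟨Xm, hXm⟩ := eventually_atTop.1 (Metric.tendsto_nhds.1 hm (δ / 4) (by positivity))
  set C : ℝ := |2 * α - α ^ 2| + 12 * α + 4 * |L| with hC
  have hC0 : 0 ≤ C := by positivity
  set X := max (max (max 2 X₁) (max Xq Xm)) (max (max (2 * C / ε) (2 * |L| / δ)) (8 * (1 + α) / δ))
    with hX
  refine ⟨δ, hδ0, hδ1, X, ?_, ?_⟩
  · have : (2 : ℝ) ≤ X := by simp [hX]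
    linarith
  intro x hx θ ζ θ₂ ζ₂ h1 h2 h3 h4
  simp only [hX, max_lt_iff] at hx
  obtain ⟨⟨⟨hx2, hx1⟩, hxq, hxm⟩, ⟨hxC, hxL⟩, hxα⟩ := hx
  have hx0 : 0 < x := by linarith
  have hdx : δ / x ≤ δ := by rw [div_le_iff₀ hx0]; nlinarith
  have hL0 := abs_nonneg L
  have hLx : L / x ^ 2 ≤ |L| / x ^ 2 := by gcongr; exact le_abs_self L
  have hLx2 : |L| / x ^ 2 ≤ δ / 2 := by
    rw [div_lt_iff₀ hδ0] at hxL
    rw [div_le_iff₀ (by positivity)]; nlinarith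
  have t1 : |θ| ≤ 1 := by linarith
  have t2 : |θ₂| ≤ 1 := by linarith
  have hpd := (hp x hx1 θ θ₂ t1 t2).trans (mul_le_mul_of_nonneg_right hLx (abs_nonneg _))
  have hp0 := (hp x hx1 θ₂ 0 t2 (by simp)).trans (mul_le_mul_of_nonneg_right hLx (abs_nonneg _))
  have hq1 : |p x 0 - 1| < δ / 2 := by simpa [Real.dist_eq] using hXq x hxq.le
  have hm1 : |m x - 1| < δ / 4 := by simpa [Real.dist_eq] using hXm x hxm.le
  have hmu : ∀ θ ζ : ℝ, |θ| ≤ δ / x → |ζ| ≤ δ / x →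
      |2 / (B * x) * (ζ + α * θ / x)| ≤ δ / 4 := by
    intro θ ζ h1 h2
    have e1 : |ζ + α * θ / x| ≤ 1 + α := by
      have : |α * θ / x| ≤ α := by
        rw [abs_div, abs_mul, abs_of_pos hα, abs_of_pos hx0, div_le_iff₀ hx0]
        nlinarith
      calc _ ≤ |ζ| + |α * θ / x| := abs_add_le _ _
        _ ≤ _ := by linarith
    rw [abs_mul, abs_of_pos (by positivity : 0 < 2 / (B * x))]
    have e2 : 2 / (B * x) ≤ 2 / x := by
      apply div_le_div_of_nonneg_left (by norm_num) hx0; nlinarith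
    have e3 : 2 / x * (1 + α) ≤ δ / 4 := by
      rw [div_lt_iff₀ hδ0] at hxα
      rw [div_mul_eq_mul_div, div_le_iff₀ hx0]; nlinarith
    calc _ ≤ 2 / x * (1 + α) := by gcongr
      _ ≤ _ := e3
  have hμ1 := hmu θ ζ h1 h2
  have hμ2 := hmu θ₂ ζ₂ h3 h4
  set μ := 2 / (B * x) * (ζ + α * θ / x) with hμ
  set μ₂ := 2 / (B * x) * (ζ₂ + α * θ₂ / x) with hμ'
  set q := p x θ with hqd
  set q₂ := p x θ₂ with hq2d
  have hq2 : |q₂ - 1| ≤ δ := by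
    have : |q₂ - p x 0| ≤ δ / 2 := by
      refine hp0.trans ?_
      have : |θ₂ - 0| ≤ 1 := by simpa using t2
      calc |L| / x ^ 2 * |θ₂ - 0| ≤ |L| / x ^ 2 * 1 := by gcongr
        _ ≤ _ := by linarith
    calc |q₂ - 1| = |(q₂ - p x 0) + (p x 0 - 1)| := by ring_nf
      _ ≤ _ := abs_add_le _ _
      _ ≤ _ := by linarith
  set s := 2 * m x + μ + μ₂ with hs
  have hs2 : |s - 2| ≤ δ := by
    have g1 := abs_le.1 hμ1
    have g2 := abs_le.1 hμ2
    have g3 := abs_lt.1 hm1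
    rw [abs_le]
    constructor <;> linarith [g1.1, g1.2, g2.1, g2.2, g3.1, g3.2]
  have hqs : |q₂ * s - 2| ≤ 4 * δ := by
    have : q₂ * s - 2 = (q₂ - 1) * s + (s - 2) := by ring
    rw [this]
    have h5 : |s| ≤ 3 := by
      have g1 := abs_le.1 hs2
      rw [abs_le]; constructor <;> linarith [g1.1, g1.2]
    calc _ ≤ |(q₂ - 1) * s| + |s - 2| := abs_add_le _ _
      _ ≤ δ * 3 + δ := by rw [abs_mul]; gcongr
      _ = _ := by ring
  have hqs6 : |q₂ * s| ≤ 6 := by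
    have g1 := abs_le.1 hqs
    rw [abs_le]; constructor <;> linarith [g1.1, g1.2]
  have hsq : (m x + μ) ^ 2 ≤ 4 := by
    have h5 : |m x + μ| ≤ 2 := by
      have g1 := abs_le.1 hμ1
      have g3 := abs_lt.1 hm1
      rw [abs_le]; constructor <;> linarith [g1.1, g1.2, g3.1, g3.2]
    have := mul_self_le_mul_self (abs_nonneg (m x + μ)) h5
    rw [← sq_abs]; linarith only [this]
  have hexp := exp_diff_bound (δ / x) θ θ₂ (by linarith) h1 h3
  have key : Nrem B α p m x θ ζ - Nrem B α p m x θ₂ ζ₂ =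
      2 / (B * x) * (q₂ * s - 2) * (ζ - ζ₂)
      + (1 / x ^ 2) * ((2 * α - α ^ 2) + (2 * α / B) * (q₂ * s)) * (θ - θ₂)
      + (q - q₂) * (m x + μ) ^ 2
      - ((Real.exp θ - 1 - θ) - (Real.exp θ₂ - 1 - θ₂)) := by
    unfold Nrem
    rw [← hμ, ← hμ', ← hqd, ← hq2d]
    have : q₂ * (μ - μ₂) * s =
        2 / (B * x) * (q₂ * s) * (ζ - ζ₂) + (1 / x ^ 2) * ((2 * α / B) * (q₂ * s)) * (θ - θ₂) := by
      rw [hμ, hμ']; field_simp; ring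
    have hBx : 4 / (B * x) = 2 * (2 / (B * x)) := by ring
    rw [hBx]
    linear_combination this
  rw [key]
  have b1 : |2 / (B * x) * (q₂ * s - 2) * (ζ - ζ₂)| ≤ ε / x * |ζ - ζ₂| := by
    rw [abs_mul, abs_mul, abs_of_pos (by positivity : 0 < 2 / (B * x))]
    have e2 : 2 / (B * x) ≤ 2 / x := by
      apply div_le_div_of_nonneg_left (by norm_num) hx0; nlinarith
    refine mul_le_mul_of_nonneg_right ?_ (abs_nonneg _)
    calc 2 / (B * x) * |q₂ * s - 2| ≤ 2 / x * (4 * δ) := by gcongr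
      _ = (8 * δ) / x := by ring
      _ ≤ ε / x := by gcongr; linarith
  have b2 : |(1 / x ^ 2) * ((2 * α - α ^ 2) + (2 * α / B) * (q₂ * s)) * (θ - θ₂)| ≤
      (1 / x ^ 2) * (|2 * α - α ^ 2| + 12 * α) * |θ - θ₂| := by
    rw [abs_mul, abs_mul, abs_of_pos (by positivity : 0 < 1 / x ^ 2)]
    have : |(2 * α - α ^ 2) + (2 * α / B) * (q₂ * s)| ≤ |2 * α - α ^ 2| + 12 * α := by
      refine (abs_add_le _ _).trans ?_
      rw [abs_mul (2 * α / B), abs_of_pos (by positivity : 0 < 2 * α / B)]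
      have : 2 * α / B ≤ 2 * α := div_le_self (by positivity) hB
      have : 2 * α / B * |q₂ * s| ≤ 2 * α * 6 := by gcongr
      linarith
    gcongr
  have b3 : |(q - q₂) * (m x + μ) ^ 2| ≤ (1 / x ^ 2) * (4 * |L|) * |θ - θ₂| := by
    rw [abs_mul, abs_of_nonneg (sq_nonneg (m x + μ))]
    calc |q - q₂| * (m x + μ) ^ 2 ≤ (|L| / x ^ 2 * |θ - θ₂|) * 4 := by gcongr
      _ = _ := by ring
  have b4 : 2 * (δ / x) * |θ - θ₂| ≤ (ε / 4) / x * |θ - θ₂| := by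
    refine mul_le_mul_of_nonneg_right ?_ (abs_nonneg _)
    rw [← mul_div_assoc]
    gcongr; linarith
  have b5 : (1 / x ^ 2) * C ≤ (ε / 2) / x := by
    rw [div_lt_iff₀ hε] at hxC
    rw [div_mul_eq_mul_div, div_le_div_iff₀ (by positivity) hx0]
    have hh : C * x ≤ (ε / 2 * x) * x := mul_le_mul_of_nonneg_right (by linarith only [hxC]) hx0.le
    linarith only [hh]
  have b6 : (1 / x ^ 2) * C * |θ - θ₂| ≤ (ε / 2) / x * |θ - θ₂| :=
    mul_le_mul_of_nonneg_right b5 (abs_nonneg _)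
  have b7 : 0 ≤ ε / x * |θ - θ₂| := by positivity
  have hfin : ∀ a b c d : ℝ, |a + b + c - d| ≤ |a| + |b| + |c| + |d| := by
    intro a b c d
    have := abs_sub (a + b + c) d
    have := abs_add_le (a + b) c
    have := abs_add_le a b
    linarith
  refine (hfin _ _ _ _).trans ?_
  have e1 : (ε / 4) / x * |θ - θ₂| = (1 / 4) * (ε / x * |θ - θ₂|) := by ring
  have e2 : (ε / 2) / x * |θ - θ₂| = (1 / 2) * (ε / x * |θ - θ₂|) := by ring
  have e3 : (1 / x ^ 2) * C * |θ - θ₂| = (1 / x ^ 2) * (|2 * α - α ^ 2| + 12 * α) * |θ - θ₂|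
    + (1 / x ^ 2) * (4 * |L|) * |θ - θ₂| := by rw [hC]; ring
  linarith

noncomputable def eta0 (B ρ : ℝ) : ℝ := ρ - Real.log (ρ + 1) - Real.log (B / 4)
noncomputable def m0 (ρ : ℝ) : ℝ := ρ / (ρ + 1)
noncomputable def pg (B ρ : ℝ) : ℝ := (ρ + 1 + B) / (B * ρ ^ 2)
noncomputable def bg (B ρ : ℝ) : ℝ := (eta0 B ρ) ^ 2 * ((ρ + 1) * (ρ + 2 + 2 * B) / (B * ρ ^ 4))
noncomputable def hh (B : ℝ) (P : ℝ → ℝ) (ρ : ℝ) : ℝ :=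
  B * ρ ^ 2 / (ρ + 1) * (P (eta0 B ρ) - pg B ρ)
noncomputable def hh' (B : ℝ) (P b : ℝ → ℝ) (ρ : ℝ) : ℝ :=
  B * (ρ ^ 2 + 2 * ρ) / (ρ + 1) ^ 2 * (P (eta0 B ρ) - pg B ρ)
   + B * ρ ^ 2 / (ρ + 1) * (-(b (eta0 B ρ) - bg B ρ) / (eta0 B ρ) ^ 2 * m0 ρ)

lemma eta0_deriv (B ρ : ℝ) (hρ : 0 < ρ) : HasDerivAt (eta0 B) (m0 ρ) ρ := by
  have h := ((hasDerivAt_id ρ).sub (((hasDerivAt_id ρ).add_const 1).log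
    (by simp only [id]; positivity))).sub_const (Real.log (B / 4))
  refine h.congr_deriv ?_
  simp only [m0, id]; field_simp; ring

lemma eta0_ge (B : ℝ) : ∀ᶠ ρ in atTop, ρ / 2 ≤ eta0 B ρ := by
  have h1 : Tendsto (fun x : ℝ => Real.log x / x) atTop (nhds 0) :=
    Real.isLittleO_log_id_atTop.tendsto_div_nhds_zero
  have h2 : Tendsto (fun ρ : ℝ => ρ + 1) atTop atTop := tendsto_atTop_add_const_right _ _ tendsto_id
  have h3 := h1.comp h2
  filter_upwards [h3.eventually (gt_mem_nhds (by norm_num : (0:ℝ) < 1/8)),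
    eventually_ge_atTop (4 * |Real.log (B / 4)| + 1)] with ρ h4 h5
  simp only [Function.comp] at h4
  have h6 := le_abs_self (Real.log (B / 4))
  have h7 := abs_nonneg (Real.log (B / 4))
  rw [div_lt_iff₀ (by linarith)] at h4
  unfold eta0; linarith

lemma hh_deriv (B : ℝ) (hB : 1 ≤ B) (P b : ℝ → ℝ) (ρ : ℝ) (hρ : 0 < ρ) (he : eta0 B ρ ≠ 0)
    (hP : HasDerivAt P (-b (eta0 B ρ) / (eta0 B ρ) ^ 2) (eta0 B ρ)) :
    HasDerivAt (hh B P) (hh' B P b ρ) ρ := by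
  have h1 : HasDerivAt (fun ρ => P (eta0 B ρ)) _ ρ := hP.comp ρ (eta0_deriv B ρ hρ)
  have h2 : HasDerivAt (pg B) (-(bg B ρ) / (eta0 B ρ) ^ 2 * m0 ρ) ρ := by
    have h := (((hasDerivAt_id ρ).add_const 1).add_const B).div
      (((hasDerivAt_pow 2 ρ)).const_mul B) (by positivity)
    refine h.congr_deriv ?_
    simp only [bg, m0, id]; field_simp; ring
  have h3 : HasDerivAt (fun ρ : ℝ => B * ρ ^ 2 / (ρ + 1)) (B * (ρ ^ 2 + 2 * ρ) / (ρ + 1) ^ 2) ρ := by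
    have h := ((hasDerivAt_pow 2 ρ).const_mul B).div ((hasDerivAt_id ρ).add_const 1)
      (by simp only [id]; positivity)
    refine h.congr_deriv ?_
    simp only [id]; field_simp; ring
  refine (h3.mul (h1.sub h2)).congr_deriv ?_
  simp only [hh', Pi.sub_apply]; ring

lemma hh_bounds (B : ℝ) (hB : 1 ≤ B) (P b : ℝ → ℝ) (ρ R : ℝ) (hρ : 1 ≤ ρ)
    (he : ρ / 2 ≤ eta0 B ρ) (h1 : |P (eta0 B ρ) - pg B ρ| * eta0 B ρ ≤ R)
    (h2 : |b (eta0 B ρ) - bg B ρ| ≤ R) :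
    |P (eta0 B ρ) - pg B ρ| ≤ 2 * R / ρ ∧ |hh B P ρ| ≤ 2 * B * R ∧
      |hh' B P b ρ| ≤ 6 * B * R / ρ := by
  have hρ0 : 0 < ρ := by linarith
  have he0 : 0 < eta0 B ρ := by linarith
  have hR : 0 ≤ R := (abs_nonneg _).trans h2
  have a1 : |P (eta0 B ρ) - pg B ρ| ≤ 2 * R / ρ := by
    rw [le_div_iff₀ hρ0]
    have := mul_le_mul_of_nonneg_left he (abs_nonneg (P (eta0 B ρ) - pg B ρ))
    linarith
  have a2 : B * ρ ^ 2 / (ρ + 1) ≤ B * ρ := by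
    rw [div_le_iff₀ (by positivity)]; nlinarith
  have a3 : B * (ρ ^ 2 + 2 * ρ) / (ρ + 1) ^ 2 ≤ B := by
    rw [div_le_iff₀ (by positivity)]; nlinarith
  have a2' : 0 ≤ B * ρ ^ 2 / (ρ + 1) := by positivity
  have a3' : 0 ≤ B * (ρ ^ 2 + 2 * ρ) / (ρ + 1) ^ 2 := by positivity
  have a4 : |(-(b (eta0 B ρ) - bg B ρ) / (eta0 B ρ) ^ 2 * m0 ρ)| ≤ 4 * R / ρ ^ 2 := by
    have hm : |m0 ρ| ≤ 1 := by
      unfold m0; rw [abs_of_nonneg (by positivity), div_le_one (by positivity)]; linarith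
    rw [abs_mul, abs_div, abs_neg, abs_of_nonneg (sq_nonneg (eta0 B ρ))]
    have : (ρ / 2) ^ 2 ≤ (eta0 B ρ) ^ 2 := by gcongr
    calc _ ≤ R / (ρ / 2) ^ 2 * 1 := by gcongr
      _ = _ := by field_simp; norm_num
  refine ⟨a1, ?_, ?_⟩
  · unfold hh
    rw [abs_mul, abs_of_nonneg a2']
    calc _ ≤ B * ρ * (2 * R / ρ) := by gcongr
      _ = _ := by field_simp
  · unfold hh'
    refine (abs_add_le _ _).trans ?_
    rw [abs_mul, abs_mul (B * ρ ^ 2 / (ρ + 1)), abs_of_nonneg a2', abs_of_nonneg a3']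
    calc _ ≤ B * (2 * R / ρ) + B * ρ * (4 * R / ρ ^ 2) := by gcongr
      _ = _ := by field_simp; ring

noncomputable def rh (B x : ℝ) : ℝ := B * x ^ 2 / 4 - 1
noncomputable def xr (B ρ : ℝ) : ℝ := 2 * Real.sqrt ((ρ + 1) / B)

lemma rh_xr (B ρ : ℝ) (hB : 1 ≤ B) (hρ : 0 < ρ) : rh B (xr B ρ) = ρ := by
  unfold rh xr
  rw [mul_pow, Real.sq_sqrt (by positivity)]; field_simp; ring

lemma xr_pos (B ρ : ℝ) (hB : 1 ≤ B) (hρ : 0 < ρ) : 0 < xr B ρ := by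
  unfold xr; positivity

lemma xr_deriv (B ρ : ℝ) (hB : 1 ≤ B) (hρ : 0 < ρ) :
    HasDerivAt (xr B) (2 / (B * xr B ρ)) ρ := by
  have h := ((((hasDerivAt_id ρ).add_const 1).div_const B).sqrt
    (by simp only [id]; positivity)).const_mul 2
  refine h.congr_deriv ?_
  have : 0 < Real.sqrt ((ρ + 1) / B) := by positivity
  unfold xr
  simp only [id]; field_simp

lemma rh_tendsto (B : ℝ) (hB : 1 ≤ B) : Tendsto (rh B) atTop atTop := by
  unfold rh
  apply tendsto_atTop_add_const_right
  apply Tendsto.atTop_div_const (by norm_num)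
  exact (tendsto_pow_atTop (by norm_num)).const_mul_atTop (by linarith)

lemma xr_tendsto (B : ℝ) (hB : 1 ≤ B) : Tendsto (xr B) atTop atTop := by
  unfold xr
  apply Tendsto.const_mul_atTop (by norm_num)
  apply Real.tendsto_sqrt_atTop.comp
  apply Tendsto.atTop_div_const (by linarith)
  exact tendsto_atTop_add_const_right _ _ tendsto_id

noncomputable def pp (B : ℝ) (P : ℝ → ℝ) (x θ : ℝ) : ℝ :=
  B ^ 2 * x ^ 2 / 4 * P (eta0 B (rh B x) + θ)

lemma pp_lip (B : ℝ) (hB : 1 ≤ B) (P b : ℝ → ℝ) (η₁ Cb x : ℝ)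
    (hP : ∀ η, η₁ < η → HasDerivAt P (-b η / η ^ 2) η)
    (hb : ∀ η, η₁ < η → |b η| ≤ Cb) (hx : 0 < x)
    (h1 : B * x ^ 2 / 8 ≤ rh B x) (h2 : 4 ≤ rh B x)
    (he : rh B x / 2 ≤ eta0 B (rh B x)) (hη : η₁ < eta0 B (rh B x) - 1)
    (θ θ₂ : ℝ) (ht : |θ| ≤ 1) (ht₂ : |θ₂| ≤ 1) :
    |pp B P x θ - pp B P x θ₂| ≤ (256 * Cb) / x ^ 2 * |θ - θ₂| := by
  set ρ := rh B x
  set e := eta0 B ρ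
  have hCb : 0 ≤ Cb := (abs_nonneg _).trans (hb _ hη)
  have hder : ∀ s ∈ Set.Icc (e - 1) (e + 1),
      HasDerivWithinAt P (-b s / s ^ 2) (Set.Icc (e - 1) (e + 1)) s := by
    intro s hs; exact (hP s (by linarith [hs.1])).hasDerivWithinAt
  have g1 := abs_le.1 ht
  have g2 := abs_le.1 ht₂
  have := Convex.norm_image_sub_le_of_norm_hasDerivWithin_le (C := Cb / (ρ / 4) ^ 2) hder (by
    intro s hs
    have hs1 : ρ / 4 ≤ s := by linarith [hs.1]
    rw [Real.norm_eq_abs, abs_div, abs_neg, abs_of_nonneg (sq_nonneg s)]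
    have := hb s (by linarith [hs.1])
    gcongr) (convex_Icc _ _)
    (x := e + θ₂) (y := e + θ) ⟨by linarith, by linarith⟩ ⟨by linarith, by linarith⟩
  rw [Real.norm_eq_abs, Real.norm_eq_abs] at this
  unfold pp
  rw [← mul_sub, abs_mul, abs_of_nonneg (by positivity)]
  have e1 : e + θ - (e + θ₂) = θ - θ₂ := by ring
  rw [e1] at this
  have e2 : (B * x ^ 2 / 32) ^ 2 ≤ (ρ / 4) ^ 2 := by
    apply pow_le_pow_left₀ (by positivity); linarith
  calc _ ≤ B ^ 2 * x ^ 2 / 4 * (Cb / (ρ / 4) ^ 2 * |θ - θ₂|) := by gcongr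
    _ ≤ B ^ 2 * x ^ 2 / 4 * (Cb / (B * x ^ 2 / 32) ^ 2 * |θ - θ₂|) := by gcongr
    _ = _ := by field_simp; ring

lemma m0_tendsto : Tendsto m0 atTop (nhds 1) := by
  have h : Tendsto (fun ρ : ℝ => 1 - (ρ + 1)⁻¹) atTop (nhds (1 - 0)) :=
    tendsto_const_nhds.sub (tendsto_inv_atTop_zero.comp
      (tendsto_atTop_add_const_right _ 1 tendsto_id))
  rw [sub_zero] at h
  refine h.congr' ?_
  filter_upwards [eventually_gt_atTop 0] with ρ hρ
  unfold m0; field_simp; ring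

lemma pp_tendsto (B : ℝ) (hB : 1 ≤ B) (P : ℝ → ℝ) (Rb : ℝ → ℝ)
    (hR : Tendsto Rb atTop (nhds 0))
    (h : ∀ᶠ ρ in atTop, |P (eta0 B ρ) - pg B ρ| ≤ 2 * Rb ρ / ρ) :
    Tendsto (fun x => pp B P x 0) atTop (nhds 1) := by
  have key : Tendsto (fun ρ => B * (ρ + 1) * P (eta0 B ρ)) atTop (nhds 1) := by
    have i0 : Tendsto (fun ρ : ℝ => ρ⁻¹) atTop (nhds 0) := tendsto_inv_atTop_zero
    have k1 : Tendsto (fun ρ : ℝ => (1 + ρ⁻¹) * (1 + (1 + B) * ρ⁻¹)) atTop (nhds 1) := by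
      have := (i0.const_add 1).mul ((i0.const_mul (1 + B)).const_add 1)
      simpa using this
    have k2 : Tendsto (fun ρ => B * (ρ + 1) * (P (eta0 B ρ) - pg B ρ)) atTop (nhds 0) := by
      refine squeeze_zero_norm' (a := fun ρ => 4 * B * Rb ρ) ?_ (by simpa using hR.const_mul (4 * B))
      filter_upwards [h, eventually_ge_atTop 1] with ρ h1 h2
      rw [Real.norm_eq_abs, abs_mul, abs_of_nonneg (by positivity)]
      have hRn : 0 ≤ 2 * Rb ρ / ρ := (abs_nonneg _).trans h1
      calc _ ≤ B * (ρ + ρ) * (2 * Rb ρ / ρ) := by gcongr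
        _ = _ := by field_simp; ring
    have := k1.add k2
    rw [add_zero] at this
    refine this.congr' ?_
    filter_upwards [eventually_gt_atTop 0] with ρ hρ
    unfold pg; field_simp; ring
  refine (key.comp (rh_tendsto B hB)).congr ?_
  intro x; simp only [Function.comp, pp, add_zero]; congr 1; unfold rh; ring

/-- Nonlinear forcing term in the complex formulation. -/
noncomputable def Gz (B α : ℝ) (P b : ℝ → ℝ) (x : ℝ) (z : ℂ) : ℂ :=
  ((α / x * hh B P (rh B x) - B * x / 2 * hh' B P b (rh B x) : ℝ) : ℂ)
  + ((Nrem B α (pp B P) (fun x => m0 (rh B x)) x (z.re + hh B P (rh B x)) z.im : ℝ) : ℂ) * Complex.I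

lemma ode_system (B α : ℝ) (hB : 1 ≤ B) (hα : α = (1 + 4 / B) / 2) (P b : ℝ → ℝ) (Z : ℝ → ℂ)
    (ρ : ℝ) (hρ : 0 < ρ)
    (hh1 : HasDerivAt (hh B P) (hh' B P b ρ) ρ)
    (hZ : HasDerivAt Z (((α / xr B ρ : ℝ) - Complex.I) * Z (xr B ρ) +
      Gz B α P b (xr B ρ) (Z (xr B ρ))) (xr B ρ)) :
    let θ : ℝ → ℝ := fun ρ => (Z (xr B ρ)).re + hh B P ρ
    let μ : ℝ → ℝ := fun ρ => 2 / (B * xr B ρ) * ((Z (xr B ρ)).im + α * θ ρ / xr B ρ)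
    HasDerivAt θ (μ ρ) ρ ∧
    HasDerivAt μ (P (eta0 B ρ + θ ρ) * (m0 ρ + μ ρ) ^ 2 - pg B ρ * m0 ρ ^ 2
      - (Real.exp (θ ρ) - 1) / (B * (ρ + 1))) ρ := by
  intro θ μ
  have hX := xr_pos B ρ hB hρ
  have hXd := xr_deriv B ρ hB hρ
  have hrx := rh_xr B ρ hB hρ
  have hB0 : 0 < B := by linarith
  have hre : HasDerivAt (fun x => (Z x).re) _ (xr B ρ) :=
    (Complex.reCLM.hasFDerivAt (x := Z (xr B ρ))).comp_hasDerivAt (xr B ρ) hZ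
  have him : HasDerivAt (fun x => (Z x).im) _ (xr B ρ) :=
    (Complex.imCLM.hasFDerivAt (x := Z (xr B ρ))).comp_hasDerivAt (xr B ρ) hZ
  have hre' := hre.comp ρ hXd
  have him' := him.comp ρ hXd
  simp only [Complex.reCLM_apply, Complex.imCLM_apply, Gz, hrx, Complex.add_re, Complex.add_im,
    Complex.mul_re, Complex.mul_im, Complex.sub_re, Complex.sub_im, Complex.ofReal_re,
    Complex.ofReal_im, Complex.I_re, Complex.I_im, mul_zero, mul_one, sub_zero, add_zero,
    zero_sub, zero_add] at hre' him'
  have hx2 : (xr B ρ) ^ 2 = 4 * (ρ + 1) / B := by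
    have := hrx; unfold rh at this; field_simp; linarith
  have hθ : HasDerivAt θ (μ ρ) ρ := by
    refine (hre'.add hh1).congr_deriv ?_
    simp only [μ, θ]; field_simp; ring
  refine ⟨hθ, ?_⟩
  have h1 : HasDerivAt (fun ρ => 2 / (B * xr B ρ)) _ ρ :=
    (hasDerivAt_const ρ (2:ℝ)).div (hXd.const_mul B) (by positivity)
  have h2 : HasDerivAt (fun ρ => α * θ ρ / xr B ρ) _ ρ := (hθ.const_mul α).div hXd hX.ne'
  refine (h1.mul (him'.add h2)).congr_deriv ?_
  have hN : Nrem B α (pp B P) (fun x => m0 (rh B x)) (xr B ρ) (θ ρ) (Z (xr B ρ)).im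
      = -(4 / (B * xr B ρ)) * (Z (xr B ρ)).im + ((2 * α - α ^ 2) / xr B ρ ^ 2) * θ ρ
       + B * (ρ + 1) * (P (eta0 B ρ + θ ρ) * (m0 ρ + μ ρ) ^ 2 - pg B ρ * m0 ρ ^ 2)
       - hh B P ρ - (Real.exp (θ ρ) - 1 - θ ρ) := by
    have e1 : B ^ 2 * xr B ρ ^ 2 / 4 = B * (ρ + 1) := by rw [hx2]; field_simp
    have e2 : hh B P ρ = B * (ρ + 1) * (P (eta0 B ρ) - pg B ρ) * m0 ρ ^ 2 := by
      unfold hh m0; field_simp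
    unfold Nrem pp
    simp only [hrx]
    rw [e1, e2, add_zero]
    simp only [μ]; ring
  have hN' : (Z (xr B ρ)).re + hh B P ρ = θ ρ := rfl
  have hre0 : (Z (xr B ρ)).re = θ ρ - hh B P ρ := by simp [θ]
  simp only [Function.comp, Pi.add_apply]
  rw [hN', hN, hre0]
  set E := P (eta0 B ρ + θ ρ) * (m0 ρ + μ ρ) ^ 2 - pg B ρ * m0 ρ ^ 2
  have hr : ρ + 1 = B * xr B ρ ^ 2 / 4 := by rw [hx2]; field_simp
  rw [hr]
  simp only [μ]
  generalize θ ρ = T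
  generalize (Z (xr B ρ)).im = Y
  generalize xr B ρ = x at hX ⊢
  generalize Real.exp T = e
  rw [hα]
  field_simp
  ring

lemma Gz_lip (B α : ℝ) (P b : ℝ → ℝ) (x ε : ℝ) (z z' : ℂ) (hε : 0 ≤ ε) (hx : 0 < x)
    (h : |Nrem B α (pp B P) (fun x => m0 (rh B x)) x (z.re + hh B P (rh B x)) z.im -
      Nrem B α (pp B P) (fun x => m0 (rh B x)) x (z'.re + hh B P (rh B x)) z'.im|
      ≤ ε / x * (|(z.re + hh B P (rh B x)) - (z'.re + hh B P (rh B x))| + |z.im - z'.im|)) :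
    ‖Gz B α P b x z - Gz B α P b x z'‖ ≤ 2 * ε / x * ‖z - z'‖ := by
  have e : Gz B α P b x z - Gz B α P b x z' =
    ((Nrem B α (pp B P) (fun x => m0 (rh B x)) x (z.re + hh B P (rh B x)) z.im -
      Nrem B α (pp B P) (fun x => m0 (rh B x)) x (z'.re + hh B P (rh B x)) z'.im : ℝ) : ℂ)
      * Complex.I := by
    unfold Gz; push_cast; ring
  rw [e, norm_mul, Complex.norm_I, mul_one, Complex.norm_real, Real.norm_eq_abs]
  refine h.trans ?_
  have e1 : |(z.re + hh B P (rh B x)) - (z'.re + hh B P (rh B x))| ≤ ‖z - z'‖ := by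
    have := Complex.abs_re_le_norm (z - z')
    simpa using this
  have e2 : |z.im - z'.im| ≤ ‖z - z'‖ := by
    have := Complex.abs_im_le_norm (z - z')
    simpa using this
  calc _ ≤ ε / x * (‖z - z'‖ + ‖z - z'‖) := by gcongr
    _ = _ := by ring

lemma rh_cont (B : ℝ) : Continuous (rh B) := by unfold rh; fun_prop

lemma eta0_contAt (B ρ : ℝ) (hρ : 0 < ρ) : ContinuousAt (eta0 B) ρ := (eta0_deriv B ρ hρ).continuousAt

lemma hh'_contAt (B : ℝ) (hB : 1 ≤ B) (P b : ℝ → ℝ) (ρ : ℝ) (hρ : 0 < ρ) (he : eta0 B ρ ≠ 0)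
    (hP : ContinuousAt P (eta0 B ρ)) (hb : ContinuousAt b (eta0 B ρ)) :
    ContinuousAt (hh' B P b) ρ := by
  have h1 := eta0_contAt B ρ hρ
  have h2 : ContinuousAt (fun ρ => P (eta0 B ρ)) ρ := ContinuousAt.comp hP h1
  have h3 : ContinuousAt (fun ρ => b (eta0 B ρ)) ρ := ContinuousAt.comp hb h1
  have hB0 : 0 < B := by linarith
  have h4 : ContinuousAt (pg B) ρ := by
    unfold pg
    exact ContinuousAt.div (by fun_prop) (by fun_prop) (by positivity)
  have h5 : ContinuousAt (bg B) ρ := by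
    unfold bg
    exact (h1.pow 2).mul (ContinuousAt.div (by fun_prop) (by fun_prop) (by positivity))
  have h6 : ContinuousAt m0 ρ := by
    unfold m0
    exact ContinuousAt.div (by fun_prop) (by fun_prop) (by positivity)
  unfold hh'
  refine ContinuousAt.add (ContinuousAt.mul ?_ (h2.sub h4)) (ContinuousAt.mul ?_ ?_)
  · exact ContinuousAt.div (by fun_prop) (by fun_prop) (by positivity)
  · exact ContinuousAt.div (by fun_prop) (by fun_prop) (by positivity)
  · exact ContinuousAt.mul (ContinuousAt.div (h3.sub h5).neg (h1.pow 2) (pow_ne_zero 2 he)) h6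

lemma m0_contAt (ρ : ℝ) (hρ : 0 < ρ) : ContinuousAt m0 ρ := by
  unfold m0
  exact ContinuousAt.div (by fun_prop) (by fun_prop) (by positivity)

lemma Gz_cont (B α : ℝ) (hB : 1 ≤ B) (P b : ℝ → ℝ) (η₁ a : ℝ) (ha : 0 < a)
    (hP : ∀ η, η₁ < η → ContinuousAt P η) (hb : ∀ η, η₁ < η → ContinuousAt b η)
    (hrh : ∀ x, a < x → 0 < rh B x ∧ 0 < eta0 B (rh B x) ∧ η₁ < eta0 B (rh B x) - 1
      ∧ ContinuousAt (hh B P) (rh B x))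
    (Z : ℝ → ℂ) (hZ : ContinuousOn Z (Set.Ioi a))
    (hZb : ∀ x, a < x → |(Z x).re + hh B P (rh B x)| ≤ 1) :
    ContinuousOn (fun x => Gz B α P b x (Z x)) (Set.Ioi a) := by
  intro x hx
  apply ContinuousAt.continuousWithinAt
  obtain ⟨h1, h2, h3, h4⟩ := hrh x hx
  have hx0 : 0 < x := ha.trans hx
  have hB0 : 0 < B := by linarith
  have hZx : ContinuousAt Z x := hZ.continuousAt (Ioi_mem_nhds hx)
  have hrc : ContinuousAt (rh B) x := (rh_cont B).continuousAt
  have c1 : ContinuousAt (fun x => hh B P (rh B x)) x := ContinuousAt.comp h4 hrc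
  have c2 : ContinuousAt (fun x => hh' B P b (rh B x)) x :=
    ContinuousAt.comp (hh'_contAt B hB P b _ h1 h2.ne' (hP _ (by linarith)) (hb _ (by linarith))) hrc
  have c3 : ContinuousAt (fun x => m0 (rh B x)) x := ContinuousAt.comp (m0_contAt _ h1) hrc
  have c4 : ContinuousAt (fun x => eta0 B (rh B x)) x := ContinuousAt.comp (eta0_contAt B _ h1) hrc
  have cre : ContinuousAt (fun x => (Z x).re) x := Complex.continuous_re.continuousAt.comp hZx
  have cim : ContinuousAt (fun x => (Z x).im) x := Complex.continuous_im.continuousAt.comp hZx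
  have cθ := cre.add c1
  have hθ1 := abs_le.1 (hZb x hx)
  have cp : ContinuousAt (fun x => pp B P x ((Z x).re + hh B P (rh B x))) x := by
    unfold pp
    refine ContinuousAt.mul (by fun_prop) ?_
    exact ContinuousAt.comp (f := fun x => eta0 B (rh B x) + ((Z x).re + hh B P (rh B x)))
      (hP _ (by linarith [hθ1.1])) (c4.add cθ)
  have cp0 : ContinuousAt (fun x => pp B P x 0) x := by
    unfold pp
    refine ContinuousAt.mul (by fun_prop) ?_
    exact ContinuousAt.comp (f := fun x => eta0 B (rh B x) + 0)
      (hP _ (by linarith [hθ1.1])) (c4.add continuousAt_const)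
  have ci : ContinuousAt (fun x : ℝ => x) x := continuousAt_id
  have cBx : ContinuousAt (fun x : ℝ => B * x) x := by fun_prop
  have hBx : B * x ≠ 0 := by positivity
  have cN : ContinuousAt (fun x => Nrem B α (pp B P) (fun x => m0 (rh B x)) x
      ((Z x).re + hh B P (rh B x)) (Z x).im) x := by
    unfold Nrem
    refine ContinuousAt.sub (ContinuousAt.add (ContinuousAt.add ?_ ?_) ?_) ?_
    · exact ((continuousAt_const.div cBx hBx).neg).mul cim
    · exact (continuousAt_const.div (ci.pow 2) (pow_ne_zero 2 hx0.ne')).mul cθ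
    · refine ContinuousAt.sub (cp.mul (ContinuousAt.pow ?_ 2)) (cp0.mul (c3.pow 2))
      exact c3.add ((continuousAt_const.div cBx hBx).mul
        (cim.add ((continuousAt_const.mul cθ).div ci hx0.ne')))
    · exact ((Real.continuous_exp.continuousAt.comp cθ).sub continuousAt_const).sub cθ
  unfold Gz
  refine ContinuousAt.add ?_ (ContinuousAt.mul ?_ continuousAt_const)
  · refine Complex.continuous_ofReal.continuousAt.comp ?_
    exact ((continuousAt_const.div ci hx0.ne').mul c1).sub ((cBx.div_const 2).mul c2)
  · exact Complex.continuous_ofReal.continuousAt.comp cN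

lemma ode_main (B : ℝ) (hB : 1 ≤ B) (P b Rb : ℝ → ℝ) (η₁ Cb ρ₁ : ℝ)
    (hP : ∀ η, η₁ < η → HasDerivAt P (-b η / η ^ 2) η)
    (hbc : ∀ η, η₁ < η → ContinuousAt b η)
    (hb : ∀ η, η₁ < η → |b η| ≤ Cb)
    (hR1 : ∀ ρ, ρ₁ < ρ → |P (eta0 B ρ) - pg B ρ| * eta0 B ρ ≤ Rb ρ)
    (hR2 : ∀ ρ, ρ₁ < ρ → |b (eta0 B ρ) - bg B ρ| ≤ Rb ρ)
    (hanti : ∀ ρ ρ', ρ₁ < ρ → ρ ≤ ρ' → Rb ρ' ≤ Rb ρ)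
    (hlim : Tendsto (fun ρ => Real.sqrt ρ * Rb ρ) atTop (nhds 0)) :
    ∃ ρ₂ C : ℝ, 0 < C ∧ ∃ θ μ : ℝ → ℝ, ∀ ρ, ρ₂ < ρ →
      HasDerivAt θ (μ ρ) ρ ∧
      HasDerivAt μ (P (eta0 B ρ + θ ρ) * (m0 ρ + μ ρ) ^ 2 - pg B ρ * m0 ρ ^ 2
        - (Real.exp (θ ρ) - 1) / (B * (ρ + 1))) ρ ∧ |θ ρ| ≤ C * Rb ρ := by
  set α : ℝ := (1 + 4 / B) / 2 with hα
  have hB0 : 0 < B := by linarith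
  have hα0 : 0 < α := by positivity
  have hRn : ∀ ρ, ρ₁ < ρ → 0 ≤ Rb ρ := fun ρ h => (abs_nonneg _).trans (hR2 ρ h)
  have hR0 : Tendsto Rb atTop (nhds 0) := by
    refine squeeze_zero_norm' (a := fun ρ => Real.sqrt ρ * Rb ρ) ?_ hlim
    filter_upwards [eventually_gt_atTop ρ₁, eventually_ge_atTop 1] with ρ h1 h2
    rw [Real.norm_of_nonneg (hRn ρ h1)]
    exact le_mul_of_one_le_left (hRn ρ h1) (Real.one_le_sqrt.2 h2)
  have heta : Tendsto (eta0 B) atTop atTop := by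
    refine tendsto_atTop_mono' _ (eta0_ge B) ?_
    exact tendsto_id.atTop_div_const (by norm_num)
  -- eventual facts in rho
  have ev1 : ∀ᶠ ρ in atTop, 4 < ρ ∧ ρ₁ < ρ ∧ ρ / 2 ≤ eta0 B ρ ∧ η₁ < eta0 B ρ - 1 := by
    filter_upwards [eventually_gt_atTop 4, eventually_gt_atTop ρ₁, eta0_ge B,
      heta.eventually_gt_atTop (η₁ + 1)] with ρ h1 h2 h3 h4
    exact ⟨h1, h2, h3, by linarith⟩
  have ev2 := (rh_tendsto B hB).eventually ev1
  obtain ⟨X₁, hX₁⟩ := eventually_atTop.1 ev2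
  have hrh8 : ∀ x, 4 < rh B x → B * x ^ 2 / 8 ≤ rh B x := by
    intro x hx; unfold rh at *; linarith
  have hpL : ∀ x, max X₁ 1 < x → ∀ θ θ₂, |θ| ≤ 1 → |θ₂| ≤ 1 →
      |pp B P x θ - pp B P x θ₂| ≤ (256 * Cb) / x ^ 2 * |θ - θ₂| := by
    intro x hx θ θ₂ h1 h2
    rw [max_lt_iff] at hx
    obtain ⟨g1, g2, g3, g4⟩ := hX₁ x hx.1.le
    exact pp_lip B hB P b η₁ Cb x hP hb (by linarith) (hrh8 x g1) g1.le g3 g4 θ θ₂ h1 h2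
  have hpt := pp_tendsto B hB P Rb hR0 (by
    filter_upwards [ev1] with ρ ⟨g1, g2, g3, g4⟩
    exact (hh_bounds B hB P b ρ (Rb ρ) (by linarith) g3 (hR1 ρ g2) (hR2 ρ g2)).1)
  obtain ⟨δ, hδ0, hδ1, X₂, hX₂, hLip⟩ := Nrem_lip B α hB hα0 (pp B P) (fun x => m0 (rh B x))
    (256 * Cb) (max X₁ 1) hpL hpt (m0_tendsto.comp (rh_tendsto B hB)) (α / 4) (by positivity)
  set C₀ : ℝ := α * (2 * B) + 24 * B + α * B / 2 with hC₀
  have hC₀p : 0 < C₀ := by positivity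
  set K : ℝ := 2 * C₀ / α with hK
  have hKp : 0 < K := by positivity
  have ev3 : ∀ᶠ x in atTop, (K + 2 * B) * (3 * (Real.sqrt (rh B x) * Rb (rh B x))) < δ := by
    have := ((hlim.comp (rh_tendsto B hB)).const_mul 3).const_mul (K + 2 * B)
    simp only [mul_zero, Function.comp] at this
    exact this.eventually (gt_mem_nhds hδ0)
  obtain ⟨X₃, hX₃⟩ := eventually_atTop.1 ev3
  set a := max (max X₁ X₂) (max X₃ 1) with ha
  have ha1 : 1 ≤ a := by simp [ha]
  have ha0 : 0 < a := by linarith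
  have F : ∀ x, a < x → 1 < x ∧ X₂ < x ∧ 4 < rh B x ∧ ρ₁ < rh B x ∧
      rh B x / 2 ≤ eta0 B (rh B x) ∧ η₁ < eta0 B (rh B x) - 1 ∧
      (K + 2 * B) * Rb (rh B x) ≤ δ / x := by
    intro x hx
    simp only [ha, max_lt_iff] at hx
    obtain ⟨⟨h1, h2⟩, h3, h4⟩ := hx
    obtain ⟨g1, g2, g3, g4⟩ := hX₁ x h1.le
    refine ⟨h4, h2, g1, g2, g3, g4, ?_⟩
    have hx0 : 0 < x := by linarith
    have := hX₃ x h3.le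
    have hsq : x ≤ 3 * Real.sqrt (rh B x) := by
      have : x / 3 ≤ Real.sqrt (rh B x) := by
        apply Real.le_sqrt_of_sq_le
        have := hrh8 x g1
        nlinarith [sq_nonneg x]
      linarith
    rw [le_div_iff₀ hx0]
    have hRx := hRn _ g2
    have : (K + 2 * B) * Rb (rh B x) * x ≤ (K + 2 * B) * Rb (rh B x) * (3 * Real.sqrt (rh B x)) := by
      gcongr
    linarith
  have Fh : ∀ x, a < x → |hh B P (rh B x)| ≤ 2 * B * Rb (rh B x) ∧
      |hh' B P b (rh B x)| ≤ 6 * B * Rb (rh B x) / rh B x := by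
    intro x hx
    obtain ⟨h1, h2, h3, h4, h5, h6, h7⟩ := F x hx
    exact (hh_bounds B hB P b _ (Rb _) (by linarith) h5 (hR1 _ h4) (hR2 _ h4)).2
  have Fd : ∀ x, a < x → HasDerivAt (hh B P) (hh' B P b (rh B x)) (rh B x) := by
    intro x hx
    obtain ⟨h1, h2, h3, h4, h5, h6, h7⟩ := F x hx
    exact hh_deriv B hB P b _ (by linarith) (by linarith) (hP _ (by linarith))
  have Fb : ∀ x, a < x → ∀ z : ℂ, ‖z‖ ≤ K * Rb (rh B x) →
      |z.re + hh B P (rh B x)| ≤ δ / x ∧ |z.im| ≤ δ / x := by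
    intro x hx z hz
    obtain ⟨h1, h2, h3, h4, h5, h6, h7⟩ := F x hx
    have hRx := hRn _ h4
    have e1 := Complex.abs_re_le_norm z
    have e2 := Complex.abs_im_le_norm z
    have e3 := (Fh x hx).1
    have e4 := abs_add_le z.re (hh B P (rh B x))
    have e5 : 0 ≤ 2 * B * Rb (rh B x) := by positivity
    constructor <;> linarith
  have hdx1 : ∀ x, a < x → δ / x ≤ 1 := by
    intro x hx
    rw [div_le_one (by linarith)]; linarith
  obtain ⟨Z, hZ⟩ := fp α a hα0 ha0 (Gz B α P b) (fun x => K * Rb (rh B x)) 1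
    (fun x hx => mul_nonneg hKp.le (hRn _ (F x hx).2.2.2.1))
    (fun x hx => by
      obtain ⟨h1, h2, h3, h4, h5, h6, h7⟩ := F x hx
      have hRx := hRn _ h4
      have := hdx1 x hx
      have e5 : 0 ≤ 2 * B * Rb (rh B x) := by positivity
      show K * Rb (rh B x) ≤ 1
      linarith)
    (fun x y hx hxy => by
      refine mul_le_mul_of_nonneg_left (hanti _ _ (F x hx).2.2.2.1 ?_) hKp.le
      have hx0 : 0 < x := by linarith
      unfold rh; gcongr)
    (fun Z hZc hZb => Gz_cont B α hB P b η₁ a ha0 (fun η h => (hP η h).continuousAt) hbc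
      (fun x hx => by
        obtain ⟨h1, h2, h3, h4, h5, h6, h7⟩ := F x hx
        exact ⟨by linarith, by linarith, h6, (Fd x hx).continuousAt⟩) Z hZc
      (fun x hx => (Fb x hx _ (hZb x hx)).1.trans (hdx1 x hx)))
    (fun x hx => by
      obtain ⟨h1, h2, h3, h4, h5, h6, h7⟩ := F x hx
      have hx0 : 0 < x := by linarith
      have hRx := hRn _ h4
      have hN0 : Nrem B α (pp B P) (fun x => m0 (rh B x)) x 0 0 = 0 := by simp [Nrem]
      have hδx : 0 ≤ δ / x := by positivity
      have hf := (Fb x hx 0 (by simpa using mul_nonneg hKp.le hRx)).1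
      simp only [Complex.zero_re, zero_add] at hf
      have hNl := hLip x h2 (hh B P (rh B x)) 0 0 0 hf (by simpa using hδx)
        (by simpa using hδx) (by simpa using hδx)
      rw [hN0] at hNl
      simp only [sub_zero, abs_zero, add_zero] at hNl
      obtain ⟨b1, b2⟩ := Fh x hx
      have hr8 := hrh8 x h3
      have c1 : |α / x * hh B P (rh B x)| ≤ α * (2 * B) * (Rb (rh B x) / x) := by
        rw [abs_mul, abs_of_pos (by positivity)]
        calc _ ≤ α / x * (2 * B * Rb (rh B x)) := by gcongr
          _ = _ := by ring
      have c2 : |B * x / 2 * hh' B P b (rh B x)| ≤ 24 * B * (Rb (rh B x) / x) := by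
        rw [abs_mul, abs_of_pos (by positivity)]
        calc _ ≤ B * x / 2 * (6 * B * Rb (rh B x) / rh B x) := by gcongr
          _ ≤ B * x / 2 * (6 * B * Rb (rh B x) / (B * x ^ 2 / 8)) := by gcongr
          _ = _ := by field_simp; ring
      have c3 : α / 4 / x * |hh B P (rh B x)| ≤ α * B / 2 * (Rb (rh B x) / x) := by
        calc _ ≤ α / 4 / x * (2 * B * Rb (rh B x)) := by gcongr
          _ = _ := by ring
      unfold Gz
      refine (norm_add_le _ _).trans ?_
      rw [norm_mul, Complex.norm_I, mul_one, Complex.norm_real, Complex.norm_real,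
        Real.norm_eq_abs, Real.norm_eq_abs]
      simp only [Complex.zero_re, zero_add, Complex.zero_im]
      have c4 := abs_sub (α / x * hh B P (rh B x)) (B * x / 2 * hh' B P b (rh B x))
      have c5 : α / (2 * x) * (K * Rb (rh B x)) = C₀ * (Rb (rh B x) / x) := by
        rw [hK]; field_simp
      rw [c5, hC₀, add_mul, add_mul]
      linarith)
    (fun x hx z z' hz hz' => by
      obtain ⟨h1, h2, h3, h4, h5, h6, h7⟩ := F x hx
      have hx0 : 0 < x := by linarith
      obtain ⟨f1, f2⟩ := Fb x hx z hz
      obtain ⟨f3, f4⟩ := Fb x hx z' hz'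
      have := Gz_lip B α P b x (α / 4) z z' (by positivity) hx0 (hLip x h2 _ _ _ _ f1 f2 f3 f4)
      calc _ ≤ _ := this
        _ = _ := by field_simp; norm_num)
  obtain ⟨ρ₂, hρ₂⟩ := eventually_atTop.1 ((xr_tendsto B hB).eventually_gt_atTop a)
  refine ⟨max ρ₂ 1, K + 2 * B, by positivity, fun ρ => (Z (xr B ρ)).re + hh B P ρ,
    fun ρ => 2 / (B * xr B ρ) * ((Z (xr B ρ)).im + α * ((Z (xr B ρ)).re + hh B P ρ) / xr B ρ), ?_⟩
  intro ρ hρ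
  rw [max_lt_iff] at hρ
  have hρ0 : 0 < ρ := by linarith
  have hxa := hρ₂ ρ hρ.1.le
  have hrx := rh_xr B ρ hB hρ0
  have hd := Fd _ hxa
  rw [hrx] at hd
  have hs := ode_system B α hB hα P b Z ρ hρ0 hd (hZ _ hxa).1
  refine ⟨hs.1, hs.2, ?_⟩
  have e1 := (Fh _ hxa).1
  have e2 := (hZ _ hxa).2
  simp only [hrx] at e1 e2
  have e3 := Complex.abs_re_le_norm (Z (xr B ρ))
  have e4 := abs_add_le (Z (xr B ρ)).re (hh B P ρ)
  show |(Z (xr B ρ)).re + hh B P ρ| ≤ _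
  rw [add_mul]
  linarith

lemma eta0_exp (B ρ : ℝ) (hB : 1 ≤ B) (hρ : 0 < ρ) :
    Real.exp (-eta0 B ρ) = (B / 4) * (ρ + 1) * Real.exp (-ρ) := by
  have h : -eta0 B ρ = Real.log (B / 4) + Real.log (ρ + 1) + (-ρ) := by unfold eta0; ring
  rw [h, Real.exp_add, Real.exp_add, Real.exp_log (by positivity), Real.exp_log (by positivity)]

lemma model_abs (g G : ℝ → ℝ) (v ρ B X a c : ℝ)
    (hG : G v = Real.exp (-eta0 B ρ))
    (h1 : deriv g v = g v * a) (h2 : deriv (deriv g) v = g v * c) (hX : g v * G v = X)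
    (ha : a ≠ 0) (hg : g v ≠ 0)
    (e1 : a * X = 1 - pg B ρ) (e2 : c * X ^ 2 - a * X = (ρ + 1) * (ρ + 2 + 2 * B) / (B * ρ ^ 4)) :
    invB1 g G v = eta0 B ρ * pg B ρ ∧ invB2 g G v = bg B ρ := by
  have hl : Real.log (G v) = - eta0 B ρ := by rw [hG, Real.log_exp]
  constructor
  · unfold invB1
    have : deriv g v * G v = a * X := by rw [h1, ← hX]; ring
    rw [hl, this, e1]; ring
  · unfold invB2 bg
    rw [hl, ← e2, ← hX, h1, h2]
    field_simp

lemma model_one (ρ t : ℝ) (hρ : 2 < ρ) (ht : ρ = -2 * Real.log t) :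
    modelG 1 (modelv 1 t) = Real.exp (-eta0 1 ρ) ∧
    invB1 (modelg 1) (modelG 1) (modelv 1 t) = eta0 1 ρ * pg 1 ρ ∧
    invB2 (modelg 1) (modelG 1) (modelv 1 t) = bg 1 ρ := by
  have hv : Real.exp (modelv 1 t) = ρ := by
    simp only [modelv, if_true, ← ht]; exact Real.exp_log (by linarith)
  have hG : modelG 1 (modelv 1 t) = Real.exp (-eta0 1 ρ) := by
    rw [eta0_exp 1 ρ le_rfl (by linarith)]
    simp only [modelG, if_true, hv]
  refine ⟨hG, ?_⟩
  have hgd : ∀ s, HasDerivAt (modelg 1) (modelg 1 s * (Real.exp s - 2)) s := by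
    intro s
    have hfun : modelg 1 = fun s => 4 * Real.exp (Real.exp s - 2 * s) := by
      funext s; simp [modelg]
    rw [hfun]
    have := (((Real.hasDerivAt_exp s).sub ((hasDerivAt_id s).const_mul 2)).exp).const_mul 4
    refine HasDerivAt.congr_deriv this ?_
    simp; ring
  have hd : deriv (modelg 1) = fun s => modelg 1 s * (Real.exp s - 2) := funext fun s => (hgd s).deriv
  have hd2 : deriv (deriv (modelg 1)) (modelv 1 t)
      = modelg 1 (modelv 1 t) * ((ρ - 2) ^ 2 + ρ) := by
    rw [hd]
    have := (hgd (modelv 1 t)).mul ((Real.hasDerivAt_exp (modelv 1 t)).sub_const 2)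
    have h' := this.deriv
    rw [hv] at h'
    refine Eq.trans ?_ (h'.trans (by ring))
    rfl
  have hgv : modelg 1 (modelv 1 t) = 4 * (Real.exp ρ / ρ ^ 2) := by
    simp only [modelg, if_true]
    rw [Real.exp_sub, two_mul, Real.exp_add, hv]
    ring
  refine model_abs _ _ _ ρ 1 ((ρ + 1) / ρ ^ 2) (ρ - 2) ((ρ - 2) ^ 2 + ρ) hG ?_ hd2 ?_ (by linarith) ?_ ?_ ?_
  · rw [hd]; simp only [hv]
  · rw [hgv, hG, eta0_exp 1 ρ le_rfl (by linarith), Real.exp_neg]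
    have := Real.exp_pos ρ
    field_simp
  · rw [hgv]; positivity
  · unfold pg; field_simp; ring
  · field_simp; ring

lemma model_gt (B ρ t : ℝ) (hB : 1 < B) (hρ : 2 < ρ) (ht : ρ = -2 * Real.log t) :
    modelG B (modelv B t) = Real.exp (-eta0 B ρ) ∧
    invB1 (modelg B) (modelG B) (modelv B t) = eta0 B ρ * pg B ρ ∧
    invB2 (modelg B) (modelG B) (modelv B t) = bg B ρ := by
  have hB1 : B ≠ 1 := hB.ne'
  have hBm : 0 < B - 1 := by linarith
  obtain ⟨D, hD⟩ : ∃ D, D = B / (B - 1) := ⟨_, rfl⟩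
  have hDB : B = D / (D - 1) := by
    rw [hD]; field_simp; ring
  have hD1 : 1 < D := by rw [hD, lt_div_iff₀ hBm]; linarith
  have hvdef : modelv B t = ρ ^ ((B - 1) / B) := by simp only [modelv, if_neg hB1, ← ht]
  obtain ⟨v, hvv⟩ : ∃ v, v = modelv B t := ⟨_, rfl⟩
  have hv0 : 0 < v := by rw [hvv, hvdef]; apply Real.rpow_pos_of_pos; linarith
  have hv : v ^ D = ρ := by
    rw [hvv, hvdef, ← Real.rpow_mul (by linarith), hD]
    have : (B - 1) / B * (B / (B - 1)) = 1 := by field_simp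
    rw [this, Real.rpow_one]
  rw [← hvv]
  have hG : modelG B v = Real.exp (-eta0 B ρ) := by
    rw [eta0_exp B ρ hB.le (by linarith)]
    simp only [modelG, if_neg hB1, ← hD, hv]
  refine ⟨hG, ?_⟩
  have hfun : modelg B = fun s => (4 / (B * D)) * s ^ (1 - 2 * D) * Real.exp (s ^ D) := by
    funext s; simp only [modelg, if_neg hB1, ← hD]
  have hgd : ∀ s, 0 < s → HasDerivAt (modelg B) (modelg B s * ((1 - 2 * D + D * s ^ D) / s)) s := by
    intro s hs
    rw [hfun]
    have h1 := Real.hasDerivAt_rpow_const (x := s) (p := 1 - 2 * D) (Or.inl hs.ne')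
    have h2 := Real.hasDerivAt_rpow_const (x := s) (p := D) (Or.inl hs.ne')
    have := (h1.const_mul (4 / (B * D))).mul h2.exp
    refine HasDerivAt.congr_deriv this ?_
    rw [Real.rpow_sub_one hs.ne', Real.rpow_sub_one hs.ne']
    field_simp
  have hd2 : deriv (deriv (modelg B)) v
      = modelg B v * (((1 - 2 * D + D * ρ) / v) ^ 2 + (D * (D - 1) * ρ - (1 - 2 * D)) / v ^ 2) := by
    have hev : deriv (modelg B) =ᶠ[nhds v] fun s => modelg B s * ((1 - 2 * D + D * s ^ D) / s) := by
      filter_upwards [lt_mem_nhds hv0] with s hs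
      exact (hgd s hs).deriv
    rw [hev.deriv_eq]
    have h2 := Real.hasDerivAt_rpow_const (x := v) (p := D) (Or.inl hv0.ne')
    have := (hgd v hv0).mul (((h2.const_mul D).const_add (1 - 2 * D)).div (hasDerivAt_id v) hv0.ne')
    have h' := this.deriv
    refine Eq.trans ?_ (h'.trans ?_)
    · rfl
    · simp only [id, Pi.div_apply]
      rw [Real.rpow_sub_one hv0.ne', hv]
      field_simp
      ring
  have hgv : modelg B v = 4 / (B * D) * v * Real.exp ρ / ρ ^ 2 := by
    rw [hfun]
    simp only [hv]
    rw [Real.rpow_sub hv0, Real.rpow_one, mul_comm 2 D, Real.rpow_mul hv0.le, hv, Real.rpow_two]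
    ring
  have hρ0 : 0 < ρ := by linarith
  have hD0 : 0 < D := by linarith
  have hDm : D - 1 ≠ 0 := by linarith
  have hB0 : 0 < B := by linarith
  have hnum : 0 < 1 - 2 * D + D * ρ := by nlinarith
  refine model_abs _ _ _ ρ B (v * (ρ + 1) / (D * ρ ^ 2)) ((1 - 2 * D + D * ρ) / v)
    (((1 - 2 * D + D * ρ) / v) ^ 2 + (D * (D - 1) * ρ - (1 - 2 * D)) / v ^ 2) hG ?_ hd2 ?_ ?_ ?_ ?_ ?_
  · rw [(hgd v hv0).deriv, hv]
  · rw [hgv, hG, eta0_exp B ρ hB.le (by linarith), Real.exp_neg]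
    have := Real.exp_pos ρ
    field_simp
  · positivity
  · rw [hgv]; positivity
  · unfold pg; rw [hDB]; field_simp; ring
  · rw [hDB]; field_simp; ring

lemma model_all (B ρ t : ℝ) (hB : 1 ≤ B) (hρ : 2 < ρ) (ht : ρ = -2 * Real.log t) :
    modelG B (modelv B t) = Real.exp (-eta0 B ρ) ∧
    invB1 (modelg B) (modelG B) (modelv B t) = eta0 B ρ * pg B ρ ∧
    invB2 (modelg B) (modelG B) (modelv B t) = bg B ρ := by
  rcases hB.eq_or_lt with rfl | h
  · exact model_one ρ t hρ ht
  · exact model_gt B ρ t h hρ ht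

lemma Fint_deriv (f : ℝ → ℝ) (s₀ : ℝ) (hf : ContDiffOn ℝ 2 f (Set.Ioi s₀))
    (hfpos : ∀ s, s₀ < s → 0 < f s)
    (hfint : ∀ s, s₀ < s → IntegrableOn (fun τ => 1 / f τ) (Set.Ioi s)) (s : ℝ) (hs : s₀ < s) :
    HasDerivAt (Fint f) (-(1 / f s)) s := by
  have hc : ContinuousOn (fun τ => 1 / f τ) (Set.Ioi s₀) :=
    continuousOn_const.div hf.continuousOn (fun x hx => (hfpos x hx).ne')
  exact hasDerivAt_Ioi_integral (fun τ => 1 / f τ) s₀ s hs hc hfint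

lemma Fint_anti (f : ℝ → ℝ) (s₀ : ℝ) (hf : ContDiffOn ℝ 2 f (Set.Ioi s₀))
    (hfpos : ∀ s, s₀ < s → 0 < f s)
    (hfint : ∀ s, s₀ < s → IntegrableOn (fun τ => 1 / f τ) (Set.Ioi s)) :
    StrictAntiOn (Fint f) (Set.Ioi s₀) := by
  apply strictAntiOn_of_deriv_neg (convex_Ioi s₀)
  · intro s hs
    exact (Fint_deriv f s₀ hf hfpos hfint s hs).continuousAt.continuousWithinAt
  · intro s hs
    rw [interior_Ioi] at hs
    rw [(Fint_deriv f s₀ hf hfpos hfint s hs).deriv]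
    have := hfpos s hs
    have : 0 < 1 / f s := by positivity
    linarith

lemma Fint_zero (f : ℝ → ℝ) (s₀ : ℝ)
    (hfint : ∀ s, s₀ < s → IntegrableOn (fun τ => 1 / f τ) (Set.Ioi s)) :
    Tendsto (Fint f) atTop (nhds 0) := by
  exact tendsto_integral_Ioi_zero tendsto_id

lemma Fint_pos (f : ℝ → ℝ) (s₀ : ℝ) (hf : ContDiffOn ℝ 2 f (Set.Ioi s₀))
    (hfpos : ∀ s, s₀ < s → 0 < f s)
    (hfint : ∀ s, s₀ < s → IntegrableOn (fun τ => 1 / f τ) (Set.Ioi s)) (s : ℝ) (hs : s₀ < s) :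
    0 < Fint f s := by
  have h := Fint_anti f s₀ hf hfpos hfint
  have hs1 : s₀ < s + 1 := by linarith
  have h1 : Fint f (s + 1) < Fint f s := h hs hs1 (by linarith)
  have h2 : 0 ≤ Fint f (s + 1) := by
    apply le_of_tendsto (Fint_zero f s₀ hfint)
    filter_upwards [eventually_gt_atTop (s + 1)] with x hx
    exact (h hs1 (show s₀ < x by linarith) hx).le
  linarith

lemma S_exists (f : ℝ → ℝ) (s₀ : ℝ) (hf : ContDiffOn ℝ 2 f (Set.Ioi s₀))
    (hfpos : ∀ s, s₀ < s → 0 < f s)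
    (hfint : ∀ s, s₀ < s → IntegrableOn (fun τ => 1 / f τ) (Set.Ioi s)) :
    ∃ (S : ℝ → ℝ) (η₁ : ℝ), Tendsto S atTop atTop ∧ ∀ η, η₁ < η →
      s₀ < S η ∧ Fint f (S η) = Real.exp (-η) ∧ HasDerivAt S (f (S η) * Real.exp (-η)) η := by
  have hd := Fint_deriv f s₀ hf hfpos hfint
  have ha := Fint_anti f s₀ hf hfpos hfint
  have h0 := Fint_zero f s₀ hfint
  have hp := Fint_pos f s₀ hf hfpos hfint
  obtain ⟨a, haa⟩ : ∃ a, a = s₀ + 1 := ⟨_, rfl⟩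
  have has : s₀ < a := by linarith
  obtain ⟨η₁, hη₁⟩ : ∃ η₁, η₁ = -Real.log (Fint f a) := ⟨_, rfl⟩
  have hFa : Fint f a = Real.exp (-η₁) := by rw [hη₁, neg_neg, Real.exp_log (hp a has)]
  have hex : ∀ η, ∃ s, η₁ < η → a < s ∧ Fint f s = Real.exp (-η) := by
    intro η
    by_cases h : η₁ < η
    · obtain ⟨b, hb1, hb2⟩ := ((h0.eventually (gt_mem_nhds (Real.exp_pos (-η)))).and
        (eventually_gt_atTop a)).exists
      have hc : ContinuousOn (Fint f) (Set.Icc a b) := fun x hx =>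
        (hd x (lt_of_lt_of_le has hx.1)).continuousAt.continuousWithinAt
      have hm : Real.exp (-η) ∈ Set.Ioo (Fint f b) (Fint f a) := by
        refine ⟨hb1, ?_⟩
        rw [hFa]; exact Real.exp_lt_exp.2 (by linarith)
      obtain ⟨s, hs, hs'⟩ := intermediate_value_Ioo' hb2.le hc hm
      exact ⟨s, fun _ => ⟨hs.1, hs'⟩⟩
    · exact ⟨0, fun h' => absurd h' h⟩
  choose S hS using hex
  have hSlog : ∀ η, η₁ < η → -Real.log (Fint f (S η)) = η := by
    intro η h; rw [(hS η h).2, Real.log_exp, neg_neg]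
  have hmono : StrictMonoOn S (Set.Ioi η₁) := by
    intro x hx y hy hxy
    by_contra hcon
    push Not at hcon
    have h1 := ha.antitoneOn (show s₀ < S y from has.trans (hS y hy).1)
      (show s₀ < S x from has.trans (hS x hx).1) hcon
    rw [(hS x hx).2, (hS y hy).2, Real.exp_le_exp] at h1
    linarith
  have himg : ∀ s, a < s → ∃ η, η₁ < η ∧ S η = s := by
    intro s hs
    have hss : s₀ < s := has.trans hs
    have hlt : η₁ < -Real.log (Fint f s) := by
      rw [hη₁]
      have := Real.log_lt_log (hp s hss) (ha has hss hs)
      linarith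
    refine ⟨-Real.log (Fint f s), hlt, ?_⟩
    apply ha.injOn (show s₀ < _ from has.trans (hS _ hlt).1) (show s₀ < s from hss)
    rw [(hS _ hlt).2, neg_neg, Real.exp_log (hp s hss)]
  refine ⟨S, η₁, ?_, ?_⟩
  · rw [tendsto_atTop]
    intro M
    obtain ⟨η, h1, h2⟩ := himg (max M a + 1) (by have := le_max_right M a; linarith)
    filter_upwards [eventually_gt_atTop η] with x hx
    have := hmono h1 (show η₁ < x by linarith) hx
    rw [h2] at this
    have := le_max_left M a
    linarith
  · intro η h
    have hs : s₀ < S η := has.trans (hS η h).1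
    refine ⟨hs, (hS η h).2, ?_⟩
    have hcont : ContinuousAt S η := by
      apply hmono.continuousAt_of_image_mem_nhds (Ioi_mem_nhds h)
      filter_upwards [Ioi_mem_nhds (hS η h).1] with s hs
      obtain ⟨η', h1, h2⟩ := himg s hs
      exact ⟨η', h1, h2⟩
    have hl : HasDerivAt (fun s => -Real.log (Fint f s)) (-(-(1 / f (S η)) / Fint f (S η))) (S η) :=
      ((hd (S η) hs).log (hp _ hs).ne').neg
    have hfp := hfpos _ hs
    have hFp := hp _ hs
    have hne : -(-(1 / f (S η)) / Fint f (S η)) ≠ 0 := by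
      have : 0 < -(-(1 / f (S η)) / Fint f (S η)) := by
        rw [neg_div, neg_neg]; positivity
      exact this.ne'
    have := HasDerivAt.of_local_left_inverse hcont hl hne (by
      filter_upwards [Ioi_mem_nhds h] with x hx
      exact hSlog x hx)
    refine this.congr_deriv ?_
    rw [← (hS η h).2]
    field_simp

lemma fside (f : ℝ → ℝ) (s₀ B : ℝ) (hf : ContDiffOn ℝ 2 f (Set.Ioi s₀))
    (hfpos : ∀ s, s₀ < s → 0 < f s)
    (hf' : ∀ s, s₀ < s → 0 < deriv f s)
    (hfint : ∀ s, s₀ < s → IntegrableOn (fun τ => 1 / f τ) (Set.Ioi s))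
    (hf2a : Tendsto (fun s => deriv f s * Fint f s) atTop (nhds 1))
    (hf2b : Tendsto (fun s => invB2 f (Fint f) s) atTop (nhds (1 / B))) :
    ∃ (S : ℝ → ℝ) (η₁ : ℝ), 0 < η₁ ∧ Tendsto S atTop atTop ∧ ∀ η, η₁ < η →
      s₀ < S η ∧ Fint f (S η) = Real.exp (-η) ∧ HasDerivAt S (f (S η) * Real.exp (-η)) η ∧
      HasDerivAt (fun η => 1 - deriv f (S η) * Real.exp (-η))
        (-(invB2 f (Fint f) (S η)) / η ^ 2) η ∧
      ContinuousAt (fun η => invB2 f (Fint f) (S η)) η ∧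
      |invB2 f (Fint f) (S η)| ≤ |1 / B| + 1 ∧ deriv f (S η) * Real.exp (-η) ≤ 2 := by
  obtain ⟨S, η₀, hSt, hS⟩ := S_exists f s₀ hf hfpos hfint
  have hb : ∀ᶠ η in atTop, |invB2 f (Fint f) (S η)| < |1 / B| + 1 :=
    ((hf2b.comp hSt).abs).eventually (gt_mem_nhds (by linarith))
  have h2 : ∀ᶠ η in atTop, deriv f (S η) * Fint f (S η) < 2 :=
    (hf2a.comp hSt).eventually (gt_mem_nhds (by norm_num))
  obtain ⟨N, hN⟩ := eventually_atTop.1 (hb.and h2)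
  have hdf : ContDiffOn ℝ 1 (deriv f) (Set.Ioi s₀) :=
    ((contDiffOn_succ_iff_deriv_of_isOpen (n := 1) isOpen_Ioi).1 (by rw [one_add_one_eq_two]; exact hf)).2.2
  have hddf : ContinuousOn (deriv (deriv f)) (Set.Ioi s₀) :=
    hdf.continuousOn_deriv_of_isOpen isOpen_Ioi le_rfl
  refine ⟨S, max (max η₀ N) 1, by positivity, hSt, ?_⟩
  intro η hη
  have hη0 : η₀ < η := lt_of_le_of_lt ((le_max_left _ _).trans (le_max_left _ _)) hη
  have hηN : N < η := lt_of_le_of_lt ((le_max_right _ _).trans (le_max_left _ _)) hη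
  have hη1 : 1 < η := lt_of_le_of_lt (le_max_right _ _) hη
  obtain ⟨hs, hF, hSd⟩ := hS η hη0
  have hnb := Ioi_mem_nhds hs
  have hd1 : HasDerivAt f (deriv f (S η)) (S η) :=
    ((hf.differentiableOn (by norm_num)).differentiableAt hnb).hasDerivAt
  have hd2 : HasDerivAt (deriv f) (deriv (deriv f) (S η)) (S η) :=
    ((hdf.differentiableOn (by norm_num)).differentiableAt hnb).hasDerivAt
  have hfp := hfpos _ hs
  have hfp' := hf' _ hs
  have hE := Real.exp_pos (-η)
  refine ⟨hs, hF, hSd, ?_, ?_, (hN η hηN.le).1.le, ?_⟩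
  · have hexp : HasDerivAt (fun η => Real.exp (-η)) (-Real.exp (-η)) η := by
      have := (hasDerivAt_neg η).exp
      simpa using this
    have := ((hd2.comp η hSd).mul hexp).const_sub 1
    refine this.congr_deriv ?_
    unfold invB2
    rw [hF, Real.log_exp]
    simp only [Function.comp]
    field_simp
    ring
  · have hc := hSd.continuousAt
    have c1 : ContinuousAt (fun η => f (S η)) η := hd1.continuousAt.comp hc
    have c2 : ContinuousAt (fun η => deriv f (S η)) η := hd2.continuousAt.comp hc
    have c3 : ContinuousAt (fun η => deriv (deriv f) (S η)) η :=
      (hddf.continuousAt hnb).comp hc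
    have c4 : ContinuousAt (fun η => Fint f (S η)) η :=
      (Fint_deriv f s₀ hf hfpos hfint _ hs).continuousAt.comp hc
    have hF0 : Fint f (S η) ≠ 0 := by rw [hF]; exact hE.ne'
    unfold invB2
    exact ((c2.mul c4).mul ((c4.log hF0).pow 2)).mul
      ((((c1.mul c3).mul c4).div c2 hfp'.ne').sub continuousAt_const)
  · rw [← hF]; exact (hN η hηN.le).2.le

lemma Rsup (R : ℝ → ℝ) (hR0 : ∀ t, 0 ≤ R t)
    (hR : Tendsto (fun t => (-Real.log t) ^ ((1 : ℝ) / 2) * R t)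
      (nhdsWithin 0 (Set.Ioi 0)) (nhds 0)) :
    ∃ ρ₁, 0 < ρ₁ ∧
      (∀ ρ, ρ₁ < ρ → ∀ t ∈ Set.Ioc (0 : ℝ) (Real.exp (-ρ / 2)),
        R t ≤ sSup (R '' Set.Ioc 0 (Real.exp (-ρ / 2)))) ∧
      (∀ ρ ρ', ρ₁ < ρ → ρ ≤ ρ' → sSup (R '' Set.Ioc 0 (Real.exp (-ρ' / 2))) ≤
        sSup (R '' Set.Ioc 0 (Real.exp (-ρ / 2)))) ∧
      Tendsto (fun ρ => Real.sqrt ρ * sSup (R '' Set.Ioc 0 (Real.exp (-ρ / 2)))) atTop (nhds 0) := by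
  have core : ∀ ε > 0, ∃ N, 0 < N ∧ ∀ ρ, N < ρ → ∀ t ∈ Set.Ioc (0 : ℝ) (Real.exp (-ρ / 2)),
      R t ≤ ε / Real.sqrt ρ := by
    intro ε hε
    have h1 := hR.eventually (gt_mem_nhds (show (0 : ℝ) < ε / 2 by linarith))
    rw [eventually_nhdsWithin_iff, Metric.eventually_nhds_iff] at h1
    obtain ⟨δ, hδ, h1⟩ := h1
    refine ⟨max 1 (-2 * Real.log δ), by positivity, ?_⟩
    intro ρ hρ t ht
    have hρ1 : 1 < ρ := lt_of_le_of_lt (le_max_left _ _) hρ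
    have hρ2 : -2 * Real.log δ < ρ := lt_of_le_of_lt (le_max_right _ _) hρ
    have ht0 : 0 < t := ht.1
    have htδ : t < δ := by
      refine lt_of_le_of_lt ht.2 ?_
      rw [← Real.lt_log_iff_exp_lt hδ]; linarith
    have h2 := h1 (y := t) (by simpa [abs_of_pos ht0] using htδ) ht0
    have hlog : ρ / 2 ≤ -Real.log t := by
      have := (Real.log_le_iff_le_exp ht0).2 ht.2
      linarith
    rw [← Real.sqrt_eq_rpow] at h2
    have hsq : Real.sqrt ρ ≤ 2 * Real.sqrt (-Real.log t) := by
      rw [Real.sqrt_le_left (by positivity), mul_pow, Real.sq_sqrt (by linarith)]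
      linarith
    rw [le_div_iff₀ (Real.sqrt_pos.2 (by linarith))]
    nlinarith [hR0 t]
  obtain ⟨N, hN0, hN⟩ := core 1 one_pos
  have hbdd : ∀ ρ, N < ρ → BddAbove (R '' Set.Ioc 0 (Real.exp (-ρ / 2))) := by
    rintro ρ hρ
    refine ⟨1 / Real.sqrt ρ, ?_⟩
    rintro _ ⟨t, ht, rfl⟩
    exact hN ρ hρ t ht
  have hne : ∀ ρ, (R '' Set.Ioc 0 (Real.exp (-ρ / 2))).Nonempty := fun ρ =>
    ⟨_, Real.exp (-ρ / 2), ⟨Real.exp_pos _, le_rfl⟩, rfl⟩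
  refine ⟨N, hN0, ?_, ?_, ?_⟩
  · intro ρ hρ t ht
    exact le_csSup (hbdd ρ hρ) ⟨t, ht, rfl⟩
  · intro ρ ρ' h1 h2
    apply csSup_le_csSup (hbdd ρ h1) (hne ρ')
    apply Set.image_mono
    apply Set.Ioc_subset_Ioc_right
    exact Real.exp_le_exp.2 (by linarith)
  · rw [Metric.tendsto_atTop]
    intro ε hε
    obtain ⟨K, hK0, hK⟩ := core (ε / 2) (by linarith)
    refine ⟨K + 1, fun ρ hρ => ?_⟩
    have h1 : sSup (R '' Set.Ioc 0 (Real.exp (-ρ / 2))) ≤ (ε / 2) / Real.sqrt ρ := by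
      apply csSup_le (hne ρ)
      rintro _ ⟨t, ht, rfl⟩
      exact hK ρ (by linarith) t ht
    have h0 : 0 ≤ sSup (R '' Set.Ioc 0 (Real.exp (-ρ / 2))) := by
      apply Real.sSup_nonneg
      rintro _ ⟨t, ht, rfl⟩
      exact hR0 t
    have hsp : 0 < Real.sqrt ρ := Real.sqrt_pos.2 (by linarith)
    rw [le_div_iff₀ hsp] at h1
    rw [Real.dist_eq, sub_zero, abs_of_nonneg (by positivity)]
    linarith

lemma contDiffOn_two_of_derivs (u u1 u2 : ℝ → ℝ) (r : ℝ)
    (h1 : ∀ t ∈ Set.Ioo 0 r, HasDerivAt u (u1 t) t)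
    (h2 : ∀ t ∈ Set.Ioo 0 r, HasDerivAt u1 (u2 t) t)
    (h3 : ContinuousOn u2 (Set.Ioo 0 r)) :
    ContDiffOn ℝ 2 u (Set.Ioo 0 r) ∧ ∀ t ∈ Set.Ioo 0 r, deriv u t = u1 t ∧ deriv (deriv u) t = u2 t := by
  have e1 : ∀ t ∈ Set.Ioo 0 r, deriv u t = u1 t := fun t ht => (h1 t ht).deriv
  have hc1 : ContDiffOn ℝ 1 u1 (Set.Ioo 0 r) := by
    rw [← zero_add (1 : WithTop ℕ∞), contDiffOn_succ_iff_deriv_of_isOpen isOpen_Ioo]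
    refine ⟨fun t ht => (h2 t ht).differentiableAt.differentiableWithinAt, by simp, ?_⟩
    rw [contDiffOn_zero]
    exact h3.congr fun t ht => (h2 t ht).deriv
  constructor
  · rw [← one_add_one_eq_two, contDiffOn_succ_iff_deriv_of_isOpen isOpen_Ioo]
    refine ⟨fun t ht => (h1 t ht).differentiableAt.differentiableWithinAt, by simp, ?_⟩
    exact hc1.congr e1
  · intro t ht
    refine ⟨e1 t ht, ?_⟩
    have : deriv u =ᶠ[nhds t] u1 := by
      filter_upwards [isOpen_Ioo.mem_nhds ht] with x hx
      exact e1 x hx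
    rw [this.deriv_eq, (h2 t ht).deriv]

lemma S_diff (f S : ℝ → ℝ) (η₁ x y : ℝ)
    (hfS : ∀ η, η₁ < η → 0 < f (S η))
    (hS : ∀ η, η₁ < η → HasDerivAt S (f (S η) * Real.exp (-η)) η)
    (hfd : ∀ η, η₁ < η → HasDerivAt f (deriv f (S η)) (S η))
    (hf0 : ∀ η, η₁ < η → 0 < deriv f (S η))
    (hf2 : ∀ η, η₁ < η → deriv f (S η) * Real.exp (-η) ≤ 2)
    (hx : η₁ < x) (hy : η₁ < y) (hxy : |y - x| ≤ 1) :
    |S y - S x| ≤ Real.exp 1 * (f (S x) * Real.exp (-x)) * |y - x| := by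
  have hfSd : ∀ η, η₁ < η → HasDerivAt (fun η => f (S η))
      (deriv f (S η) * (f (S η) * Real.exp (-η))) η := fun η hη => (hfd η hη).comp η (hS η hη)
  have hmono : MonotoneOn (fun η => f (S η)) (Set.Ioi η₁) := by
    apply monotoneOn_of_deriv_nonneg (convex_Ioi η₁)
    · exact fun η hη => (hfSd η hη).continuousAt.continuousWithinAt
    · rw [interior_Ioi]
      exact fun η hη => (hfSd η hη).differentiableAt.differentiableWithinAt
    · rw [interior_Ioi]
      intro η hη
      rw [(hfSd η hη).deriv]
      have := hfS η hη
      have := hf0 η hη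
      positivity
  have hed : ∀ η, HasDerivAt (fun η => Real.exp (-2 * η)) (Real.exp (-2 * η) * (-2)) η := by
    intro η
    have := ((hasDerivAt_id η).const_mul (-2)).exp
    simpa using this
  have hanti : AntitoneOn (fun η => f (S η) * Real.exp (-2 * η)) (Set.Ioi η₁) := by
    have hd : ∀ η, η₁ < η → HasDerivAt (fun η => f (S η) * Real.exp (-2 * η)) _ η := fun η hη =>
      (hfSd η hη).mul (hed η)
    apply antitoneOn_of_deriv_nonpos (convex_Ioi η₁)
    · exact fun η hη => (hd η hη).continuousAt.continuousWithinAt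
    · rw [interior_Ioi]
      exact fun η hη => (hd η hη).differentiableAt.differentiableWithinAt
    · rw [interior_Ioi]
      intro η hη
      rw [(hd η hη).deriv]
      have h1 := hfS η hη
      have h2 := hf2 η hη
      have h3 : 0 < f (S η) * Real.exp (-2 * η) := by positivity
      nlinarith
  have hbound : ∀ z ∈ Set.uIcc x y, η₁ < z ∧
      ‖f (S z) * Real.exp (-z)‖ ≤ Real.exp 1 * (f (S x) * Real.exp (-x)) := by
    intro z hz
    have hz1 : η₁ < z := by
      rcases le_total x y with h | h
      · rw [Set.uIcc_of_le h] at hz; linarith [hz.1]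
      · rw [Set.uIcc_of_ge h] at hz; linarith [hz.1]
    have hzx : |z - x| ≤ 1 := (Set.abs_sub_left_of_mem_uIcc hz).trans hxy
    refine ⟨hz1, ?_⟩
    have hfz := hfS z hz1
    have hfx := hfS x hx
    rw [Real.norm_of_nonneg (by positivity)]
    rw [abs_le] at hzx
    rcases le_total x z with h | h
    · have h1 := hanti hx hz1 h
      simp only at h1
      have e1 : f (S z) * Real.exp (-z) = f (S z) * Real.exp (-2 * z) * Real.exp z := by
        rw [mul_assoc, ← Real.exp_add]; ring_nf
      have e2 : Real.exp 1 * (f (S x) * Real.exp (-x))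
          = f (S x) * Real.exp (-2 * x) * Real.exp (x + 1) := by
        rw [mul_assoc (f (S x)) , ← Real.exp_add]
        rw [mul_left_comm, ← Real.exp_add]; ring_nf
      rw [e1, e2]
      exact mul_le_mul h1 (Real.exp_le_exp.2 (by linarith)) (Real.exp_pos _).le (by positivity)
    · have h1 := hmono hz1 hx h
      simp only at h1
      rw [mul_left_comm, ← Real.exp_add]
      exact mul_le_mul h1 (Real.exp_le_exp.2 (by linarith)) (Real.exp_pos _).le (by positivity)
  have := (convex_uIcc x y).norm_image_sub_le_of_norm_hasDerivWithin_le
    (fun z hz => (hS z (hbound z hz).1).hasDerivWithinAt) (fun z hz => (hbound z hz).2)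
    Set.left_mem_uIcc Set.right_mem_uIcc
  simpa [Real.norm_eq_abs] using this

lemma u_solves (f S H M : ℝ → ℝ) (s₀ η₁ ρ₃ : ℝ)
    (hfc : ContinuousOn f (Set.Ioi s₀))
    (hfd : ∀ s, s₀ < s → HasDerivAt f (deriv f s) s)
    (hs : ∀ η, η₁ < η → s₀ < S η)
    (hS : ∀ η, η₁ < η → HasDerivAt S (f (S η) * Real.exp (-η)) η)
    (hH1 : ∀ ρ, ρ₃ < ρ → η₁ < H ρ)
    (hH : ∀ ρ, ρ₃ < ρ → HasDerivAt H (M ρ) ρ)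
    (hM : ∀ ρ, ρ₃ < ρ → HasDerivAt M ((1 - deriv f (S (H ρ)) * Real.exp (-H ρ)) * M ρ ^ 2
      - Real.exp (H ρ - ρ) / 4) ρ) :
    ContDiffOn ℝ 2 (fun t => S (H (-2 * Real.log t))) (Set.Ioo 0 (Real.exp (-ρ₃ / 2))) ∧
    ∀ t ∈ Set.Ioo (0 : ℝ) (Real.exp (-ρ₃ / 2)),
      deriv (deriv (fun t => S (H (-2 * Real.log t)))) t
        + deriv (fun t => S (H (-2 * Real.log t))) t / t + f (S (H (-2 * Real.log t))) = 0 := by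
  obtain ⟨u, hu⟩ : ∃ u : ℝ → ℝ, u = fun t => S (H (-2 * Real.log t)) := ⟨_, rfl⟩
  obtain ⟨u1, hu1⟩ : ∃ u1 : ℝ → ℝ, u1 = fun t => f (S (H (-2 * Real.log t))) *
    Real.exp (-H (-2 * Real.log t)) * M (-2 * Real.log t) * (-2 / t) := ⟨_, rfl⟩
  have hρ : ∀ t ∈ Set.Ioo (0 : ℝ) (Real.exp (-ρ₃ / 2)), ρ₃ < -2 * Real.log t := by
    intro t ht
    have := (Real.log_lt_iff_lt_exp ht.1).2 ht.2
    linarith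
  have hl : ∀ t ∈ Set.Ioo (0 : ℝ) (Real.exp (-ρ₃ / 2)),
      HasDerivAt (fun t => -2 * Real.log t) (-2 / t) t := by
    intro t ht
    have := (Real.hasDerivAt_log ht.1.ne').const_mul (-2)
    exact this.congr_deriv (by ring)
  have hHt : ∀ t ∈ Set.Ioo (0 : ℝ) (Real.exp (-ρ₃ / 2)),
      HasDerivAt (fun t => H (-2 * Real.log t)) (M (-2 * Real.log t) * (-2 / t)) t :=
    fun t ht => (hH _ (hρ t ht)).comp t (hl t ht)
  have h1 : ∀ t ∈ Set.Ioo (0 : ℝ) (Real.exp (-ρ₃ / 2)), HasDerivAt u (u1 t) t := by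
    intro t ht
    rw [hu, hu1]
    have := (hS _ (hH1 _ (hρ t ht))).comp t (hHt t ht)
    exact this.congr_deriv (by ring)
  have h2 : ∀ t ∈ Set.Ioo (0 : ℝ) (Real.exp (-ρ₃ / 2)),
      HasDerivAt u1 (-(u1 t / t) - f (u t)) t := by
    intro t ht
    have ht0 := ht.1
    have hq := hρ t ht
    have hfS : HasDerivAt (fun t => f (S (H (-2 * Real.log t)))) _ t :=
      (hfd _ (hs _ (hH1 _ hq))).comp t ((hS _ (hH1 _ hq)).comp t (hHt t ht))
    have hE : HasDerivAt (fun t => Real.exp (-H (-2 * Real.log t))) _ t := (hHt t ht).neg.exp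
    have hMt : HasDerivAt (fun t => M (-2 * Real.log t)) _ t := (hM _ hq).comp t (hl t ht)
    have hinv : HasDerivAt (fun t : ℝ => -2 / t) (2 / t ^ 2) t := by
      have := (hasDerivAt_inv ht0.ne').const_mul (-2)
      exact this.congr_deriv (by ring)
    have := ((hfS.mul hE).mul hMt).mul hinv
    have he : Real.exp (H (-2 * Real.log t) - -2 * Real.log t)
        = Real.exp (H (-2 * Real.log t)) * t ^ 2 := by
      rw [sub_eq_add_neg, Real.exp_add]
      congr 1
      rw [show -(-2 * Real.log t) = Real.log t + Real.log t by ring, Real.exp_add, Real.exp_log ht0]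
      ring
    rw [he] at this
    have hee : Real.exp (-H (-2 * Real.log t)) * Real.exp (H (-2 * Real.log t)) = 1 := by
      rw [← Real.exp_add]; simp
    rw [hu1, hu] at *
    refine this.congr_deriv ?_
    simp only [Pi.mul_apply, Pi.neg_apply]
    generalize H (-2 * Real.log t) = η at *
    generalize M (-2 * Real.log t) = m at *
    generalize Real.exp η = X at *
    generalize Real.exp (-η) = Y at *
    have hX : X = 1 / Y := by
      have hY : Y ≠ 0 := by rintro rfl; simp at hee
      field_simp; linarith
    have hY : Y ≠ 0 := by rintro rfl; simp at hee
    subst hX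
    field_simp
    ring
  have h3 : ContinuousOn (fun t => -(u1 t / t) - f (u t)) (Set.Ioo 0 (Real.exp (-ρ₃ / 2))) := by
    intro t ht
    have hsS : s₀ < u t := by rw [hu]; exact hs _ (hH1 _ (hρ t ht))
    have c1 : ContinuousAt (fun t => f (u t)) t :=
      ContinuousAt.comp (g := f) (hfd _ hsS).continuousAt (h1 t ht).continuousAt
    exact ((((h2 t ht).continuousAt.div continuousAt_id ht.1.ne').neg).sub c1).continuousWithinAt
  obtain ⟨hA, hB⟩ := contDiffOn_two_of_derivs u u1 _ _ h1 h2 h3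
  rw [← hu]
  refine ⟨hA, fun t ht => ?_⟩
  obtain ⟨e1, e2⟩ := hB t ht
  rw [e1, e2]
  have : u t = S (H (-2 * Real.log t)) := by rw [hu]
  rw [this]
  ring

noncomputable def Pfun (f S : ℝ → ℝ) (η : ℝ) : ℝ := 1 - deriv f (S η) * Real.exp (-η)

/-- Theorem 1.2: under (f1), (f2) and assumption (1.1a), the radial equation
`u'' + u'/t + f(u) = 0` has a singular solution near the origin which is
approximated by `ũ` up to `O(f(ũ)F(ũ) sup (R₁+R₂))`. -/
theorem stmt3 (f ut : ℝ → ℝ) (s₀ B t₁ : ℝ) (hs₀ : 0 < s₀)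
    (hf : ContDiffOn ℝ 2 f (Set.Ioi s₀))
    (hfpos : ∀ s, s₀ < s → 0 < f s)
    (hf' : ∀ s, s₀ < s → 0 < deriv f s)
    (hfint : ∀ s, s₀ < s → IntegrableOn (fun τ => 1 / f τ) (Set.Ioi s))
    (hB : 1 ≤ B)
    (hf2a : Tendsto (fun s => deriv f s * Fint f s) atTop (nhds 1))
    (hf2b : Tendsto (fun s => invB2 f (Fint f) s) atTop (nhds (1 / B)))
    (ht₁ : t₁ ∈ Set.Ioo (0 : ℝ) 1)
    (hut : ∀ t ∈ Set.Ioo (0 : ℝ) t₁, s₀ < ut t ∧ Fint f (ut t) = modelG B (modelv B t))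
    (h11a : Tendsto (fun t => (-Real.log t) ^ ((1 : ℝ) / 2) * (R1 f ut B t + R2 f ut B t))
      (nhdsWithin 0 (Set.Ioi 0)) (nhds 0)) :
    ∃ r₀ ∈ Set.Ioo (0 : ℝ) 1, ∃ C > (0 : ℝ), ∃ u : ℝ → ℝ,
      ContDiffOn ℝ 2 u (Set.Ioo 0 r₀) ∧
      (∀ t ∈ Set.Ioo (0 : ℝ) r₀, deriv (deriv u) t + deriv u t / t + f (u t) = 0) ∧
      Tendsto u (nhdsWithin 0 (Set.Ioi 0)) atTop ∧
      ∀ t ∈ Set.Ioo (0 : ℝ) r₀,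
        |u t - ut t| ≤ C * f (ut t) * Fint f (ut t) *
          sSup ((fun s => R1 f ut B s + R2 f ut B s) '' Set.Ioc 0 t) := by
  obtain ⟨S, η₁, hη₁, hSt, hSall⟩ := fside f s₀ B hf hfpos hf' hfint hf2a hf2b
  have hinj := (Fint_anti f s₀ hf hfpos hfint).injOn
  obtain ⟨R, hRdef⟩ : ∃ R : ℝ → ℝ, R = fun s => R1 f ut B s + R2 f ut B s := ⟨_, rfl⟩
  have hR0 : ∀ t, 0 ≤ R t := fun t => by
    rw [hRdef]; exact add_nonneg (abs_nonneg _) (abs_nonneg _)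
  have hRl : Tendsto (fun t => (-Real.log t) ^ ((1 : ℝ) / 2) * R t)
      (nhdsWithin 0 (Set.Ioi 0)) (nhds 0) := by rw [hRdef]; exact h11a
  obtain ⟨ρa, hρa, hRle, hRanti, hRlim⟩ := Rsup R hR0 hRl
  obtain ⟨N, hN⟩ := eventually_atTop.1 (eta0_ge B)
  obtain ⟨ρ₁, hr1, hr2, hr3, hr4, hr5⟩ : ∃ ρ₁, ρa ≤ ρ₁ ∧ 2 ≤ ρ₁ ∧ N ≤ ρ₁ ∧ 2 * η₁ + 2 ≤ ρ₁ ∧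
      -2 * Real.log t₁ ≤ ρ₁ := by
    obtain ⟨x, hx⟩ := ((eventually_ge_atTop ρa).and ((eventually_ge_atTop 2).and
      ((eventually_ge_atTop N).and ((eventually_ge_atTop (2 * η₁ + 2)).and
        (eventually_ge_atTop (-2 * Real.log t₁)))))).exists
    exact ⟨x, hx⟩
  have heta : ∀ ρ, ρ₁ < ρ → η₁ + 1 < eta0 B ρ := by
    intro ρ h
    have := hN ρ (by linarith)
    linarith
  have key : ∀ ρ t, ρ₁ < ρ → 0 < t → ρ = -2 * Real.log t → ut t = S (eta0 B ρ) ∧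
      R1 f ut B t = |Pfun f S (eta0 B ρ) - pg B ρ| * eta0 B ρ ∧
      R2 f ut B t = |invB2 f (Fint f) (S (eta0 B ρ)) - bg B ρ| := by
    intro ρ t h ht0 ht
    obtain ⟨m1, m2, m3⟩ := model_all B ρ t hB (by linarith) ht
    have htt : t < t₁ := by
      have : Real.log t < Real.log t₁ := by linarith
      exact (Real.log_lt_log_iff ht0 ht₁.1).1 this
    obtain ⟨hu1, hu2⟩ := hut t ⟨ht0, htt⟩
    have he := heta ρ h
    obtain ⟨hs1, hs2, -⟩ := hSall (eta0 B ρ) (by linarith)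
    have hu : ut t = S (eta0 B ρ) := hinj hu1 hs1 (by rw [hu2, m1, hs2])
    refine ⟨hu, ?_, ?_⟩
    · unfold R1
      rw [m2, hu]
      unfold invB1 Pfun
      rw [hs2, Real.log_exp]
      have hab : |eta0 B ρ| = eta0 B ρ := abs_of_pos (by linarith)
      have hgen : ∀ x y : ℝ, |x - y| * eta0 B ρ = |(x - y) * eta0 B ρ| := fun x y => by
        rw [abs_mul, hab]
      rw [hgen]
      congr 1
      ring
    · unfold R2
      rw [m3, hu]
  have hρt : ∀ ρ : ℝ, ρ = -2 * Real.log (Real.exp (-ρ / 2)) := by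
    intro ρ; rw [Real.log_exp]; ring
  obtain ⟨ρ₂, C, hC, θ, μ, hmain⟩ := ode_main B hB (Pfun f S) (fun η => invB2 f (Fint f) (S η))
    (fun ρ => sSup (R '' Set.Ioc 0 (Real.exp (-ρ / 2)))) η₁ (|1 / B| + 1) ρ₁
    (fun η hη => (hSall η hη).2.2.2.1) (fun η hη => (hSall η hη).2.2.2.2.1)
    (fun η hη => (hSall η hη).2.2.2.2.2.1)
    (by
      intro ρ hρ
      obtain ⟨-, k2, -⟩ := key ρ _ hρ (Real.exp_pos (-ρ / 2)) (hρt ρ)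
      rw [← k2]
      refine le_trans ?_ (hRle ρ (by linarith) (Real.exp (-ρ / 2)) ⟨Real.exp_pos _, le_rfl⟩)
      rw [hRdef]
      exact le_add_of_nonneg_right (abs_nonneg _))
    (by
      intro ρ hρ
      obtain ⟨-, -, k3⟩ := key ρ _ hρ (Real.exp_pos (-ρ / 2)) (hρt ρ)
      rw [← k3]
      refine le_trans ?_ (hRle ρ (by linarith) (Real.exp (-ρ / 2)) ⟨Real.exp_pos _, le_rfl⟩)
      rw [hRdef]
      exact le_add_of_nonneg_left (abs_nonneg _))
    (fun ρ ρ' h h' => hRanti ρ ρ' (by linarith) h') hRlim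
  obtain ⟨K, hK⟩ := eventually_atTop.1
    (hRlim.eventually (gt_mem_nhds (show (0 : ℝ) < 1 / C by positivity)))
  obtain ⟨ρ₃, q1, q2, q3⟩ : ∃ ρ₃, ρ₁ ≤ ρ₃ ∧ ρ₂ ≤ ρ₃ ∧ K ≤ ρ₃ := by
    obtain ⟨x, hx⟩ := ((eventually_ge_atTop ρ₁).and ((eventually_ge_atTop ρ₂).and
      (eventually_ge_atTop K))).exists
    exact ⟨x, hx⟩
  have hθ1 : ∀ ρ, ρ₃ < ρ → |θ ρ| ≤ 1 := by
    intro ρ hρ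
    have h1 := hK ρ (by linarith)
    have h2 := (hmain ρ (by linarith)).2.2
    have h3 : 1 ≤ Real.sqrt ρ := by
      rw [Real.one_le_sqrt]; linarith
    have h4 : 0 ≤ sSup (R '' Set.Ioc 0 (Real.exp (-ρ / 2))) := by
      apply Real.sSup_nonneg
      rintro _ ⟨t, ht, rfl⟩
      exact hR0 t
    rw [lt_div_iff₀ hC] at h1
    nlinarith [mul_nonneg h4 (sub_nonneg.2 h3)]
  have hHη : ∀ ρ, ρ₃ < ρ → η₁ < eta0 B ρ + θ ρ := by
    intro ρ hρ
    have h1 := hθ1 ρ hρ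
    rw [abs_le] at h1
    have := heta ρ (by linarith)
    linarith [h1.1]
  have hfd : ∀ s, s₀ < s → HasDerivAt f (deriv f s) s := fun s hs =>
    ((hf.differentiableOn (by norm_num)).differentiableAt (Ioi_mem_nhds hs)).hasDerivAt
  obtain ⟨hcd, hsol⟩ := u_solves f S (fun ρ => eta0 B ρ + θ ρ) (fun ρ => m0 ρ + μ ρ) s₀ η₁ ρ₃
    hf.continuousOn hfd (fun η hη => (hSall η hη).1) (fun η hη => (hSall η hη).2.2.1) hHη
    (fun ρ hρ => (eta0_deriv B ρ (by linarith)).add (hmain ρ (by linarith)).1)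
    (by
      intro ρ hρ
      have hρ0 : 0 < ρ := by linarith
      have hm0 : HasDerivAt m0 (1 / (ρ + 1) ^ 2) ρ := by
        have := (hasDerivAt_id ρ).div ((hasDerivAt_id ρ).add_const 1) (by simp; positivity)
        refine HasDerivAt.congr_deriv this ?_
        simp
      have := hm0.add (hmain ρ (by linarith)).2.1
      refine HasDerivAt.congr_deriv this ?_
      have hB0 : 0 < B := by linarith
      have he : Real.exp (eta0 B ρ + θ ρ - ρ) = 4 / (B * (ρ + 1)) * Real.exp (θ ρ) := by
        have h1 := eta0_exp B ρ hB hρ0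
        have h2 : Real.exp (eta0 B ρ + θ ρ - ρ)
            = Real.exp (θ ρ) * Real.exp (-ρ) / Real.exp (-eta0 B ρ) := by
          rw [← Real.exp_add, ← Real.exp_sub]; ring_nf
        rw [h2, h1]
        have := Real.exp_pos (-ρ)
        field_simp
      simp only [Pfun]
      rw [he]
      unfold m0 pg
      field_simp
      ring)
  refine ⟨Real.exp (-ρ₃ / 2), ⟨Real.exp_pos _, by rw [Real.exp_lt_one_iff]; linarith⟩,
    Real.exp 1 * C, by positivity, _, hcd, hsol, ?_, ?_⟩
  · have hl : Tendsto (fun t => -2 * Real.log t) (nhdsWithin 0 (Set.Ioi 0)) atTop :=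
      Real.tendsto_log_nhdsGT_zero.const_mul_atBot_of_neg (by norm_num)
    have hHt : Tendsto (fun ρ => eta0 B ρ + θ ρ) atTop atTop := by
      have h1 : Tendsto (fun ρ : ℝ => ρ / 2 - 1) atTop atTop :=
        tendsto_atTop_add_const_right _ _ (tendsto_id.atTop_div_const (by norm_num))
      refine tendsto_atTop_mono' _ ?_ h1
      filter_upwards [eventually_gt_atTop ρ₃] with ρ hρ
      have h2 := hθ1 ρ hρ
      rw [abs_le] at h2
      have h3 := hN ρ (by linarith)
      linarith [h2.1]
    exact hSt.comp (hHt.comp hl)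
  · intro t ht
    have hρ : ρ₃ < -2 * Real.log t := by
      have := (Real.log_lt_iff_lt_exp ht.1).2 ht.2
      linarith
    obtain ⟨ρ, hρd⟩ : ∃ ρ, ρ = -2 * Real.log t := ⟨_, rfl⟩
    rw [← hρd] at hρ
    obtain ⟨k1, -, -⟩ := key ρ t (by linarith) ht.1 hρd
    have he := heta ρ (by linarith)
    have hd := S_diff f S η₁ (eta0 B ρ) (eta0 B ρ + θ ρ)
      (fun η hη => hfpos _ (hSall η hη).1) (fun η hη => (hSall η hη).2.2.1)
      (fun η hη => hfd _ (hSall η hη).1) (fun η hη => hf' _ (hSall η hη).1)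
      (fun η hη => (hSall η hη).2.2.2.2.2.2) (by linarith) (hHη ρ hρ)
      (by rw [add_sub_cancel_left]; exact hθ1 ρ hρ)
    rw [add_sub_cancel_left] at hd
    obtain ⟨hs1, hs2, -⟩ := hSall (eta0 B ρ) (by linarith)
    have hth := (hmain ρ (by linarith)).2.2
    have hte : Real.exp (-ρ / 2) = t := by
      rw [hρd, show -(-2 * Real.log t) / 2 = Real.log t by ring, Real.exp_log ht.1]
    rw [hte] at hth
    rw [← hRdef, ← hρd, k1, hs2]
    have hfp := hfpos _ hs1
    calc |S (eta0 B ρ + θ ρ) - S (eta0 B ρ)|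
        ≤ Real.exp 1 * (f (S (eta0 B ρ)) * Real.exp (-eta0 B ρ)) * |θ ρ| := hd
      _ ≤ Real.exp 1 * (f (S (eta0 B ρ)) * Real.exp (-eta0 B ρ)) *
          (C * sSup (R '' Set.Ioc 0 t)) := by
          apply mul_le_mul_of_nonneg_left hth
          positivity
      _ = _ := by ring
end

section
/- Let q > 1 and r ∈ ℝ. Then there exist r₀ ∈ (0,1), C > 0, and a twice continuously differentiable positive function u : (0,r₀) → ℝ such that u''(t) + u'(t)/t + u(t)^r · e^{u(t)^q} = 0 for all t ∈ (0,r₀), u(t) → ∞ as t → 0⁺, and for all t ∈ (0,r₀): | u(t) − ( −2 log t − ((2q+r−1)/q)·log(−2 log t) + log(4(q−1)/q²) )^{1/q} | ≤ C · log(−log t) / (−log t)^{2 − 1/q}. -/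
open Filter

open MeasureTheory Set in
lemma tail_hasDerivAt (ψ : ℝ → ℝ) (hc : Continuous ψ) (hi : ∀ x, IntegrableOn ψ (Ioi x)) (x : ℝ) :
    HasDerivAt (fun x => ∫ t in Ioi x, ψ t) (-ψ x) x := by
  have h1 : (fun x => ∫ t in Ioi x, ψ t) = fun x => (∫ t in Ioi (0:ℝ), ψ t) - ∫ t in (0:ℝ)..x, ψ t := by
    funext y
    rw [← intervalIntegral.integral_Ioi_sub_Ioi' (hi 0) (hi y)]
    ring
  rw [h1]
  have h2 : HasDerivAt (fun x => ∫ t in (0:ℝ)..x, ψ t) (ψ x) x :=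
    intervalIntegral.integral_hasDerivAt_right (hc.intervalIntegrable _ _)
      hc.aestronglyMeasurable.stronglyMeasurableAtFilter hc.continuousAt
  simpa using h2.const_sub (∫ t in Ioi (0:ℝ), ψ t)

open MeasureTheory Set in
lemma tail_integrable (β C X : ℝ) (hβ : 1 < β) (hX : 1 ≤ X) (ψ : ℝ → ℝ) (hc : Continuous ψ)
    (hb : ∀ t, |ψ t| ≤ C * (max t X) ^ (-β)) (x : ℝ) : IntegrableOn ψ (Ioi x) := by
  have h1 : IntegrableOn ψ (Ioi X) := by
    have := (integrableOn_Ioi_rpow_of_lt (a := -β) (c := X) (by linarith) (by linarith)).const_mul C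
    refine Integrable.mono' this hc.aestronglyMeasurable ?_
    filter_upwards [ae_restrict_mem measurableSet_Ioi] with t ht
    have := hb t
    rwa [max_eq_left (le_of_lt ht)] at this
  have h2 : IntegrableOn ψ (Icc x X) := hc.continuousOn.integrableOn_Icc
  refine (h2.union h1).mono_set ?_
  intro t ht
  by_cases h : t ≤ X
  · exact Or.inl ⟨le_of_lt ht, h⟩
  · exact Or.inr (lt_of_not_ge h)

open MeasureTheory Set in
lemma tail_bound (β C X : ℝ) (hβ : 1 < β) (hX : 1 ≤ X) (ψ : ℝ → ℝ)
    (hb : ∀ t, |ψ t| ≤ C * (max t X) ^ (-β)) (x : ℝ) (hx : X ≤ x) :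
    |∫ t in Ioi x, ψ t| ≤ C * x ^ (1 - β) / (β - 1) := by
  have h0 : IntegrableOn (fun t : ℝ => C * t ^ (-β)) (Ioi x) :=
    (integrableOn_Ioi_rpow_of_lt (a := -β) (c := x) (by linarith) (by linarith)).const_mul C
  have h1 : ‖∫ t in Ioi x, ψ t‖ ≤ ∫ t in Ioi x, C * t ^ (-β) := by
    refine norm_integral_le_of_norm_le h0 ?_
    filter_upwards [ae_restrict_mem measurableSet_Ioi] with t ht
    have := hb t
    rwa [max_eq_left (hx.trans (le_of_lt ht))] at this
  rw [integral_const_mul, integral_Ioi_rpow_of_lt (by linarith) (by linarith)] at h1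
  refine h1.trans (le_of_eq ?_)
  have e1 : -β + 1 = 1 - β := by ring
  rw [e1]
  have : β - 1 ≠ 0 := by linarith
  have : 1 - β ≠ 0 := by linarith
  field_simp
  ring

/-- The decaying solution of `v'' + ω² v = φ`. -/
noncomputable def vsol (ω : ℝ) (φ : ℝ → ℝ) (x : ℝ) : ℝ :=
  (1 / ω) * (Real.cos (ω * x) * (∫ t in Set.Ioi x, Real.sin (ω * t) * φ t)
    - Real.sin (ω * x) * (∫ t in Set.Ioi x, Real.cos (ω * t) * φ t))

noncomputable def vsol1 (ω : ℝ) (φ : ℝ → ℝ) (x : ℝ) : ℝ :=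
  -(Real.sin (ω * x) * (∫ t in Set.Ioi x, Real.sin (ω * t) * φ t)
    + Real.cos (ω * x) * (∫ t in Set.Ioi x, Real.cos (ω * t) * φ t))

lemma sin_bd (ω β C X : ℝ) (φ : ℝ → ℝ) (hb : ∀ t, |φ t| ≤ C * (max t X) ^ (-β)) (t : ℝ) :
    |Real.sin (ω * t) * φ t| ≤ C * (max t X) ^ (-β) := by
  rw [abs_mul]
  refine le_trans ?_ (hb t)
  have := Real.abs_sin_le_one (ω * t)
  exact mul_le_of_le_one_left (abs_nonneg _) this

lemma cos_bd (ω β C X : ℝ) (φ : ℝ → ℝ) (hb : ∀ t, |φ t| ≤ C * (max t X) ^ (-β)) (t : ℝ) :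
    |Real.cos (ω * t) * φ t| ≤ C * (max t X) ^ (-β) := by
  rw [abs_mul]
  refine le_trans ?_ (hb t)
  have := Real.abs_cos_le_one (ω * t)
  exact mul_le_of_le_one_left (abs_nonneg _) this

lemma vsol_deriv (ω β C X : ℝ) (hω : 0 < ω) (hβ : 1 < β) (hX : 1 ≤ X) (φ : ℝ → ℝ)
    (hc : Continuous φ) (hb : ∀ t, |φ t| ≤ C * (max t X) ^ (-β)) (x : ℝ) :
    HasDerivAt (vsol ω φ) (vsol1 ω φ x) x ∧
      HasDerivAt (vsol1 ω φ) (φ x - ω ^ 2 * vsol ω φ x) x := by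
  have hs := tail_hasDerivAt (fun t => Real.sin (ω * t) * φ t) (by fun_prop)
    (tail_integrable β C X hβ hX _ (by fun_prop) (sin_bd ω β C X φ hb)) x
  have hcs := tail_hasDerivAt (fun t => Real.cos (ω * t) * φ t) (by fun_prop)
    (tail_integrable β C X hβ hX _ (by fun_prop) (cos_bd ω β C X φ hb)) x
  have hl : HasDerivAt (fun x : ℝ => ω * x) ω x := by simpa using (hasDerivAt_id x).const_mul ω
  have d1 := hl.cos
  have d2 := hl.sin
  have hsc := Real.sin_sq_add_cos_sq (ω * x)
  constructor
  · refine (((d1.mul hs).sub (d2.mul hcs)).const_mul (1 / ω)).congr_deriv ?_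
    simp only [vsol1]
    field_simp
    ring
  · refine (((d2.mul hs).add (d1.mul hcs)).neg).congr_deriv ?_
    simp only [vsol]
    field_simp
    linear_combination (φ x) * hsc

lemma vsol_bound (ω β C X : ℝ) (hω : 0 < ω) (hβ : 1 < β) (hX : 1 ≤ X) (φ : ℝ → ℝ)
    (hb : ∀ t, |φ t| ≤ C * (max t X) ^ (-β)) (x : ℝ) (hx : X ≤ x) :
    |vsol ω φ x| ≤ 2 * C / (ω * (β - 1)) * x ^ (1 - β) := by
  have hs := tail_bound β C X hβ hX _ (sin_bd ω β C X φ hb) x hx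
  have hcs := tail_bound β C X hβ hX _ (cos_bd ω β C X φ hb) x hx
  have h1 := Real.abs_cos_le_one (ω * x)
  have h2 := Real.abs_sin_le_one (ω * x)
  unfold vsol
  rw [abs_mul, abs_of_pos (by positivity : 0 < 1 / ω)]
  have : |Real.cos (ω * x) * (∫ t in Set.Ioi x, Real.sin (ω * t) * φ t)
    - Real.sin (ω * x) * (∫ t in Set.Ioi x, Real.cos (ω * t) * φ t)| ≤
      2 * (C * x ^ (1 - β) / (β - 1)) := by
    refine (abs_sub _ _).trans ?_
    rw [abs_mul, abs_mul]
    have e1 := (mul_le_of_le_one_left (abs_nonneg _) h1).trans hs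
    have e2 := (mul_le_of_le_one_left (abs_nonneg _) h2).trans hcs
    linarith
  calc _ ≤ 1 / ω * (2 * (C * x ^ (1 - β) / (β - 1))) := by gcongr
    _ = _ := by
      have : β - 1 ≠ 0 := by linarith
      field_simp

open MeasureTheory Set in
lemma vsol_sub (ω β C X : ℝ) (hβ : 1 < β) (hX : 1 ≤ X) (φ χ : ℝ → ℝ)
    (hc : Continuous φ) (hc' : Continuous χ) (hb : ∀ t, |φ t| ≤ C * (max t X) ^ (-β))
    (hb' : ∀ t, |χ t| ≤ C * (max t X) ^ (-β)) (x : ℝ) :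
    vsol ω φ x - vsol ω χ x = vsol ω (fun t => φ t - χ t) x := by
  have a1 := (tail_integrable β C X hβ hX _ (by fun_prop) (sin_bd ω β C X φ hb)) x
  have a2 := (tail_integrable β C X hβ hX _ (by fun_prop) (cos_bd ω β C X φ hb)) x
  have a3 := (tail_integrable β C X hβ hX _ (by fun_prop) (sin_bd ω β C X χ hb')) x
  have a4 := (tail_integrable β C X hβ hX _ (by fun_prop) (cos_bd ω β C X χ hb')) x
  unfold vsol
  simp only [mul_sub]
  rw [integral_sub a1 a3, integral_sub a2 a4]
  ring

/-- truncation to `[-1,1]` -/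
noncomputable def clampR (b : ℝ) : ℝ := max (-1) (min 1 b)

lemma clampR_mem (b : ℝ) : clampR b ∈ Set.Icc (-1 : ℝ) 1 :=
  ⟨le_max_left _ _, max_le (by norm_num) (min_le_left _ _)⟩

lemma clampR_lip (b c : ℝ) : |clampR b - clampR c| ≤ |b - c| := by
  unfold clampR
  rcases le_total 1 b with h | h <;> rcases le_total 1 c with h' | h' <;>
    simp only [min_eq_left, min_eq_right, h, h'] <;>
    rcases max_cases (-1) b with ⟨h2, _⟩ | ⟨h2, _⟩ <;>
    rcases max_cases (-1) c with ⟨h3, _⟩ | ⟨h3, _⟩ <;>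
    rcases max_cases (-1 : ℝ) 1 with ⟨h4, _⟩ | ⟨h4, _⟩ <;>
    rcases abs_cases (b - c) with h1 | h1 <;> simp only [h2, h3, h4] <;>
    rw [abs_le] <;> constructor <;> linarith

lemma clampR_eq (b : ℝ) (h : |b| ≤ 1) : clampR b = b := by
  rw [abs_le] at h
  unfold clampR
  rw [min_eq_right h.2, max_eq_right h.1]

lemma clampR_cont : Continuous clampR := by unfold clampR; fun_prop

open Set BoundedContinuousFunction in
theorem ode_fixed (ω β C X : ℝ) (hω : 0 < ω) (hβ : 1 < β) (hX : 1 ≤ X) (hC : 0 ≤ C)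
    (F : ℝ → ℝ → ℝ)
    (hcont : ContinuousOn (fun z : ℝ × ℝ => F z.1 z.2) (Ici X ×ˢ Icc (-1) 1))
    (hbd : ∀ t ≥ X, ∀ b ∈ Icc (-1 : ℝ) 1, |F t b| ≤ C * t ^ (-β))
    (hlip : ∀ t ≥ X, ∀ b ∈ Icc (-1 : ℝ) 1, ∀ c ∈ Icc (-1 : ℝ) 1,
      |F t b - F t c| ≤ C * t ^ (-β) * |b - c|)
    (hsmall : 2 * C / (ω * (β - 1)) ≤ X / 2) :
    ∃ v v1 : ℝ → ℝ, ∀ x > X, HasDerivAt v (v1 x) x ∧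
      HasDerivAt v1 (F x (x ^ (β - 2) * v x) - ω ^ 2 * v x) x ∧ |x ^ (β - 2) * v x| ≤ 1 := by
  let φ : (ℝ →ᵇ ℝ) → ℝ → ℝ := fun b t => F (max t X) (clampR (b t))
  have hφc : ∀ b, Continuous (φ b) := by
    intro b
    have : Continuous fun t : ℝ => ((max t X, clampR (b t)) : ℝ × ℝ) :=
      (by fun_prop : Continuous fun t : ℝ => max t X).prodMk (clampR_cont.comp b.continuous)
    exact hcont.comp_continuous this (fun t => ⟨le_max_right t X, clampR_mem _⟩)
  have hφb : ∀ b t, |φ b t| ≤ C * (max t X) ^ (-β) := fun b t =>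
    hbd _ (le_max_right _ _) _ (clampR_mem _)
  -- scaled bound
  have key : ∀ (D : ℝ) (hD : 0 ≤ D) (ψ : ℝ → ℝ), (∀ t, |ψ t| ≤ (C * D) * (max t X) ^ (-β)) →
      ∀ x ≥ X, |x ^ (β - 2) * vsol ω ψ x| ≤ D / 2 := by
    intro D hD ψ hψ x hx
    have hx0 : 0 < x := by linarith
    have h1 := vsol_bound ω β (C * D) X hω hβ hX ψ hψ x hx
    rw [abs_mul, abs_of_pos (Real.rpow_pos_of_pos hx0 _)]
    calc _ ≤ x ^ (β - 2) * (2 * (C * D) / (ω * (β - 1)) * x ^ (1 - β)) := by gcongr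
      _ = (2 * C / (ω * (β - 1))) * D * (x ^ (β - 2) * x ^ (1 - β)) := by ring
      _ = (2 * C / (ω * (β - 1))) * D * x⁻¹ := by
          rw [← Real.rpow_add hx0, ← Real.rpow_neg_one]; congr 2; ring
      _ ≤ X / 2 * D * x⁻¹ := by gcongr
      _ ≤ x / 2 * D * x⁻¹ := by gcongr
      _ = D / 2 := by field_simp
  let T0 : (ℝ →ᵇ ℝ) → ℝ → ℝ := fun b x => (max x X) ^ (β - 2) * vsol ω (φ b) (max x X)
  have hT0c : ∀ b, Continuous (T0 b) := by
    intro b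
    have h1 : Continuous (vsol ω (φ b)) := continuous_iff_continuousAt.2 fun x =>
      (vsol_deriv ω β C X hω hβ hX _ (hφc b) (hφb b) x).1.continuousAt
    have h2 : Continuous fun x : ℝ => max x X := by fun_prop
    refine Continuous.mul ?_ (h1.comp h2)
    exact h2.rpow_const (fun x => Or.inl (by have := le_max_right x X; linarith))
  have hT0b : ∀ b x, |T0 b x| ≤ 1 / 2 := fun b x =>
    key 1 zero_le_one _ (by simpa using hφb b) _ (le_max_right _ _)
  let T : (ℝ →ᵇ ℝ) → (ℝ →ᵇ ℝ) := fun b =>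
    BoundedContinuousFunction.ofNormedAddCommGroup (T0 b) (hT0c b) (1 / 2) (hT0b b)
  have hT : ContractingWith (1 / 2) T := by
    refine ⟨by
      rw [← NNReal.coe_lt_coe]; norm_num, LipschitzWith.of_dist_le_mul fun b c => ?_⟩
    have hd : (0:ℝ) ≤ ((1 / 2 : NNReal) : ℝ) * dist b c := by positivity
    rw [BoundedContinuousFunction.dist_le hd]
    intro x
    change |T0 b x - T0 c x| ≤ _
    simp only [T0]
    rw [← mul_sub, vsol_sub ω β C X hβ hX _ _ (hφc b) (hφc c) (hφb b) (hφb c)]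
    have := key (dist b c) dist_nonneg (fun t => φ b t - φ c t) ?_ (max x X) (le_max_right _ _)
    · refine this.trans (le_of_eq ?_)
      push_cast; ring
    · intro t
      refine (hlip _ (le_max_right _ _) _ (clampR_mem _) _ (clampR_mem _)).trans ?_
      have e1 : |clampR (b t) - clampR (c t)| ≤ dist b c :=
        (clampR_lip _ _).trans (by
          have := BoundedContinuousFunction.dist_coe_le_dist (f := b) (g := c) t
          rwa [Real.dist_eq] at this)
      have e2 : 0 ≤ (max t X) ^ (-β) := Real.rpow_nonneg (by have := le_max_right t X; linarith) _
      calc _ ≤ C * max t X ^ (-β) * dist b c := by gcongr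
        _ = _ := by ring
  let b := hT.fixedPoint T
  have hb : T b = b := hT.fixedPoint_isFixedPt
  have hbx : ∀ x, b x = T0 b x := fun x => by
    conv_lhs => rw [← hb]
    rfl
  refine ⟨vsol ω (φ b), vsol1 ω (φ b), fun x hx => ?_⟩
  have hd := vsol_deriv ω β C X hω hβ hX _ (hφc b) (hφb b) x
  have hbx' : b x = x ^ (β - 2) * vsol ω (φ b) x := by
    rw [hbx]; simp only [T0]; rw [max_eq_left hx.le]
  have hb1 : |b x| ≤ 1 := by rw [hbx]; exact (hT0b b x).trans (by norm_num)
  refine ⟨hd.1, ?_, by rw [← hbx']; exact hb1⟩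
  rw [← hbx']
  have : φ b x = F x (b x) := by
    simp only [φ]; rw [max_eq_left hx.le, clampR_eq _ hb1]
  rw [← this]
  exact hd.2

open Metric in
lemma quad_small (G : ℝ × ℝ → ℝ) (hG : ContDiffAt ℝ 2 G 0)
    (h1 : HasDerivAt (fun z => G (z, 0)) 0 0) (h2 : HasDerivAt (fun y => G (0, y)) 0 0) :
    ∃ C ≥ (0:ℝ), ∃ δ > (0:ℝ), ContinuousOn G (ball 0 δ) ∧
      ∀ ρ < δ, ∀ a ∈ closedBall (0 : ℝ × ℝ) ρ, ∀ b ∈ closedBall (0 : ℝ × ℝ) ρ,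
        |G a - G b| ≤ C * ρ * ‖a - b‖ := by
  have hd : ContDiffAt ℝ 1 (fderiv ℝ G) 0 := hG.fderiv_right (by norm_num)
  have hz : HasFDerivAt G (fderiv ℝ G 0) 0 := (hG.differentiableAt (by norm_num)).hasFDerivAt
  have hz0 : fderiv ℝ G 0 = 0 := by
    have e1 : fderiv ℝ G 0 (1, 0) = 0 := by
      have hc : HasDerivAt (fun z : ℝ => ((z, 0) : ℝ × ℝ)) (1, 0) 0 :=
        (hasDerivAt_id _).prodMk (hasDerivAt_const _ _)
      have := HasFDerivAt.comp_hasDerivAt (l := G) (f := fun z : ℝ => ((z, 0) : ℝ × ℝ)) 0 hz hc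
      exact this.unique h1
    have e2 : fderiv ℝ G 0 (0, 1) = 0 := by
      have hc : HasDerivAt (fun z : ℝ => ((0, z) : ℝ × ℝ)) (0, 1) 0 :=
        (hasDerivAt_const _ _).prodMk (hasDerivAt_id _)
      have := HasFDerivAt.comp_hasDerivAt (l := G) (f := fun z : ℝ => ((0, z) : ℝ × ℝ)) 0 hz hc
      exact this.unique h2
    ext
    · simpa using e1
    · simpa using e2
  have hO := (hd.differentiableAt (by norm_num)).isBigO_sub
  obtain ⟨C, hC0, hC⟩ := hO.exists_nonneg
  rw [Asymptotics.isBigOWith_iff] at hC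
  have hev : ∀ᶠ a in nhds (0 : ℝ × ℝ), DifferentiableAt ℝ G a := by
    filter_upwards [hG.eventually (by norm_num)] with a ha
    exact ha.differentiableAt (by norm_num)
  obtain ⟨δ, hδ, hball⟩ := Metric.eventually_nhds_iff_ball.1 (hC.and hev)
  refine ⟨C, hC0, δ, hδ, fun a ha => (hball a ha).2.continuousAt.continuousWithinAt, ?_⟩
  intro ρ hρ a ha b hb
  have hsub : closedBall (0 : ℝ × ℝ) ρ ⊆ ball 0 δ := closedBall_subset_ball hρ
  have := Convex.norm_image_sub_le_of_norm_fderiv_le (𝕜 := ℝ) (f := G) (C := C * ρ)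
    (s := closedBall (0 : ℝ × ℝ) ρ) (x := b) (y := a)
    (fun x hx => (hball x (hsub hx)).2) (fun x hx => ?_) (convex_closedBall _ _) hb ha
  · simpa using this
  · have h3 := (hball x (hsub hx)).1
    rw [hz0, sub_zero, sub_zero] at h3
    refine h3.trans ?_
    gcongr
    simpa using hx

noncomputable def c0 (q : ℝ) : ℝ := 4 * (q - 1) / q ^ 2
noncomputable def Bc (q r : ℝ) : ℝ := 2 * (2 * q + r - 1) / q
noncomputable def ac (q r : ℝ) : ℝ := Bc q r + Bc q r * q / (2 * (q - 1))
noncomputable def mF (q r z : ℝ) : ℝ := 1 + Bc q r / 2 * z - ac q r * z ^ 2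
noncomputable def nF (q r z : ℝ) : ℝ := 1 - Bc q r / 2 * z + 3 * ac q r * z ^ 2
noncomputable def lF (q r z : ℝ) : ℝ := Bc q r * z - 12 * ac q r * z ^ 2
noncomputable def EF (q : ℝ) : ℝ → ℝ := dslope (fun p : ℝ => (1 + p) ^ q) 0
noncomputable def Psi (q r z y : ℝ) : ℝ :=
  (c0 q * q) * y - z * (lF q r z / mF q r z / 2 - 3 / 4 * (nF q r z ^ 2 / mF q r z ^ 2)) * y
  - c0 q * (mF q r z * √(mF q r z)) * Real.exp (-(ac q r * z)) *
      (1 + √(mF q r z) * z * y) ^ r * Real.exp (√(mF q r z) * y * EF q (√(mF q r z) * z * y))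
  - (1 / √(mF q r z)) * (2 / q * (2 / q - 1) - 2 / q * (nF q r z / mF q r z))

lemma EF_spec (q p : ℝ) : p * EF q p = (1 + p) ^ q - 1 := by
  have := sub_smul_dslope (fun p : ℝ => (1 + p) ^ q) 0 p
  simpa [EF] using this

lemma EF_contDiff (q : ℝ) : ContDiffAt ℝ 2 (EF q) 0 := by
  have hp := Real.one_add_rpow_hasFPowerSeriesAt_zero (a := q)
  exact AnalyticAt.contDiffAt ⟨_, hp.has_fpower_series_dslope_fslope⟩

lemma EF_zero (q : ℝ) : EF q 0 = q := by
  unfold EF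
  rw [dslope_same]
  have : HasDerivAt (fun p : ℝ => (1 + p) ^ q) q 0 := by
    have := ((hasDerivAt_id (0:ℝ)).const_add 1).rpow_const (p := q) (Or.inl (by norm_num))
    simpa using this
  exact this.deriv

lemma Psi_contDiff (q r : ℝ) : ContDiffAt ℝ 2 (fun a : ℝ × ℝ => Psi q r a.1 a.2) 0 := by
  have hm : ContDiffAt ℝ 2 (fun a : ℝ × ℝ => mF q r a.1) 0 := by unfold mF; fun_prop
  have hn : ContDiffAt ℝ 2 (fun a : ℝ × ℝ => nF q r a.1) 0 := by unfold nF; fun_prop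
  have hl : ContDiffAt ℝ 2 (fun a : ℝ × ℝ => lF q r a.1) 0 := by unfold lF; fun_prop
  have m0 : mF q r 0 = 1 := by simp [mF]
  have hs : ContDiffAt ℝ 2 (fun a : ℝ × ℝ => √(mF q r a.1)) 0 := hm.sqrt (by simp [m0])
  have hz : ContDiffAt ℝ 2 (fun a : ℝ × ℝ => a.1) 0 := by fun_prop
  have hy : ContDiffAt ℝ 2 (fun a : ℝ × ℝ => a.2) 0 := by fun_prop
  have hp : ContDiffAt ℝ 2 (fun a : ℝ × ℝ => √(mF q r a.1) * a.1 * a.2) 0 := (hs.mul hz).mul hy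
  have hE : ContDiffAt ℝ 2 (fun a : ℝ × ℝ => EF q (√(mF q r a.1) * a.1 * a.2)) 0 := by
    refine ContDiffAt.comp (0 : ℝ × ℝ) (g := EF q) ?_ hp
    simpa using EF_contDiff q
  have hr : ContDiffAt ℝ 2 (fun a : ℝ × ℝ => (1 + √(mF q r a.1) * a.1 * a.2) ^ r) 0 :=
    (contDiffAt_const.add hp).rpow_const_of_ne (by simp)
  have hmne : mF q r (0 : ℝ × ℝ).1 ≠ 0 := by simp [m0]
  have hsne : √(mF q r (0 : ℝ × ℝ).1) ≠ 0 := by simp [m0]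
  unfold Psi
  refine (((contDiffAt_const.mul hy).sub ((hz.mul (((hl.div hm hmne).div_const 2).sub
    (contDiffAt_const.mul ((hn.pow 2).div (hm.pow 2) (pow_ne_zero _ hmne))))).mul hy)).sub
    ((((contDiffAt_const.mul (hm.mul hs)).mul ((contDiffAt_const.mul hz).neg.exp)).mul hr).mul
    ((hs.mul hy).mul hE).exp)).sub ((contDiffAt_const.div hs hsne).mul
    (contDiffAt_const.sub (contDiffAt_const.mul (hn.div hm hmne))))

lemma Psi_dz (q r : ℝ) (hq : 1 < q) : HasDerivAt (fun z => Psi q r z 0) 0 0 := by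
  have e : (fun z => Psi q r z 0) = fun z => 
     - c0 q * (mF q r z * √(mF q r z)) * Real.exp (-(ac q r * z))
  - (1 / √(mF q r z)) * (2 / q * (2 / q - 1) - 2 / q * (nF q r z / mF q r z)) := by
    funext z; simp [Psi]
  rw [e]
  have hm : HasDerivAt (mF q r) (Bc q r / 2) 0 := by
    unfold mF
    refine ((((hasDerivAt_id (0:ℝ)).const_mul (Bc q r / 2)).const_add 1).sub
      (((hasDerivAt_id (0:ℝ)).pow 2).const_mul (ac q r))).congr_deriv ?_
    simp
  have hn : HasDerivAt (nF q r) (-(Bc q r / 2)) 0 := by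
    unfold nF
    refine ((((hasDerivAt_id (0:ℝ)).const_mul (Bc q r / 2)).const_sub 1).add
      (((hasDerivAt_id (0:ℝ)).pow 2).const_mul (3 * ac q r))).congr_deriv ?_
    simp
  have m0 : mF q r 0 = 1 := by simp [mF]
  have n0 : nF q r 0 = 1 := by simp [nF]
  have hs : HasDerivAt (fun z => √(mF q r z)) (Bc q r / 2 / (2 * √(mF q r 0))) 0 :=
    hm.sqrt (by simp [m0])
  have he : HasDerivAt (fun z => Real.exp (-(ac q r * z))) (Real.exp (-(ac q r * 0)) * (-(ac q r * 1))) 0 :=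
    (((hasDerivAt_id (0:ℝ)).const_mul (ac q r)).neg).exp
  have hmne : mF q r 0 ≠ 0 := by simp [m0]
  have hsne : √(mF q r 0) ≠ 0 := by simp [m0]
  refine ((((hm.mul hs).const_mul (-c0 q)).mul he).sub ((((hasDerivAt_const (0:ℝ) (1:ℝ)).div hs hsne)).mul
    (((hn.div hm hmne).const_mul (2 / q)).const_sub (2 / q * (2 / q - 1))))).congr_deriv ?_
  simp only [m0, n0, Real.sqrt_one, Pi.mul_apply, Pi.div_apply, mul_zero, neg_zero, Real.exp_zero, ac, c0]
  have : q - 1 ≠ 0 := by linarith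
  have : q ≠ 0 := by linarith
  field_simp
  ring

lemma Psi_dy (q r : ℝ) : HasDerivAt (fun y => Psi q r 0 y) 0 0 := by
  have e : (fun y => Psi q r 0 y) = fun y => 
     (c0 q * q) * y - c0 q * Real.exp (y * q) - (2 / q * (2 / q - 1) - 2 / q) := by
    funext z; simp [Psi, mF, nF, lF, EF_zero]
  rw [e]
  refine ((((hasDerivAt_id (0:ℝ)).const_mul (c0 q * q)).sub
    ((((hasDerivAt_id (0:ℝ)).mul_const q).exp).const_mul (c0 q))).sub_const _).congr_deriv ?_
  simp

lemma Psi_zero (q r : ℝ) (hq : 1 < q) : Psi q r 0 0 = 0 := by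
  simp [Psi, mF, nF, c0]
  have : q ≠ 0 := by linarith
  field_simp
  ring

open Set in
lemma Psi_bounds (q r : ℝ) (hq : 1 < q) : ∃ C ≥ (0:ℝ), ∃ δ > (0:ℝ),
    ContinuousOn (fun a : ℝ × ℝ => Psi q r a.1 a.2) (Metric.ball 0 δ) ∧
    (∀ z y, 0 < z → z < δ → |y| ≤ z → |Psi q r z y| ≤ C * z ^ 2) ∧
    (∀ z y y', 0 < z → z < δ → |y| ≤ z → |y'| ≤ z →
      |Psi q r z y - Psi q r z y'| ≤ C * z * |y - y'|) := by
  obtain ⟨C, hC, δ, hδ, hc, h⟩ := quad_small _ (Psi_contDiff q r) (Psi_dz q r hq) (Psi_dy q r)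
  have hn : ∀ z y : ℝ, 0 < z → |y| ≤ z → ((z, y) : ℝ × ℝ) ∈ Metric.closedBall (0 : ℝ × ℝ) z := by
    intro z y hz hy
    simp [Prod.norm_def, abs_of_pos hz, hy]
  refine ⟨C, hC, δ, hδ, hc, fun z y hz hzd hy => ?_, fun z y y' hz hzd hy hy' => ?_⟩
  · have := h z hzd _ (hn z y hz hy) 0 (by simp [hz.le])
    simp only [Prod.fst_zero, Prod.snd_zero, Psi_zero q r hq, sub_zero] at this
    refine this.trans ?_
    have : ‖((z, y) : ℝ × ℝ)‖ ≤ z := by simpa using hn z y hz hy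
    calc _ ≤ C * z * z := by gcongr
      _ = _ := by ring
  · have := h z hzd _ (hn z y hz hy) _ (hn z y' hz hy')
    simpa [Prod.norm_def] using this

noncomputable def SF (q r x : ℝ) : ℝ :=
  (x ^ 2 + Bc q r * Real.log x - Real.log (c0 q) + ac q r / x ^ 2) / 2
noncomputable def PF (q r x : ℝ) : ℝ := x + Bc q r / 2 / x - ac q r / x ^ 3
noncomputable def PF1 (q r x : ℝ) : ℝ := 1 - Bc q r / 2 / x ^ 2 + 3 * ac q r / x ^ 4
noncomputable def PF2 (q r x : ℝ) : ℝ := Bc q r / x ^ 3 - 12 * ac q r / x ^ 5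

lemma SF_deriv (q r x : ℝ) (hx : 0 < x) : HasDerivAt (SF q r) (PF q r x) x := by
  unfold SF PF
  refine ((((hasDerivAt_pow 2 x).add ((Real.hasDerivAt_log hx.ne').const_mul (Bc q r))).sub_const
    (Real.log (c0 q))).add ((hasDerivAt_const x (ac q r)).div (hasDerivAt_pow 2 x)
      (pow_ne_zero _ hx.ne'))).div_const 2 |>.congr_deriv ?_
  field_simp
  ring

lemma PF_deriv (q r x : ℝ) (hx : 0 < x) : HasDerivAt (PF q r) (PF1 q r x) x := by
  unfold PF PF1
  refine ((hasDerivAt_id x).add ((hasDerivAt_const x (Bc q r / 2)).div (hasDerivAt_id x)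
      hx.ne')).sub ((hasDerivAt_const x (ac q r)).div (hasDerivAt_pow 3 x)
      (pow_ne_zero _ hx.ne')) |>.congr_deriv ?_
  simp
  field_simp
  ring

lemma PF1_deriv (q r x : ℝ) (hx : 0 < x) : HasDerivAt (PF1 q r) (PF2 q r x) x := by
  unfold PF1 PF2
  refine (((hasDerivAt_const x (Bc q r / 2)).div (hasDerivAt_pow 2 x)
      (pow_ne_zero _ hx.ne')).const_sub 1).add ((hasDerivAt_const x (3 * ac q r)).div
      (hasDerivAt_pow 4 x) (pow_ne_zero _ hx.ne')) |>.congr_deriv ?_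
  field_simp
  ring

lemma PF_eq (q r x : ℝ) (hx : 0 < x) : PF q r x = x * mF q r (x ^ 2)⁻¹ := by
  unfold PF mF; field_simp

lemma PF1_eq (q r x : ℝ) (hx : 0 < x) : PF1 q r x = nF q r (x ^ 2)⁻¹ := by
  unfold PF1 nF; field_simp

lemma PF2_eq (q r x : ℝ) (hx : 0 < x) : PF2 q r x = lF q r (x ^ 2)⁻¹ / x := by
  unfold PF2 lF; field_simp

lemma nonlin_eq (q r x y p : ℝ) (hq : 1 < q) (hx : 0 < x)
    (hp : p = √(mF q r (x ^ 2)⁻¹) * (x ^ 2)⁻¹ * y) (hp1 : 0 < 1 + p) :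
    PF q r x ^ 2 * Real.exp (-2 * SF q r x) * (x ^ (2 / q) * (1 + p)) ^ r *
      Real.exp ((x ^ (2 / q) * (1 + p)) ^ q) =
    c0 q * mF q r (x ^ 2)⁻¹ ^ 2 * (x ^ (2 / q) / x ^ 2) *
      (Real.exp (-(ac q r * (x ^ 2)⁻¹)) * (1 + p) ^ r *
        Real.exp (√(mF q r (x ^ 2)⁻¹) * y * EF q p)) := by
  have hq0 : q ≠ 0 := by linarith
  have hA : 0 < x ^ (2 / q) := Real.rpow_pos_of_pos hx _
  have hc : 0 < c0 q := by unfold c0; have : 0 < q - 1 := by linarith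
                           positivity
  have h1 : (x ^ (2 / q) * (1 + p)) ^ q = x ^ 2 + √(mF q r (x ^ 2)⁻¹) * y * EF q p := by
    rw [Real.mul_rpow hA.le hp1.le, ← Real.rpow_mul hx.le, div_mul_cancel₀ _ hq0]
    have := EF_spec q p
    have e : (1 + p) ^ q = 1 + p * EF q p := by linarith
    rw [e, Real.rpow_two]
    nth_rewrite 1 [hp]
    field_simp
  have h2 : (x ^ (2 / q) * (1 + p)) ^ r = x ^ (2 / q * r) * (1 + p) ^ r := by
    rw [Real.mul_rpow hA.le hp1.le, ← Real.rpow_mul hx.le]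
  have h3 : Real.exp (-2 * SF q r x) = Real.exp (-(x ^ 2)) * x ^ (-Bc q r) * c0 q *
      Real.exp (-(ac q r * (x ^ 2)⁻¹)) := by
    rw [Real.rpow_def_of_pos hx]
    conv_rhs => rw [show c0 q = Real.exp (Real.log (c0 q)) from (Real.exp_log hc).symm]
    rw [← Real.exp_add, ← Real.exp_add, ← Real.exp_add]
    congr 1
    unfold SF
    field_simp
    ring
  rw [h1, h2, h3, PF_eq q r x hx, Real.exp_add]
  have h4 : x ^ 2 * x ^ (-Bc q r) * x ^ (2 / q * r) = x ^ (2 / q) / x ^ 2 := by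
    rw [← Real.rpow_two, ← Real.rpow_add hx, ← Real.rpow_add hx, ← Real.rpow_sub hx]
    congr 1
    unfold Bc
    field_simp
    ring
  have h5 : Real.exp (-(x ^ 2)) * Real.exp (x ^ 2) = 1 := by
    rw [← Real.exp_add]; simp
  rw [← h4]
  linear_combination (x ^ 2 * x ^ (-Bc q r) * x ^ (2 / q * r) * mF q r (x ^ 2)⁻¹ ^ 2 * c0 q *
    Real.exp (-(ac q r * (x ^ 2)⁻¹)) * (1 + p) ^ r *
        Real.exp (√(mF q r (x ^ 2)⁻¹) * y * EF q p)) * h5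

lemma alg_id (A h g n l y v1 T q c w : ℝ) (hh : 0 < h) (hg : 0 < g) :
    2 / q * ((2 / q - 1) * (A / (h ^ 2) ^ 2)) +
      (l / h ^ 2 / (2 * (h * g)) - n ^ 2 / (4 * (h ^ 2 * g ^ 2) * (h * g))) * (A / (h ^ 2) ^ 2 / h * y)
      + n / (h * g) * v1 + (h * g) * (A / (h ^ 2) ^ 2 / h *
        (w * y - ((h ^ 2) ^ 2)⁻¹ * (l / g ^ 2 / 2 - 3 / 4 * (n ^ 2 / (g ^ 2) ^ 2)) * y
        - c * (g ^ 2 * g) * T - 1 / g * (2 / q * (2 / q - 1) - 2 / q * (n / g ^ 2)))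
        - w * (A / (h ^ 2) ^ 2 / h * y)) =
    n / (h ^ 2 * g ^ 2) * (2 / q * (A / h ^ 2) + n / (2 * (h * g)) * (A / (h ^ 2) ^ 2 / h * y) + h * g * v1)
     - c * (g ^ 2) ^ 2 * (A / (h ^ 2) ^ 2) * T := by
  field_simp
  ring

open Set in
theorem W_exists (q r : ℝ) (hq : 1 < q) : ∃ X ≥ (1 : ℝ), ∃ K ≥ (0 : ℝ), ∃ W W1 : ℝ → ℝ, ∀ x > X,
    0 < PF q r x ∧ 0 < W x ∧ HasDerivAt W (W1 x) x ∧
    HasDerivAt W1 (PF1 q r x / PF q r x * W1 x -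
      PF q r x ^ 2 * Real.exp (-2 * SF q r x) * W x ^ r * Real.exp (W x ^ q)) x ∧
    |W x - x ^ (2 / q)| ≤ K * x ^ (2 / q - 4) := by
  obtain ⟨C, hC, δ, hδ, hcont, hb, hl⟩ := Psi_bounds q r hq
  have hq0 : 0 < q := by linarith
  have hc : 0 < c0 q := by unfold c0; have : 0 < q - 1 := by linarith
                           positivity
  obtain ⟨δ', hδ', hm⟩ : ∃ δ' > (0:ℝ), ∀ z, |z| < δ' → 1 / 2 < mF q r z ∧ mF q r z < 4 := by
    have h1 : ContinuousAt (mF q r) 0 := by unfold mF; fun_prop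
    have m0 : mF q r 0 = 1 := by simp [mF]
    have h2 : ∀ᶠ z in nhds (0:ℝ), 1 / 2 < mF q r z ∧ mF q r z < 4 := by
      have := h1.tendsto
      rw [m0] at this
      exact (this.eventually (lt_mem_nhds (by norm_num))).and
        (this.eventually (gt_mem_nhds (by norm_num)))
    obtain ⟨d, hd, h3⟩ := Metric.eventually_nhds_iff.1 h2
    exact ⟨d, hd, fun z hz => h3 (by simpa using hz)⟩
  obtain ⟨α, hα⟩ : ∃ α : ℝ, α = 2 / q - 5 / 2 := ⟨_, rfl⟩
  have hα0 : α < -1 / 2 := by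
    have : 2 / q < 2 := by rw [div_lt_iff₀ hq0]; linarith
    linarith
  obtain ⟨ω, hω⟩ : ∃ ω : ℝ, ω = √(c0 q * q) := ⟨_, rfl⟩
  have hω0 : 0 < ω := by rw [hω]; positivity
  have hω2 : ω ^ 2 = c0 q * q := by rw [hω]; exact Real.sq_sqrt (by positivity)
  let β := 4 - α
  have hβ : 1 < β := by simp only [β]; linarith
  let D := 2 * C / (ω * (β - 1))
  have hD : 0 ≤ D := div_nonneg (by linarith) (mul_nonneg hω0.le (by linarith))
  let X := 2 + 1 / δ + 1 / δ' + 2 * D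
  have hδi : 0 < 1 / δ := by positivity
  have hδi' : 0 < 1 / δ' := by positivity
  have hX2 : 2 ≤ X := by simp only [X]; linarith
  have hz : ∀ x ≥ X, 0 < (x ^ 2)⁻¹ ∧ (x ^ 2)⁻¹ < δ ∧ (x ^ 2)⁻¹ < δ' ∧ (x ^ 2)⁻¹ ≤ 1 / 4 := by
    intro x hx
    have hx2 : 2 ≤ x := hX2.trans hx
    have hxx : x ≤ x ^ 2 := by nlinarith
    have h4 : (4:ℝ) ≤ x ^ 2 := by nlinarith
    refine ⟨by positivity, ?_, ?_, ?_⟩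
    · rw [inv_lt_comm₀ (by positivity) hδ, ← one_div]
      simp only [X] at hx; linarith
    · rw [inv_lt_comm₀ (by positivity) hδ', ← one_div]
      simp only [X] at hx; linarith
    · rw [inv_le_comm₀ (by positivity) (by norm_num)]; norm_num; exact h4
  let F : ℝ → ℝ → ℝ := fun t b => t ^ α * Psi q r (t ^ 2)⁻¹ ((t ^ 2)⁻¹ * b)
  have hyz : ∀ z b : ℝ, 0 < z → b ∈ Icc (-1 : ℝ) 1 → |z * b| ≤ z := by
    intro z b hz hb
    rw [abs_mul, abs_of_pos hz]
    exact mul_le_of_le_one_right hz.le (abs_le.2 hb)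
  have hpow : ∀ t : ℝ, t > 0 → t ^ (-β) = t ^ α * ((t ^ 2)⁻¹) ^ 2 := by
    intro t ht
    rw [show -β = α - ((4 : ℕ) : ℝ) by simp only [β]; push_cast; ring, Real.rpow_sub ht,
      Real.rpow_natCast]
    field_simp
  obtain ⟨v, v1, hv⟩ := ode_fixed ω β C X hω0 hβ (by linarith) hC F
    (by
      have h1 : ContinuousOn (fun w : ℝ × ℝ => (((w.1 ^ 2)⁻¹, (w.1 ^ 2)⁻¹ * w.2) : ℝ × ℝ))
          (Ici X ×ˢ Icc (-1) 1) := by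
        have : ContinuousOn (fun w : ℝ × ℝ => (w.1 ^ 2)⁻¹) (Ici X ×ˢ Icc (-1) 1) :=
          ContinuousOn.inv₀ (by fun_prop) (fun w hw => by
            have : X ≤ w.1 := hw.1
            have : 0 < w.1 := by linarith
            positivity)
        exact this.prodMk (this.mul continuousOn_snd)
      refine ContinuousOn.mul ?_ (hcont.comp h1 ?_)
      · exact continuousOn_fst.rpow_const (fun w hw => Or.inl (by
            have : X ≤ w.1 := hw.1
            linarith))
      · intro w hw
        obtain ⟨z1, z2, -⟩ := hz w.1 hw.1
        have := hyz _ _ z1 hw.2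
        rw [mem_ball_zero_iff, Prod.norm_def]
        simp only [Real.norm_eq_abs, sup_lt_iff]
        rw [abs_of_pos z1]
        exact ⟨z2, this.trans_lt z2⟩)
    (by
      intro t ht b hbm
      obtain ⟨z1, z2, -⟩ := hz t ht
      have ht0 : 0 < t := by linarith
      have := hb _ _ z1 z2 (hyz _ _ z1 hbm)
      rw [hpow t ht0]
      simp only [F]
      rw [abs_mul, abs_of_pos (Real.rpow_pos_of_pos ht0 _)]
      have h0 := Real.rpow_pos_of_pos ht0 α
      calc _ ≤ t ^ α * (C * (t ^ 2)⁻¹ ^ 2) := by gcongr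
        _ = _ := by ring)
    (by
      intro t ht b hbm c hcm
      obtain ⟨z1, z2, -⟩ := hz t ht
      have ht0 : 0 < t := by linarith
      have := hl _ _ _ z1 z2 (hyz _ _ z1 hbm) (hyz _ _ z1 hcm)
      rw [hpow t ht0]
      simp only [F]
      rw [← mul_sub, abs_mul, abs_of_pos (Real.rpow_pos_of_pos ht0 _)]
      rw [← mul_sub, abs_mul, abs_of_pos z1] at this
      have h0 := Real.rpow_pos_of_pos ht0 α
      calc _ ≤ t ^ α * (C * (t ^ 2)⁻¹ * ((t ^ 2)⁻¹ * |b - c|)) := by gcongr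
        _ = _ := by ring)
    (by change D ≤ X / 2
        simp only [X]; linarith)
  refine ⟨X, by linarith, 2, by norm_num, fun x => x ^ (2 / q) + √(PF q r x) * v x,
    fun x => 2 / q * x ^ (2 / q - 1) + PF1 q r x / (2 * √(PF q r x)) * v x + √(PF q r x) * v1 x,
    fun x hx => ?_⟩
  obtain ⟨hv0, hv1, hvb⟩ := hv x hx
  obtain ⟨z1, z2, z3, z4⟩ := hz x hx.le
  have hx0 : 0 < x := by linarith
  obtain ⟨hm1, hm2⟩ := hm _ (by rwa [abs_of_pos z1])
  have hm0 : 0 < mF q r (x ^ 2)⁻¹ := by linarith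
  have hP : 0 < PF q r x := by rw [PF_eq q r x hx0]; positivity
  obtain ⟨y, hy⟩ : ∃ y, y = (x ^ 2)⁻¹ * (x ^ (β - 2) * v x) := ⟨_, rfl⟩
  have hyb : |y| ≤ (x ^ 2)⁻¹ := by rw [hy]; exact hyz _ _ z1 (abs_le.1 hvb)
  have hxα : x ^ α = x ^ (2 / q) / x ^ 2 / √x := by
    rw [Real.sqrt_eq_rpow, ← Real.rpow_two, ← Real.rpow_sub hx0, ← Real.rpow_sub hx0]
    congr 1; rw [hα]; ring
  have hvy : v x = x ^ α * y := by
    rw [hy]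
    have : x ^ α * ((x ^ 2)⁻¹) * x ^ (β - 2) = 1 := by
      rw [← Real.rpow_two, ← Real.rpow_neg hx0.le, ← Real.rpow_add hx0, ← Real.rpow_add hx0]
      rw [show α + -2 + (β - 2) = 0 by simp only [β]; ring, Real.rpow_zero]
    linear_combination (- v x) * this
  have hsP : √(PF q r x) = √x * √(mF q r (x ^ 2)⁻¹) := by
    rw [PF_eq q r x hx0, Real.sqrt_mul hx0.le]
  have hsx : 0 < √x := Real.sqrt_pos.2 hx0
  have hsm : 0 < √(mF q r (x ^ 2)⁻¹) := Real.sqrt_pos.2 hm0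
  have hA : 0 < x ^ (2 / q) := Real.rpow_pos_of_pos hx0 _
  obtain ⟨p, hp⟩ : ∃ p, p = √(mF q r (x ^ 2)⁻¹) * (x ^ 2)⁻¹ * y := ⟨_, rfl⟩
  have hW : x ^ (2 / q) + √(PF q r x) * v x = x ^ (2 / q) * (1 + p) := by
    rw [hvy, hsP, hxα, hp]
    field_simp
  have hsm2 : √(mF q r (x ^ 2)⁻¹) ≤ 2 := by
    rw [show (2:ℝ) = √(4:ℝ) by rw [show (4:ℝ) = 2 ^ 2 by norm_num]; simp]
    exact Real.sqrt_le_sqrt hm2.le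
  have hpb : |p| ≤ 2 * ((x ^ 2)⁻¹) ^ 2 := by
    rw [hp, abs_mul, abs_of_pos (by positivity)]
    calc _ ≤ 2 * (x ^ 2)⁻¹ * (x ^ 2)⁻¹ := by gcongr
      _ = _ := by ring
  have hp1 : 0 < 1 + p := by
    have h1 : ((x ^ 2)⁻¹) ^ 2 ≤ (1 / 4) ^ 2 := by gcongr
    have h2 := (abs_le.1 hpb).1
    linarith
  have hsd : HasDerivAt (fun x => √(PF q r x)) (PF1 q r x / (2 * √(PF q r x))) x :=
    (PF_deriv q r x hx0).sqrt hP.ne'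
  refine ⟨hP, ?_, ?_, ?_, ?_⟩
  · beta_reduce
    rw [hW]; positivity
  · refine ((Real.hasDerivAt_rpow_const (Or.inl hx0.ne')).add (hsd.mul hv0)).congr_deriv ?_
    ring
  · have hr : HasDerivAt (fun x : ℝ => 2 / q * x ^ (2 / q - 1))
        (2 / q * ((2 / q - 1) * x ^ (2 / q - 1 - 1))) x :=
      (Real.hasDerivAt_rpow_const (Or.inl hx0.ne')).const_mul _
    have hsP0 : √(PF q r x) ≠ 0 := (Real.sqrt_pos.2 hP).ne'
    refine ((hr.add (((PF1_deriv q r x hx0).div (hsd.const_mul 2)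
      (mul_ne_zero two_ne_zero hsP0)).mul hv0)).add (hsd.mul hv1)).congr_deriv ?_
    simp only [Pi.div_apply]
    rw [hW, nonlin_eq q r x y p hq hx0 hp hp1]
    simp only [F]
    rw [← hy, hω2]
    have hF := alg_id (x ^ (2 / q)) (√x) (√(mF q r (x ^ 2)⁻¹)) (nF q r (x ^ 2)⁻¹) (lF q r (x ^ 2)⁻¹)
      y (v1 x) (Real.exp (-(ac q r * (x ^ 2)⁻¹)) * (1 + p) ^ r *
        Real.exp (√(mF q r (x ^ 2)⁻¹) * y * EF q p)) q (c0 q) (c0 q * q) hsx hsm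
    rw [Real.sq_sqrt hx0.le, Real.sq_sqrt hm0.le, ← hsP, ← PF_eq q r x hx0, ← PF1_eq q r x hx0,
      ← PF2_eq q r x hx0, ← hxα, ← hvy] at hF
    have r1 : x ^ (2 / q - 1) = x ^ (2 / q) / x := by rw [Real.rpow_sub hx0, Real.rpow_one]
    have r2 : x ^ (2 / q - 1 - 1) = x ^ (2 / q) / x ^ 2 := by
      rw [Real.rpow_sub hx0, Real.rpow_one, r1]; field_simp
    have hPs : Psi q r (x ^ 2)⁻¹ y = (c0 q * q * y -
                (x ^ 2)⁻¹ *
                    (lF q r (x ^ 2)⁻¹ / mF q r (x ^ 2)⁻¹ / 2 - 3 / 4 * (PF1 q r x ^ 2 / mF q r (x ^ 2)⁻¹ ^ 2)) *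
                  y -
              c0 q * (mF q r (x ^ 2)⁻¹ * √(mF q r (x ^ 2)⁻¹)) *
                (Real.exp (-(ac q r * (x ^ 2)⁻¹)) * (1 + p) ^ r *
                  Real.exp (√(mF q r (x ^ 2)⁻¹) * y * EF q p)) -
            1 / √(mF q r (x ^ 2)⁻¹) * (2 / q * (2 / q - 1) - 2 / q * (PF1 q r x / mF q r (x ^ 2)⁻¹))) := by
      unfold Psi
      rw [← hp, PF1_eq q r x hx0]
      ring
    rw [← hPs] at hF
    rw [r1, r2, ← hF]
    have hsq : √(PF q r x) ^ 2 = PF q r x := Real.sq_sqrt hP.le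
    generalize √(PF q r x) = g at *
    rw [← hsq]
    field_simp
    ring
  · beta_reduce
    rw [hW, show x ^ (2 / q) * (1 + p) - x ^ (2 / q) = x ^ (2 / q) * p by ring, abs_mul,
      abs_of_pos hA]
    rw [show (2 / q - 4 : ℝ) = 2 / q - ((4:ℕ):ℝ) by norm_num, Real.rpow_sub hx0, Real.rpow_natCast]
    calc _ ≤ x ^ (2 / q) * (2 * ((x ^ 2)⁻¹) ^ 2) := by gcongr
      _ = _ := by field_simp

lemma SF_basic (q r : ℝ) : ∃ E ≥ (0:ℝ), ∀ᶠ x in atTop,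
    |2 * SF q r x - x ^ 2| ≤ E * Real.log x := by
  refine ⟨|Bc q r| + |Real.log (c0 q)| + |ac q r|, by positivity, ?_⟩
  filter_upwards [eventually_ge_atTop (Real.exp 1), eventually_ge_atTop 1] with x hx hx1
  have hl : 1 ≤ Real.log x := by
    rw [Real.le_log_iff_exp_le (by linarith)]; exact hx
  have hx2 : (1:ℝ) ≤ x ^ 2 := by nlinarith
  have h1 : |ac q r / x ^ 2| ≤ |ac q r| := by
    rw [abs_div, abs_of_pos (by linarith : 0 < x ^ 2)]
    exact div_le_self (abs_nonneg _) hx2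
  have e : 2 * SF q r x - x ^ 2 = Bc q r * Real.log x - Real.log (c0 q) + ac q r / x ^ 2 := by
    unfold SF; ring
  rw [e]
  have h2 : |Bc q r * Real.log x| = |Bc q r| * Real.log x := by
    rw [abs_mul, abs_of_pos (by linarith : 0 < Real.log x)]
  have h3 := abs_add_le (Bc q r * Real.log x - Real.log (c0 q)) (ac q r / x ^ 2)
  have h4 := abs_sub (Bc q r * Real.log x) (Real.log (c0 q))
  have h5 : |Real.log (c0 q)| ≤ |Real.log (c0 q)| * Real.log x :=
    le_mul_of_one_le_right (abs_nonneg _) hl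
  have h6 : |ac q r| ≤ |ac q r| * Real.log x := le_mul_of_one_le_right (abs_nonneg _) hl
  nlinarith

lemma log_div_sq (D : ℝ) : ∀ᶠ x : ℝ in atTop, D * Real.log x ≤ x ^ 2 / 2 := by
  have h1 : (fun x => D * Real.log x) =o[atTop] (fun x : ℝ => x ^ (2:ℝ)) :=
    (isLittleO_log_rpow_atTop (by norm_num)).const_mul_left D
  filter_upwards [h1.bound (by norm_num : (0:ℝ) < 1 / 2)] with x hx
  have := (le_abs_self _).trans hx
  rw [Real.norm_eq_abs, Real.rpow_two, abs_of_nonneg (sq_nonneg x)] at this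
  linarith

lemma SF_size (q r : ℝ) : ∀ᶠ x in atTop, x ≤ SF q r x ∧ SF q r x ≤ x ^ 2 := by
  obtain ⟨E, hE, h⟩ := SF_basic q r
  filter_upwards [h, log_div_sq E, eventually_ge_atTop 4] with x h1 h2 h3
  have := abs_le.1 h1
  constructor <;> nlinarith

lemma log_one_add_bd (τ : ℝ) (h : |τ| ≤ 1 / 2) : |Real.log (1 + τ)| ≤ 2 * |τ| := by
  have h' := abs_le.1 h
  have hp : 0 < 1 + τ := by linarith
  have h1 := Real.log_le_sub_one_of_pos hp
  have h2 := Real.one_sub_inv_le_log_of_pos hp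
  have h3 : (1 + τ)⁻¹ ≤ 1 + 2 * |τ| := by
    rw [inv_le_iff_one_le_mul₀ hp]
    rcases abs_cases τ with ⟨h4, h5⟩ | ⟨h4, h5⟩ <;> rw [h4] <;> nlinarith
  have h4 := le_abs_self τ
  have h5 := abs_nonneg τ
  rw [abs_le]
  constructor <;> linarith

lemma rpow_one_add_bd (d θ : ℝ) (h : |d| ≤ 1 / 2) (h0 : 0 < θ) (h1 : θ ≤ 1) :
    |(1 + d) ^ θ - 1| ≤ |d| := by
  have h' := abs_le.1 h
  rcases le_total 0 d with hd | hd
  · have a1 : (1:ℝ) ≤ (1 + d) ^ θ := Real.one_le_rpow (by linarith) h0.le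
    have a2 : (1 + d) ^ θ ≤ (1 + d) ^ (1:ℝ) := Real.rpow_le_rpow_of_exponent_le (by linarith) h1
    rw [Real.rpow_one] at a2
    rw [abs_of_nonneg (by linarith), abs_of_nonneg hd]; linarith
  · have a1 : (1 + d) ^ θ ≤ 1 := Real.rpow_le_one (by linarith) (by linarith) h0.le
    have a2 : (1 + d) ^ (1:ℝ) ≤ (1 + d) ^ θ :=
      Real.rpow_le_rpow_of_exponent_ge (by linarith) (by linarith) h1
    rw [Real.rpow_one] at a2
    rw [abs_of_nonpos (by linarith), abs_of_nonpos hd]; linarith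

lemma est (q r : ℝ) (hq : 1 < q) (K : ℝ) (hK : 0 ≤ K) : ∃ C > (0:ℝ), ∀ᶠ x in atTop, ∀ w : ℝ,
    |w - x ^ (2 / q)| ≤ K * x ^ (2 / q - 4) →
    |w - (2 * SF q r x - ((2 * q + r - 1) / q) * Real.log (2 * SF q r x)
      + Real.log (4 * (q - 1) / q ^ 2)) ^ (1 / q)| ≤
      C * Real.log (SF q r x) / (SF q r x) ^ (2 - 1 / q) := by
  obtain ⟨E, hE, h⟩ := SF_basic q r
  obtain ⟨D, hD⟩ : ∃ D, D = |ac q r| + |Bc q r| * E := ⟨_, rfl⟩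
  have hD0 : 0 ≤ D := by rw [hD]; positivity
  have hq0 : 0 < q := by linarith
  refine ⟨K + D + 1, by linarith, ?_⟩
  filter_upwards [h, SF_size q r, log_div_sq E, log_div_sq D, eventually_ge_atTop (Real.exp 1),
    eventually_ge_atTop 4] with x h1 h2 h3 h4 h5 h6 w hw
  have hx0 : 0 < x := by linarith
  have hl : 1 ≤ Real.log x := by
    rw [Real.le_log_iff_exp_le (by linarith)]; exact h5
  have hc : (4 * (q - 1) / q ^ 2) = c0 q := rfl
  have hB : (2 * q + r - 1) / q = Bc q r / 2 := by unfold Bc; ring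
  obtain ⟨e, he⟩ : ∃ e, e = 2 * SF q r x - x ^ 2 := ⟨_, rfl⟩
  rw [← he] at h1
  have hx2 : 0 < x ^ 2 := by positivity
  obtain ⟨τ, hτ⟩ : ∃ τ, τ = e / x ^ 2 := ⟨_, rfl⟩
  have hτa : |τ| = |e| / x ^ 2 := by rw [hτ, abs_div, abs_of_pos hx2]
  have hτb : |τ| ≤ 1 / 2 := by
    rw [hτa, div_le_iff₀ hx2]; linarith
  have hτp : 0 < 1 + τ := by have := (abs_le.1 hτb).1; linarith
  have h2s : 2 * SF q r x = x ^ 2 * (1 + τ) := by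
    rw [hτ]; field_simp; linarith
  have hlog : Real.log (2 * SF q r x) = 2 * Real.log x + Real.log (1 + τ) := by
    rw [h2s, Real.log_mul hx2.ne' hτp.ne', Real.log_pow]; norm_num
  obtain ⟨d, hd⟩ : ∃ d, d = ac q r / x ^ 4 - Bc q r / 2 * Real.log (1 + τ) / x ^ 2 := ⟨_, rfl⟩
  have harg : 2 * SF q r x - ((2 * q + r - 1) / q) * Real.log (2 * SF q r x)
      + Real.log (4 * (q - 1) / q ^ 2) = x ^ 2 * (1 + d) := by
    rw [hc, hB, hlog, hd]
    unfold SF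
    field_simp
    ring
  have hdb : |d| ≤ D * Real.log x / x ^ 4 := by
    have b1 : |ac q r / x ^ 4| ≤ |ac q r| * Real.log x / x ^ 4 := by
      rw [abs_div, abs_of_pos (by positivity : 0 < x ^ 4)]
      gcongr
      exact le_mul_of_one_le_right (abs_nonneg _) hl
    have b2 : |Bc q r / 2 * Real.log (1 + τ) / x ^ 2| ≤ |Bc q r| * E * Real.log x / x ^ 4 := by
      rw [abs_div, abs_of_pos hx2, abs_mul, abs_div, abs_two]
      have := log_one_add_bd τ hτb
      calc _ ≤ |Bc q r| / 2 * (2 * (E * Real.log x / x ^ 2)) / x ^ 2 := by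
            gcongr
            refine this.trans ?_
            rw [hτa]
            gcongr
        _ = _ := by field_simp
    rw [hd, hD]
    refine (abs_sub _ _).trans ((add_le_add b1 b2).trans (le_of_eq ?_))
    ring
  have hdh : |d| ≤ 1 / 2 := by
    refine hdb.trans ?_
    rw [div_le_iff₀ (by positivity)]
    nlinarith
  have hdp : 0 < 1 + d := by have := (abs_le.1 hdh).1; linarith
  have hA : 0 < x ^ (2 / q) := Real.rpow_pos_of_pos hx0 _
  have hval : (x ^ 2 * (1 + d)) ^ (1 / q) = x ^ (2 / q) * (1 + d) ^ (1 / q) := by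
    rw [Real.mul_rpow hx2.le hdp.le, ← Real.rpow_two, ← Real.rpow_mul hx0.le]
    congr 2; ring
  have hx4 : x ^ (2 / q - 4) = x ^ (2 / q) / x ^ 4 := by
    rw [show (2 / q - 4 : ℝ) = 2 / q - ((4:ℕ):ℝ) by norm_num, Real.rpow_sub hx0, Real.rpow_natCast]
  have hq1 : 1 / q ≤ 1 := by rw [div_le_one hq0]; linarith
  have hr := rpow_one_add_bd d (1 / q) hdh (by positivity) hq1
  rw [harg, hval]
  have hp4 : 0 < x ^ (2 / q - 4) := Real.rpow_pos_of_pos hx0 _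
  have step1 : |w - x ^ (2 / q) * (1 + d) ^ (1 / q)| ≤ (K + D) * Real.log x * x ^ (2 / q - 4) := by
    have t1 : |x ^ (2 / q) * (1 + d) ^ (1 / q) - x ^ (2 / q)| ≤ D * Real.log x * x ^ (2 / q - 4) := by
      rw [show x ^ (2 / q) * (1 + d) ^ (1 / q) - x ^ (2 / q) =
        x ^ (2 / q) * ((1 + d) ^ (1 / q) - 1) by ring, abs_mul, abs_of_pos hA]
      calc _ ≤ x ^ (2 / q) * (D * Real.log x / x ^ 4) := by gcongr; exact hr.trans hdb
        _ = _ := by rw [hx4]; ring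
    have t2 : K * x ^ (2 / q - 4) ≤ K * Real.log x * x ^ (2 / q - 4) := by
      gcongr; exact le_mul_of_one_le_right hK hl
    rw [abs_le] at *
    constructor <;> linarith [hw.1, hw.2, t1.1, t1.2]
  refine step1.trans ?_
  have hs0 : 0 < SF q r x := by linarith [h2.1]
  have hls : Real.log x ≤ Real.log (SF q r x) := Real.log_le_log hx0 h2.1
  have hpw : x ^ (2 / q - 4) ≤ ((SF q r x) ^ (2 - 1 / q))⁻¹ := by
    rw [show (2 / q - 4 : ℝ) = 2 * (-(2 - 1 / q)) by ring, Real.rpow_mul hx0.le, Real.rpow_two,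
      Real.rpow_neg hx2.le]
    gcongr
    · linarith
    · exact h2.2
  have hlx : 0 ≤ Real.log x := by linarith
  calc _ ≤ (K + D + 1) * Real.log (SF q r x) * ((SF q r x) ^ (2 - 1 / q))⁻¹ := by
        refine mul_le_mul (mul_le_mul (by linarith) hls hlx (by linarith)) hpw hp4.le ?_
        exact mul_nonneg (by linarith) (hlx.trans hls)
    _ = _ := (div_eq_mul_inv _ _).symm

open Set in
theorem main_aux (q r : ℝ) (hq : 1 < q) :
    ∃ r₀ ∈ Set.Ioo (0 : ℝ) 1, ∃ C > (0 : ℝ), ∃ u : ℝ → ℝ,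
      ContDiffOn ℝ 2 u (Set.Ioo 0 r₀) ∧
      (∀ t ∈ Set.Ioo (0 : ℝ) r₀, 0 < u t) ∧
      (∀ t ∈ Set.Ioo (0 : ℝ) r₀,
        deriv (deriv u) t + deriv u t / t + (u t) ^ r * Real.exp ((u t) ^ q) = 0) ∧
      Tendsto u (nhdsWithin 0 (Set.Ioi 0)) atTop ∧
      ∀ t ∈ Set.Ioo (0 : ℝ) r₀,
        |u t - (-2 * Real.log t - ((2 * q + r - 1) / q) * Real.log (-2 * Real.log t)
            + Real.log (4 * (q - 1) / q ^ 2)) ^ (1 / q)|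
          ≤ C * Real.log (-Real.log t) / (-Real.log t) ^ (2 - 1 / q) := by
  have hq0 : 0 < q := by linarith
  obtain ⟨X, hX, K, hK, W, W1, hW⟩ := W_exists q r hq
  obtain ⟨C, hC, hest⟩ := est q r hq K hK
  obtain ⟨X1, hX1⟩ := eventually_atTop.1 ((hest.and (SF_size q r)).and (eventually_gt_atTop X))
  have hXX : ∀ x ≥ X1, X < x := fun x hx => (hX1 x hx).2
  have hSx : ∀ x ≥ X1, x ≤ SF q r x := fun x hx => (hX1 x hx).1.2.1
  have hx1 : ∀ x ≥ X1, 1 < x := fun x hx => lt_of_le_of_lt hX (hXX x hx)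
  have hSc : ContinuousOn (SF q r) (Ici X1) := fun x hx =>
    (SF_deriv q r x (by linarith [hx1 x hx])).continuousAt.continuousWithinAt
  have hmono : StrictMonoOn (SF q r) (Ici X1) := by
    refine strictMonoOn_of_deriv_pos (convex_Ici _) hSc ?_
    intro x hx
    rw [interior_Ici] at hx
    have hx' : X1 ≤ x := le_of_lt hx
    rw [(SF_deriv q r x (by linarith [hx1 x hx'])).deriv]
    exact (hW x (hXX x hx')).1
  have hS1 : 1 < SF q r X1 := (hx1 X1 le_rfl).trans_le (hSx X1 le_rfl)
  let r₀ := Real.exp (-SF q r X1)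
  have hr1 : r₀ < 1 := by simp only [r₀]; rw [Real.exp_lt_one_iff]; linarith
  have hlogt : ∀ t ∈ Ioo (0:ℝ) r₀, SF q r X1 < -Real.log t := by
    intro t ht
    have := (Real.log_lt_iff_lt_exp ht.1).2 ht.2
    linarith
  have hex : ∀ t : ℝ, ∃ x, t ∈ Ioo (0:ℝ) r₀ → X1 < x ∧ SF q r x = -Real.log t := by
    intro t
    by_cases ht : t ∈ Ioo (0:ℝ) r₀
    · have h1 := hlogt t ht
      obtain ⟨Y, hY⟩ : ∃ Y, Y = max X1 (-Real.log t) := ⟨_, rfl⟩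
      have hY1 : X1 ≤ Y := by rw [hY]; exact le_max_left _ _
      have hY2 : -Real.log t ≤ SF q r Y :=
        (by rw [hY]; exact le_max_right _ _ : -Real.log t ≤ Y).trans (hSx Y hY1)
      obtain ⟨x, hx, hx'⟩ := intermediate_value_Icc hY1 (hSc.mono Icc_subset_Ici_self) ⟨h1.le, hY2⟩
      refine ⟨x, fun _ => ⟨lt_of_le_of_ne hx.1 ?_, hx'⟩⟩
      rintro rfl
      linarith
    · exact ⟨0, fun h => absurd h ht⟩
  choose g hg using hex
  have hnhds : ∀ t ∈ Ioo (0:ℝ) r₀, ∀ᶠ t' in nhds t, t' ∈ Ioo (0:ℝ) r₀ := fun t ht =>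
    isOpen_Ioo.mem_nhds ht
  have hlt_iff : ∀ t ∈ Ioo (0:ℝ) r₀, ∀ c ≥ X1, SF q r c < -Real.log t → c < g t := by
    intro t ht c hc h
    rw [← (hg t ht).2] at h
    exact (hmono.lt_iff_lt hc (hg t ht).1.le).1 h
  have hgt_iff : ∀ t ∈ Ioo (0:ℝ) r₀, ∀ c ≥ X1, -Real.log t < SF q r c → g t < c := by
    intro t ht c hc h
    rw [← (hg t ht).2] at h
    exact (hmono.lt_iff_lt (hg t ht).1.le hc).1 h
  have hgcont : ∀ t ∈ Ioo (0:ℝ) r₀, ContinuousAt g t := by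
    intro t ht
    have hlc : ContinuousAt (fun t => -Real.log t) t := (Real.continuousAt_log ht.1.ne').neg
    refine tendsto_order.2 ⟨fun c hc => ?_, fun c hc => ?_⟩
    · by_cases hcX : c ≤ X1
      · filter_upwards [hnhds t ht] with t' ht'
        exact hcX.trans_lt (hg t' ht').1
      · push Not at hcX
        have h1 : SF q r c < -Real.log t := by
          rw [← (hg t ht).2]; exact hmono hcX.le (hg t ht).1.le hc
        filter_upwards [hnhds t ht, hlc.eventually (lt_mem_nhds h1)] with t' ht' h2
        exact hlt_iff t' ht' c hcX.le h2
    · have hcX : X1 < c := (hg t ht).1.trans hc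
      have h1 : -Real.log t < SF q r c := by
        rw [← (hg t ht).2]; exact hmono (hg t ht).1.le hcX.le hc
      filter_upwards [hnhds t ht, hlc.eventually (gt_mem_nhds h1)] with t' ht' h2
      exact hgt_iff t' ht' c hcX.le h2
  have hPpos : ∀ t ∈ Ioo (0:ℝ) r₀, 0 < PF q r (g t) := fun t ht =>
    (hW _ (hXX _ (hg t ht).1.le)).1
  have hg0 : ∀ t ∈ Ioo (0:ℝ) r₀, 0 < g t := fun t ht => by linarith [hx1 _ (hg t ht).1.le]
  have hgd : ∀ t ∈ Ioo (0:ℝ) r₀, HasDerivAt g (-(1 / (t * PF q r (g t)))) t := by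
    intro t ht
    have hT : HasDerivAt (fun x => Real.exp (-SF q r x))
        (Real.exp (-SF q r (g t)) * (-PF q r (g t))) (g t) :=
      (SF_deriv q r (g t) (hg0 t ht)).neg.exp
    have het : ∀ t ∈ Ioo (0:ℝ) r₀, Real.exp (-SF q r (g t)) = t := by
      intro t ht
      rw [(hg t ht).2, neg_neg, Real.exp_log ht.1]
    rw [het t ht] at hT
    have hp := hPpos t ht
    have ht0 := ht.1
    have := hT.of_local_left_inverse (hgcont t ht) (mul_ne_zero ht.1.ne' (by linarith))
      (by filter_upwards [hnhds t ht] with t' ht'; exact het t' ht')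
    refine this.congr_deriv ?_
    field_simp
  let u : ℝ → ℝ := fun t => W (g t)
  let u1 : ℝ → ℝ := fun t => -(W1 (g t) / (t * PF q r (g t)))
  have hu : ∀ t ∈ Ioo (0:ℝ) r₀, HasDerivAt u (u1 t) t := by
    intro t ht
    refine (((hW _ (hXX _ (hg t ht).1.le)).2.2.1).comp t (hgd t ht)).congr_deriv ?_
    simp only [u1]
    ring
  have hu1 : ∀ t ∈ Ioo (0:ℝ) r₀,
      HasDerivAt u1 (-(u1 t / t) - (u t) ^ r * Real.exp ((u t) ^ q)) t := by
    intro t ht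
    have hp := hPpos t ht
    have ht0 := ht.1
    have d1 := ((hW _ (hXX _ (hg t ht).1.le)).2.2.2.1).comp t (hgd t ht)
    have d2 := (PF_deriv q r (g t) (hg0 t ht)).comp t (hgd t ht)
    have d3 := (d1.div ((hasDerivAt_id t).mul d2) (by
      simp only [Pi.mul_apply, id, Function.comp]; positivity)).neg
    refine d3.congr_deriv ?_
    have hexp : Real.exp (-2 * SF q r (g t)) = t ^ 2 := by
      rw [(hg t ht).2, show -2 * -Real.log t = Real.log t + Real.log t by ring, Real.exp_add,
        Real.exp_log ht0]; ring
    rw [hexp]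
    simp only [Pi.mul_apply, id, Function.comp, u1, u]
    generalize W (g t) ^ r = a
    generalize Real.exp (W (g t) ^ q) = b
    field_simp
    ring
  have hdu : ∀ t ∈ Ioo (0:ℝ) r₀, deriv u t = u1 t := fun t ht => (hu t ht).deriv
  have hddu : ∀ t ∈ Ioo (0:ℝ) r₀,
      deriv (deriv u) t = -(u1 t / t) - (u t) ^ r * Real.exp ((u t) ^ q) := by
    intro t ht
    have : deriv u =ᶠ[nhds t] u1 := by
      filter_upwards [hnhds t ht] with t' ht' using hdu t' ht'
    rw [this.deriv_eq, (hu1 t ht).deriv]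
  have hupos : ∀ t ∈ Ioo (0:ℝ) r₀, 0 < u t := fun t ht =>
    (hW _ (hXX _ (hg t ht).1.le)).2.1
  refine ⟨r₀, ⟨Real.exp_pos _, hr1⟩, C, hC, u, ?_, hupos, ?_, ?_, ?_⟩
  · rw [show (2 : WithTop ℕ∞) = 1 + 1 by norm_num, contDiffOn_succ_iff_deriv_of_isOpen isOpen_Ioo]
    refine ⟨fun t ht => (hu t ht).differentiableAt.differentiableWithinAt, by simp, ?_⟩
    have hc1 : ContDiffOn ℝ 1 u1 (Ioo 0 r₀) := by
      rw [show (1 : WithTop ℕ∞) = 0 + 1 by norm_num, contDiffOn_succ_iff_deriv_of_isOpen isOpen_Ioo]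
      refine ⟨fun t ht => (hu1 t ht).differentiableAt.differentiableWithinAt, by simp, ?_⟩
      rw [contDiffOn_zero]
      have hcu : ContinuousOn u (Ioo 0 r₀) := fun t ht =>
        (hu t ht).continuousAt.continuousWithinAt
      have hcu1 : ContinuousOn u1 (Ioo 0 r₀) := fun t ht =>
        (hu1 t ht).continuousAt.continuousWithinAt
      have : ContinuousOn (fun t => -(u1 t / t) - (u t) ^ r * Real.exp ((u t) ^ q)) (Ioo 0 r₀) := by
        refine ((hcu1.div continuousOn_id (fun t ht => ht.1.ne')).neg).sub
          ((hcu.rpow_const fun t ht => Or.inl (hupos t ht).ne').mul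
          ((hcu.rpow_const fun t ht => Or.inl (hupos t ht).ne').rexp))
      exact this.congr fun t ht => (hu1 t ht).deriv
    exact hc1.congr hdu
  · intro t ht
    rw [hddu t ht, hdu t ht]; ring
  · have hgt : Tendsto g (nhdsWithin 0 (Ioi 0)) atTop := by
      rw [tendsto_atTop]
      intro N
      have hN := le_max_right N X1
      have h1 : ∀ᶠ t in nhdsWithin (0:ℝ) (Ioi 0), SF q r (max N X1) < -Real.log t := by
        have := tendsto_neg_atBot_atTop.comp Real.tendsto_log_nhdsGT_zero
        exact this.eventually (eventually_gt_atTop _)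
      filter_upwards [h1, Ioo_mem_nhdsGT (Real.exp_pos (-SF q r X1))] with t h2 ht
      exact (le_max_left N X1).trans (hlt_iff t ht _ hN h2).le
    have hWt : Tendsto W atTop atTop := by
      have h1 : Tendsto (fun x : ℝ => x ^ (2 / q) - K) atTop atTop :=
        tendsto_atTop_add_const_right _ _ (tendsto_rpow_atTop (by positivity))
      refine tendsto_atTop_mono' _ ?_ h1
      filter_upwards [eventually_gt_atTop X] with x hx
      have h2 := (abs_le.1 (hW x hx).2.2.2.2).1
      have h3 : x ^ (2 / q - 4) ≤ 1 := by
        apply Real.rpow_le_one_of_one_le_of_nonpos (by linarith)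
        have : 2 / q < 2 := by rw [div_lt_iff₀ hq0]; linarith
        linarith
      nlinarith
    exact hWt.comp hgt
  · intro t ht
    obtain ⟨h1, h2⟩ := hg t ht
    have := (hX1 (g t) h1.le).1.1 (W (g t)) (hW _ (hXX _ h1.le)).2.2.2.2
    rw [h2] at this
    rw [show -2 * Real.log t = 2 * -Real.log t by ring]
    exact this

/-- Corollary 1.1: for `q > 1`, `r ∈ ℝ`, the radial equation
`u'' + u'/t + u^r e^{u^q} = 0` has a singular solution near the origin with the
asymptotic expansion
`u(t) = (−2 log t − ((2q+r−1)/q) log(−2 log t) + log(4(q−1)/q²))^{1/q}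
  + O(log(−log t)/(−log t)^{2−1/q})`. -/
theorem stmt4 (q r : ℝ) (hq : 1 < q) :
    ∃ r₀ ∈ Set.Ioo (0 : ℝ) 1, ∃ C > (0 : ℝ), ∃ u : ℝ → ℝ,
      ContDiffOn ℝ 2 u (Set.Ioo 0 r₀) ∧
      (∀ t ∈ Set.Ioo (0 : ℝ) r₀, 0 < u t) ∧
      (∀ t ∈ Set.Ioo (0 : ℝ) r₀,
        deriv (deriv u) t + deriv u t / t + (u t) ^ r * Real.exp ((u t) ^ q) = 0) ∧
      Tendsto u (nhdsWithin 0 (Set.Ioi 0)) atTop ∧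
      ∀ t ∈ Set.Ioo (0 : ℝ) r₀,
        |u t - (-2 * Real.log t - ((2 * q + r - 1) / q) * Real.log (-2 * Real.log t)
            + Real.log (4 * (q - 1) / q ^ 2)) ^ (1 / q)|
          ≤ C * Real.log (-Real.log t) / (-Real.log t) ^ (2 - 1 / q) := by
  exact main_aux q r hq
end
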